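/- In the non-uniform case (not all p_j equal) with ρ > 1, the variance of the size S_n of a random G-trie built from n labelings of an M-ary tree satisfies Var(S_n) = ((M-1)/(M·P(2ρ-1)) - 1) · (Σ_{β ∈ S_ρ} β G_E(β) n^{β-1})^2 · n + o(n^{2ρ-1}) as n → ∞. -/

import Mathlib

open MeasureTheory ProbabilityTheory Filter Topology

/-- A word `w` over `{1,…,M}×{1,…,A}` occurs in the labeling `L` of the infinite rooted
`M`-ary tree (nodes are identified with words over `Fin M`; the value of `L` on the root `[]`
is irrelevant) if along the path determined by the first components the labels are the
second components. -/
def Occurs {M A : ℕ} (L : List (Fin M) → Fin A) (w : List (Fin M × Fin A)) : Prop :=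
  ∀ t : Fin w.length, L ((w.take (t.1 + 1)).map Prod.fst) = (w.get t).2

/-- The number of labelings among `Ls` in which the word `w` occurs. -/
noncomputable def occCount {M A n : ℕ} (Ls : Fin n → List (Fin M) → Fin A)
    (w : List (Fin M × Fin A)) : ℕ :=
  Nat.card {i : Fin n // Occurs (Ls i) w}

/-- The G-trie built from the labelings `Ls`: all words occurring in at least two of them. -/
def GTrie {M A n : ℕ} (Ls : Fin n → List (Fin M) → Fin A) : Set (List (Fin M × Fin A)) :=
  {w | 2 ≤ occCount Ls w}

/-- The size of the G-trie built from the labelings `Ls` (as a real number). -/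
noncomputable def gtrieSize {M A n : ℕ} (Ls : Fin n → List (Fin M) → Fin A) : ℝ :=
  (GTrie Ls).ncard

/-- `μL` is the distribution of a random labeling of the infinite rooted `M`-ary tree where
all labels are independent with `P(letter = j) = p j`: every finite cylinder set has the
product probability. -/
def IsLabelingMeasure {M A : ℕ} (p : Fin A → ℝ) (μL : Measure (List (Fin M) → Fin A)) : Prop :=
  ∀ (s : Finset (List (Fin M))) (f : List (Fin M) → Fin A),
    μL {L | ∀ w ∈ s, L w = f w} = ∏ w ∈ s, ENNReal.ofReal (p (f w))

/-- `P(s) = 1 - M ∑_j p_j ^ s` for complex `s`. -/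
noncomputable def Pfun (M A : ℕ) (p : Fin A → ℝ) (s : ℂ) : ℂ :=
  1 - (M : ℂ) * ∑ j, (p j : ℂ) ^ s

/-- `G_E(s) = (1-s)Γ(-s)/(M ∑_j p_j^s log p_j)`. -/
noncomputable def GE (M A : ℕ) (p : Fin A → ℝ) (s : ℂ) : ℂ :=
  (1 - s) * Complex.Gamma (-s) / ((M : ℂ) * ∑ j, (p j : ℂ) ^ s * (Real.log (p j) : ℂ))

/-- The roots of `P` with real part equal to `ρ`. -/
def rootsLine (M A : ℕ) (p : Fin A → ℝ) (ρ : ℝ) : Set ℂ :=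
  {s | Pfun M A p s = 0 ∧ s.re = ρ}

open MeasureTheory ProbabilityTheory Filter Topology

namespace GT

noncomputable def wt {α : Type*} (g : α → ℝ) (w : List α) : ℝ := (w.map g).prod

section Words
variable {α : Type*}

@[simp] lemma wt_nil (g : α → ℝ) : wt g [] = 1 := by simp [wt]
@[simp] lemma wt_cons (g : α → ℝ) (x : α) (w : List α) : wt g (x :: w) = g x * wt g w := by
  simp [wt]
@[simp] lemma wt_append (g : α → ℝ) (u w : List α) : wt g (u ++ w) = wt g u * wt g w := by
  simp [wt]

lemma wt_pos {g : α → ℝ} (hg : ∀ x, 0 < g x) (w : List α) : 0 < wt g w := by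
  induction w with
  | nil => simp
  | cons x w ih => rw [wt_cons]; exact mul_pos (hg x) ih

lemma wt_nonneg {g : α → ℝ} (hg : ∀ x, 0 ≤ g x) (w : List α) : 0 ≤ wt g w := by
  induction w with
  | nil => simp
  | cons x w ih => rw [wt_cons]; exact mul_nonneg (hg x) ih

lemma wt_le_one {g : α → ℝ} (hg : ∀ x, 0 < g x) (hg1 : ∀ x, g x < 1) (w : List α) :
    wt g w ≤ 1 := by
  induction w with
  | nil => simp
  | cons x w ih =>
    rw [wt_cons]; exact mul_le_one₀ (hg1 x).le (wt_pos hg w).le ih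

lemma wt_rpow {g : α → ℝ} (hg : ∀ x, 0 < g x) (σ : ℝ) (w : List α) :
    wt g w ^ σ = wt (fun x => g x ^ σ) w := by
  induction w with
  | nil => simp
  | cons x w ih =>
    rw [wt_cons, wt_cons, Real.mul_rpow (hg x).le (wt_pos hg w).le, ih]

def listEquiv (α : Type*) : List α ≃ Unit ⊕ (α × List α) where
  toFun l := match l with
    | [] => Sum.inl ()
    | x :: w => Sum.inr (x, w)
  invFun s := match s with
    | Sum.inl _ => []
    | Sum.inr (x, w) => x :: w
  left_inv l := by cases l <;> rfl
  right_inv s := by rcases s with _ | ⟨x, w⟩ <;> rfl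

variable [Fintype α]

lemma summable_cons {f : List α → ℝ} (hf : Summable f) (x : α) :
    Summable (fun w => f (x :: w)) :=
  hf.comp_injective (i := fun w => x :: w) (fun a b h => by simpa using h)

lemma tsum_list {f : List α → ℝ} (hf : Summable f) :
    ∑' w, f w = f [] + ∑ x, ∑' w, f (x :: w) := by
  have h1 : Summable (fun s => f ((listEquiv α).symm s)) := (listEquiv α).symm.summable_iff.2 hf
  rw [← (listEquiv α).symm.tsum_eq f]
  have h2 := h1
  rw [Summable.tsum_sum (f := fun s => f ((listEquiv α).symm s))
    (h1.comp_injective Sum.inl_injective) (h1.comp_injective Sum.inr_injective)]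
  have h3 : Summable (fun c : α × List α => f ((listEquiv α).symm (Sum.inr c))) :=
    h1.comp_injective Sum.inr_injective
  rw [h3.tsum_prod' (fun x => summable_cons hf x), tsum_fintype, tsum_fintype]
  simp [listEquiv]

lemma summable_wt {g : α → ℝ} (hg : ∀ x, 0 ≤ g x) (h1 : ∑ x, g x < 1) :
    Summable (wt g) := by
  have key : ∀ n : ℕ, ∑ f : Fin n → α, wt g (List.ofFn f) = (∑ x, g x) ^ n := by
    intro n
    have := Finset.sum_pow' (Finset.univ : Finset α) g n
    rw [this]
    simp [wt, List.prod_ofFn, List.map_ofFn]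
  have h : Summable (fun s : Σ n, Fin n → α => wt g (List.ofFn s.2)) := by
    rw [summable_sigma_of_nonneg (fun s => wt_nonneg hg _)]
    refine ⟨fun n => Summable.of_finite, ?_⟩
    simp only [tsum_fintype, key]
    exact summable_geometric_of_lt_one (Finset.sum_nonneg fun x _ => hg x) h1
  rw [← (List.equivSigmaTuple (α := α)).symm.summable_iff]
  exact h

lemma tsum_wt {g : α → ℝ} (hg : ∀ x, 0 ≤ g x) (h1 : ∑ x, g x < 1) :
    ∑' w, wt g w = (1 - ∑ x, g x)⁻¹ := by
  have h := tsum_list (summable_wt hg h1)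
  simp only [wt_nil, wt_cons, tsum_mul_left, ← Finset.sum_mul] at h
  have : (1 - ∑ x, g x) ≠ 0 := by linarith
  field_simp
  linarith

end Words
end GT

open MeasureTheory ProbabilityTheory Filter Topology

namespace GT

structure Good {α : Type*} [Fintype α] (g : α → ℝ) (ρ : ℝ) : Prop where
  pos : ∀ x, 0 < g x
  lt1 : ∀ x, g x < 1
  sum : ∑ x, g x ^ ρ = 1
  one_lt : 1 < ρ
  lt_two : ρ < 2

noncomputable def Lf {α : Type*} (g : α → ℝ) (x : ℝ) : ℝ :=
  ∑' w, wt g w ^ 2 * Real.exp (-(x * wt g w))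

section L
variable {α : Type*} [Fintype α] {g : α → ℝ} {ρ : ℝ}

lemma Good.nonempty (h : Good g ρ) : Nonempty α := by
  by_contra hne
  rw [not_nonempty_iff] at hne
  have := h.sum
  simp at this

lemma Good.sum_lt (h : Good g ρ) {σ : ℝ} (hσ : ρ < σ) : ∑ x, g x ^ σ < 1 := by
  have := h.nonempty
  rw [← h.sum]
  exact Finset.sum_lt_sum_of_nonempty Finset.univ_nonempty
    (fun x _ => Real.rpow_lt_rpow_of_exponent_gt (h.pos x) (h.lt1 x) hσ)

lemma Good.sum_gt (h : Good g ρ) {σ : ℝ} (hσ : σ < ρ) : 1 < ∑ x, g x ^ σ := by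
  have := h.nonempty
  rw [← h.sum]
  exact Finset.sum_lt_sum_of_nonempty Finset.univ_nonempty
    (fun x _ => Real.rpow_lt_rpow_of_exponent_gt (h.pos x) (h.lt1 x) hσ)

lemma Good.summable_rpow (h : Good g ρ) {σ : ℝ} (hσ : ρ < σ) :
    Summable (fun w => wt g w ^ σ) := by
  simp only [wt_rpow h.pos]
  exact summable_wt (fun x => (Real.rpow_pos_of_pos (h.pos x) _).le) (h.sum_lt hσ)

lemma Good.tsum_rpow (h : Good g ρ) {σ : ℝ} (hσ : ρ < σ) :
    ∑' w, wt g w ^ σ = (1 - ∑ x, g x ^ σ)⁻¹ := by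
  simp only [wt_rpow h.pos]
  exact tsum_wt (fun x => (Real.rpow_pos_of_pos (h.pos x) _).le) (h.sum_lt hσ)

lemma Good.summable_sq (h : Good g ρ) : Summable (fun w => wt g w ^ 2) := by
  have := h.summable_rpow h.lt_two
  simpa using this

lemma Good.summable_L (h : Good g ρ) {x : ℝ} (hx : 0 ≤ x) :
    Summable (fun w => wt g w ^ 2 * Real.exp (-(x * wt g w))) := by
  refine Summable.of_nonneg_of_le (fun w => by positivity) (fun w => ?_) h.summable_sq
  have := wt_pos h.pos w
  have h1 : Real.exp (-(x * wt g w)) ≤ 1 := by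
    rw [Real.exp_le_one_iff]; nlinarith
  nlinarith [sq_nonneg (wt g w)]

lemma Lf_nonneg (x : ℝ) : 0 ≤ Lf g x := tsum_nonneg fun w => by positivity

lemma Good.L_anti (h : Good g ρ) {x y : ℝ} (hx : 0 ≤ x) (hxy : x ≤ y) : Lf g y ≤ Lf g x := by
  refine Summable.tsum_le_tsum (fun w => ?_) (h.summable_L (hx.trans hxy)) (h.summable_L hx)
  have := wt_pos h.pos w
  gcongr

lemma Good.L_rec (h : Good g ρ) {x : ℝ} (hx : 0 ≤ x) :
    Lf g x = Real.exp (-x) + ∑ a, g a ^ 2 * Lf g (g a * x) := by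
  unfold Lf
  rw [tsum_list (h.summable_L hx)]
  simp only [wt_nil, wt_cons, mul_one, one_pow, one_mul, ← tsum_mul_left]
  congr 1
  refine Finset.sum_congr rfl fun a _ => tsum_congr fun w => ?_
  rw [mul_pow]
  ring_nf

lemma exp_poly_bound {x σ : ℝ} (hx : 0 < x) (h1 : 1 ≤ σ) (h2 : σ ≤ 2) :
    Real.exp (-x) ≤ 2 * x ^ (-σ) := by
  rw [Real.exp_neg, Real.rpow_neg hx.le]
  have hq := Real.quadratic_le_exp_of_nonneg hx.le
  have hp : 0 < x ^ σ := Real.rpow_pos_of_pos hx _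
  have : x ^ σ ≤ 2 * Real.exp x := by
    rcases le_total x 1 with hx1 | hx1
    · have := Real.rpow_le_one hx.le hx1 (by linarith : 0 ≤ σ)
      nlinarith
    · have := Real.rpow_le_rpow_of_exponent_le hx1 h2
      rw [Real.rpow_two] at this
      nlinarith
  rw [← div_eq_mul_inv, inv_eq_one_div, div_le_div_iff₀ (Real.exp_pos _) hp]
  linarith

lemma Good.L_bound (h : Good g ρ) : ∃ C, 0 < C ∧ ∀ x, 0 < x → Lf g x ≤ C * x ^ (ρ - 2) := by
  have := h.nonempty
  obtain ⟨a0, ha0⟩ := Finite.exists_min g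
  obtain ⟨a1, ha1⟩ := Finite.exists_max g
  set K := Lf g 0
  have hK : 0 ≤ K := Lf_nonneg 0
  set R := ∑ x, g x ^ (ρ - 1)
  have hR : 1 < R := h.sum_gt (by linarith)
  set c := 2 / (R - 1) with hc
  have hcR : c * (R - 1) = 2 := by rw [hc]; field_simp; rw [div_self]; linarith
  have hc0 : 0 < c := div_pos two_pos (by linarith)
  set C := K + c * g a0 ^ (ρ - 3) with hC
  have hg0 : 0 < g a0 := h.pos a0
  have hC0 : 0 < C := by positivity
  have hrho := h.lt_two
  have hrho1 := h.one_lt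
  have main : ∀ n : ℕ, ∀ x, g a0 ≤ x → x ≤ ((g a1)⁻¹) ^ n →
      Lf g x ≤ C * x ^ (ρ - 2) - c * x ^ (ρ - 3) := by
    have base : ∀ x, g a0 ≤ x → x ≤ 1 → Lf g x ≤ C * x ^ (ρ - 2) - c * x ^ (ρ - 3) := by
      intro x hx hx1
      have hxp : 0 < x := hg0.trans_le hx
      have e1 : Lf g x ≤ K := h.L_anti le_rfl hxp.le
      have e2 : 1 ≤ x ^ (ρ - 2) :=
        Real.one_le_rpow_of_pos_of_le_one_of_nonpos hxp hx1 (by linarith)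
      have e3 : x ^ (ρ - 3) ≤ g a0 ^ (ρ - 3) :=
        Real.rpow_le_rpow_of_nonpos hg0 hx (by linarith)
      have e4 := mul_le_mul_of_nonneg_left e3 hc0.le
      have e5 := mul_le_mul_of_nonneg_left e2 hC0.le
      linarith
    intro n
    induction n with
    | zero => intro x hx hx1; exact base x hx (by simpa using hx1)
    | succ n ih =>
      intro x hx hxn
      rcases le_total x 1 with hx1 | hx1
      · exact base x hx hx1
      have hxp : 0 < x := hg0.trans_le hx
      rw [h.L_rec hxp.le]
      have e1 : ∀ a, g a ^ 2 * Lf g (g a * x) ≤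
          C * x ^ (ρ - 2) * g a ^ ρ - c * x ^ (ρ - 3) * g a ^ (ρ - 1) := by
        intro a
        have hga := h.pos a
        have i1 : g a0 ≤ g a * x := (ha0 a).trans (le_mul_of_one_le_right hga.le hx1)
        have i2 : g a * x ≤ ((g a1)⁻¹) ^ n := by
          calc g a * x ≤ g a1 * ((g a1)⁻¹) ^ (n + 1) :=
                mul_le_mul (ha1 a) hxn hxp.le (h.pos a1).le
            _ = ((g a1)⁻¹) ^ n := by
                rw [pow_succ]; field_simp [(h.pos a1).ne']
        have i3 := mul_le_mul_of_nonneg_left (ih _ i1 i2) (sq_nonneg (g a))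
        refine i3.trans (le_of_eq ?_)
        rw [Real.mul_rpow hga.le hxp.le, Real.mul_rpow hga.le hxp.le]
        have j1 : g a ^ ρ = g a ^ 2 * g a ^ (ρ - 2) := by
          rw [← Real.rpow_two, ← Real.rpow_add hga]; congr 1; ring
        have j2 : g a ^ (ρ - 1) = g a ^ 2 * g a ^ (ρ - 3) := by
          rw [← Real.rpow_two, ← Real.rpow_add hga]; congr 1; ring
        rw [j1, j2]; ring
      have e2 := Finset.sum_le_sum (fun a (_ : a ∈ Finset.univ) => e1 a)
      rw [Finset.sum_sub_distrib, ← Finset.mul_sum, ← Finset.mul_sum, h.sum] at e2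
      have e3 := exp_poly_bound hxp (by linarith : 1 ≤ 3 - ρ) (by linarith)
      rw [neg_sub] at e3
      have e4 : c * x ^ (ρ - 3) * R = 2 * x ^ (ρ - 3) + c * x ^ (ρ - 3) := by
        rw [← hcR]; ring
      change _ ≤ C * x ^ (ρ - 2) * 1 - c * x ^ (ρ - 3) * R at e2
      linarith
  refine ⟨C, hC0, fun x hx => ?_⟩
  rcases le_total (g a0) x with hx0 | hx0
  · obtain ⟨n, hn⟩ := pow_unbounded_of_one_lt x ((one_lt_inv₀ (h.pos a1)).2 (h.lt1 a1))
    have := main n x hx0 hn.le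
    have := mul_pos hc0 (Real.rpow_pos_of_pos hx (ρ - 3))
    linarith
  · have e1 : Lf g x ≤ K := h.L_anti le_rfl hx.le
    have e2 : 1 ≤ x ^ (ρ - 2) :=
      Real.one_le_rpow_of_pos_of_le_one_of_nonpos hx (hx0.trans (h.lt1 a0).le) (by linarith)
    have e5 := mul_le_mul_of_nonneg_left e2 hC0.le
    have : 0 < c * g a0 ^ (ρ - 3) := by positivity
    linarith

lemma le_exp_half (z : ℝ) : z ≤ Real.exp (z / 2) := by
  rcases le_total z 0 with hz | hz
  · exact hz.trans (Real.exp_pos _).le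
  · have := Real.quadratic_le_exp_of_nonneg (by linarith : 0 ≤ z / 2)
    nlinarith [sq_nonneg (z - 2)]

lemma Good.L_lip (h : Good g ρ) {x y : ℝ} (hy : 0 < y) (hxy : y ≤ x) :
    Lf g y - Lf g x ≤ (x - y) / y * Lf g (y / 2) := by
  unfold Lf
  rw [← (h.summable_L hy.le).tsum_sub (h.summable_L (hy.le.trans hxy)), ← tsum_mul_left]
  refine Summable.tsum_le_tsum (fun w => ?_)
    ((h.summable_L hy.le).sub (h.summable_L (hy.le.trans hxy)))
    ((h.summable_L (by positivity)).mul_left _)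
  have hw := wt_pos h.pos w
  set q := wt g w
  have e1 : Real.exp (-(x * q)) ≥ Real.exp (-(y * q)) * (1 - (x - y) * q) := by
    have : -(x * q) = -(y * q) + (-((x - y) * q)) := by ring
    rw [this, Real.exp_add]
    have := Real.add_one_le_exp (-((x - y) * q))
    exact mul_le_mul_of_nonneg_left (by linarith) (Real.exp_pos _).le
  have e2 : y * q * Real.exp (-(y * q)) ≤ Real.exp (-(y / 2 * q)) := by
    have := le_exp_half (y * q)
    calc _ ≤ Real.exp (y * q / 2) * Real.exp (-(y * q)) := by gcongr
      _ = _ := by rw [← Real.exp_add]; ring_nf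
  have e3 : Real.exp (-(y * q)) - Real.exp (-(x * q)) ≤ (x - y) / y * Real.exp (-(y / 2 * q)) := by
    have : (x - y) / y * (y * q * Real.exp (-(y * q))) ≤ (x - y) / y * Real.exp (-(y / 2 * q)) :=
      mul_le_mul_of_nonneg_left e2 (div_nonneg (by linarith) hy.le)
    have e4 : (x - y) / y * (y * q * Real.exp (-(y * q))) = (x - y) * q * Real.exp (-(y * q)) := by
      field_simp
    linarith
  nlinarith [sq_nonneg q]

end L
end GT

open MeasureTheory ProbabilityTheory Filter Topology

namespace GT

noncomputable def kf (ρ t : ℝ) : ℝ := Real.exp ((2 - ρ) * t - Real.exp t)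

noncomputable def ph {α : Type*} (g : α → ℝ) (ρ t : ℝ) : ℝ :=
  Real.exp ((2 - ρ) * t) * Lf g (Real.exp t)

noncomputable def xi {α : Type*} (g : α → ℝ) (a : α) : ℝ := -Real.log (g a)

lemma kf_pos (ρ t : ℝ) : 0 < kf ρ t := Real.exp_pos _

lemma kf_continuous (ρ : ℝ) : Continuous (kf ρ) := by unfold kf; fun_prop

lemma kf_le1 (ρ t : ℝ) : kf ρ t ≤ Real.exp ((2 - ρ) * t) := by
  unfold kf
  exact Real.exp_le_exp.2 (by linarith [Real.exp_pos t])

lemma kf_le2 (ρ t : ℝ) : kf ρ t ≤ 2 * Real.exp (-(ρ * t)) := by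
  unfold kf
  have := exp_poly_bound (Real.exp_pos t) (by norm_num : (1:ℝ) ≤ 2) le_rfl
  rw [sub_eq_add_neg, Real.exp_add]
  calc _ ≤ Real.exp ((2 - ρ) * t) * (2 * Real.exp t ^ (-2 : ℝ)) := by gcongr
    _ = _ := by
      rw [← Real.exp_mul, mul_left_comm, ← Real.exp_add]; ring_nf

lemma barbalat {D : ℝ → ℝ} (hD : UniformContinuous D) {C : ℝ}
    (hC : ∀ T, 0 ≤ T → ∫ t in (0:ℝ)..T, D t ^ 2 ≤ C) : Tendsto D atTop (𝓝 0) := by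
  have hcont : Continuous (fun t => D t ^ 2) := hD.continuous.pow 2
  have hintg : ∀ a b, IntervalIntegrable (fun t => D t ^ 2) volume a b :=
    fun a b => hcont.intervalIntegrable a b
  have hmono : MonotoneOn (fun T => ∫ t in (0:ℝ)..T, D t ^ 2) (Set.Ici 0) := by
    intro a ha b hb hab
    have := intervalIntegral.integral_add_adjacent_intervals (hintg 0 a) (hintg a b)
    have h2 : 0 ≤ ∫ t in a..b, D t ^ 2 :=
      intervalIntegral.integral_nonneg hab (fun t _ => sq_nonneg _)
    simp only; linarith
  have hlim : ∃ l, Tendsto (fun T => ∫ t in (0:ℝ)..T, D t ^ 2) atTop (𝓝 l) := by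
    let F : ℝ → ℝ := fun T => ∫ t in (0:ℝ)..(max T 0), D t ^ 2
    have hF : Monotone F := fun a b hab =>
      hmono (le_max_right a 0) (le_max_right b 0) (max_le_max_right 0 hab)
    have hb : BddAbove (Set.range F) := ⟨C, by rintro _ ⟨T, rfl⟩; exact hC _ (le_max_right _ _)⟩
    refine ⟨_, (tendsto_atTop_ciSup hF hb).congr' ?_⟩
    filter_upwards [eventually_ge_atTop 0] with T hT
    simp [F, max_eq_left hT]
  obtain ⟨l, hl⟩ := hlim
  rw [Metric.tendsto_atTop]
  intro ε hε
  obtain ⟨δ, hδ, hu⟩ := Metric.uniformContinuous_iff.1 hD (ε / 2) (by positivity)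
  have hshift : Tendsto (fun T => ∫ t in T..(T + δ / 2), D t ^ 2) atTop (𝓝 0) := by
    have h1 := (hl.comp (tendsto_atTop_add_const_right atTop (δ / 2) tendsto_id)).sub hl
    rw [sub_self] at h1
    refine h1.congr fun T => ?_
    simp only [Function.comp, id]
    have := intervalIntegral.integral_add_adjacent_intervals (hintg 0 T) (hintg T (T + δ / 2))
    linarith
  have hpos : 0 < (ε / 2) ^ 2 * (δ / 2) := by positivity
  obtain ⟨N, hN⟩ := Metric.tendsto_atTop.1 hshift _ hpos
  refine ⟨N, fun t ht => ?_⟩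
  by_contra hcon
  push Not at hcon
  rw [Real.dist_eq, sub_zero] at hcon
  have h1 : ∫ s in t..(t + δ / 2), (ε / 2) ^ 2 ≤ ∫ s in t..(t + δ / 2), D s ^ 2 := by
    refine intervalIntegral.integral_mono_on (by linarith) (by simp) (hintg _ _) (fun s hs => ?_)
    have h2 : dist s t < δ := by
      rw [Real.dist_eq, abs_of_nonneg (by linarith [hs.1])]; linarith [hs.2]
    have h3 := hu h2
    rw [Real.dist_eq] at h3
    have h4 : ε / 2 ≤ |D s| := by
      have := abs_sub_abs_le_abs_sub (D t) (D s)
      rw [abs_sub_comm] at this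
      linarith
    rw [← sq_abs (D s)]
    gcongr
  have h2 := hN t ht
  rw [Real.dist_eq, sub_zero] at h2
  have h3 := le_abs_self (∫ s in t..(t + δ / 2), D s ^ 2)
  rw [intervalIntegral.integral_const, smul_eq_mul] at h1
  have : (t + δ / 2 - t) * (ε / 2) ^ 2 = (ε / 2) ^ 2 * (δ / 2) := by ring
  linarith

section R
variable {α : Type*} [Fintype α] {g : α → ℝ} {ρ : ℝ}

lemma Good.xi_pos (h : Good g ρ) (a : α) : 0 < xi g a := by
  unfold xi; linarith [Real.log_neg (h.pos a) (h.lt1 a)]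

lemma ph_nonneg (g : α → ℝ) (ρ t : ℝ) : 0 ≤ ph g ρ t :=
  mul_nonneg (Real.exp_pos _).le (Lf_nonneg _)

lemma Good.ph_rec (h : Good g ρ) (t : ℝ) :
    ph g ρ t = kf ρ t + ∑ a, g a ^ ρ * ph g ρ (t - xi g a) := by
  unfold ph kf
  rw [h.L_rec (Real.exp_pos t).le, mul_add, sub_eq_add_neg ((2 - ρ) * t), Real.exp_add, Finset.mul_sum]
  congr 1
  refine Finset.sum_congr rfl fun a _ => ?_
  have e1 : Real.exp (t - xi g a) = g a * Real.exp t := by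
    unfold xi; rw [sub_neg_eq_add, Real.exp_add, Real.exp_log (h.pos a), mul_comm]
  have e2 : g a ^ ρ * Real.exp ((2 - ρ) * (t - xi g a)) = Real.exp ((2 - ρ) * t) * g a ^ 2 := by
    have : g a ^ 2 = g a ^ (2:ℝ) := by simp
    rw [this, Real.rpow_def_of_pos (h.pos a), Real.rpow_def_of_pos (h.pos a), ← Real.exp_add,
      ← Real.exp_add]
    unfold xi; ring_nf
  rw [e1, ← mul_assoc, ← mul_assoc, e2]

lemma Good.ph_bdd (h : Good g ρ) : ∃ C, 0 < C ∧ ∀ t, ph g ρ t ≤ C := by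
  obtain ⟨C, hC, hb⟩ := h.L_bound
  refine ⟨C, hC, fun t => ?_⟩
  unfold ph
  calc _ ≤ Real.exp ((2 - ρ) * t) * (C * Real.exp t ^ (ρ - 2)) := by
        gcongr; exact hb _ (Real.exp_pos _)
    _ = C := by
      rw [← Real.exp_mul, mul_left_comm, ← Real.exp_add]; ring_nf; simp

lemma Good.ph_le_exp (h : Good g ρ) (t : ℝ) : ph g ρ t ≤ Lf g 0 * Real.exp ((2 - ρ) * t) := by
  unfold ph
  rw [mul_comm]
  gcongr
  exact h.L_anti le_rfl (Real.exp_pos _).le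

lemma Good.ph_tendsto_bot (h : Good g ρ) : Tendsto (ph g ρ) atBot (𝓝 0) := by
  refine squeeze_zero (ph_nonneg g ρ) h.ph_le_exp ?_
  have h1 : Tendsto (fun t : ℝ => (2 - ρ) * t) atBot atBot :=
    tendsto_id.const_mul_atBot (by linarith [h.lt_two])
  simpa using (Real.tendsto_exp_atBot.comp h1).const_mul (Lf g 0)

lemma Good.ph_mod (h : Good g ρ) :
    ∃ C, 0 < C ∧ ∀ s t, s ≤ t → |ph g ρ t - ph g ρ s| ≤ C * (Real.exp (t - s) - 1) := by
  obtain ⟨C, hC, hb⟩ := h.ph_bdd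
  have hr := h.lt_two
  have hr1 := h.one_lt
  refine ⟨C + C * 2 , by positivity, fun s t hst => ?_⟩
  have hE : 1 ≤ Real.exp (t - s) := Real.one_le_exp (by linarith)
  have a1 : 0 ≤ (Real.exp ((2 - ρ) * t) - Real.exp ((2 - ρ) * s)) * Lf g (Real.exp t) := by
    refine mul_nonneg (sub_nonneg.2 (Real.exp_le_exp.2 ?_)) (Lf_nonneg _)
    nlinarith
  have a2 : (Real.exp ((2 - ρ) * t) - Real.exp ((2 - ρ) * s)) * Lf g (Real.exp t) ≤
      C * (Real.exp (t - s) - 1) := by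
    have e1 : Real.exp ((2 - ρ) * s) =
        Real.exp ((2 - ρ) * t) * Real.exp (-((2 - ρ) * (t - s))) := by
      rw [← Real.exp_add]; ring_nf
    have e2 : (Real.exp ((2 - ρ) * t) - Real.exp ((2 - ρ) * s)) * Lf g (Real.exp t) =
        ph g ρ t * (1 - Real.exp (-((2 - ρ) * (t - s)))) := by
      unfold ph; rw [e1]; ring
    rw [e2]
    have e3 := Real.add_one_le_exp (-((2 - ρ) * (t - s)))
    have e4 := Real.add_one_le_exp (t - s)
    have e5 : 1 - Real.exp (-((2 - ρ) * (t - s))) ≤ Real.exp (t - s) - 1 := by nlinarith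
    calc _ ≤ ph g ρ t * (Real.exp (t - s) - 1) :=
          mul_le_mul_of_nonneg_left e5 (ph_nonneg g ρ t)
      _ ≤ _ := mul_le_mul_of_nonneg_right (hb t) (by linarith)
  have b1 : 0 ≤ Real.exp ((2 - ρ) * s) * (Lf g (Real.exp s) - Lf g (Real.exp t)) :=
    mul_nonneg (Real.exp_pos _).le
      (sub_nonneg.2 (h.L_anti (Real.exp_pos s).le (Real.exp_le_exp.2 hst)))
  have b2 : Real.exp ((2 - ρ) * s) * (Lf g (Real.exp s) - Lf g (Real.exp t)) ≤
      C * 2 * (Real.exp (t - s) - 1) := by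
    have e1 := h.L_lip (Real.exp_pos s) (Real.exp_le_exp.2 hst)
    have e2 : (Real.exp t - Real.exp s) / Real.exp s = Real.exp (t - s) - 1 := by
      rw [sub_div, ← Real.exp_sub, div_self (Real.exp_pos s).ne']
    rw [e2] at e1
    have e3 : Real.exp ((2 - ρ) * s) * Lf g (Real.exp s / 2) ≤ C * 2 := by
      have := hb (s - Real.log 2)
      unfold ph at this
      rw [Real.exp_sub, Real.exp_log two_pos] at this
      have e4 : Real.exp ((2 - ρ) * s) ≤ Real.exp ((2 - ρ) * (s - Real.log 2)) * 2 := by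
        nth_rewrite 4 [← Real.exp_log two_pos]
        rw [← Real.exp_add]
        apply Real.exp_le_exp.2
        have := Real.log_pos one_lt_two
        nlinarith
      calc _ ≤ (Real.exp ((2 - ρ) * (s - Real.log 2)) * 2) * Lf g (Real.exp s / 2) :=
            mul_le_mul_of_nonneg_right e4 (Lf_nonneg _)
        _ ≤ _ := by linarith
    calc _ ≤ Real.exp ((2 - ρ) * s) * ((Real.exp (t - s) - 1) * Lf g (Real.exp s / 2)) := by
          gcongr
      _ = (Real.exp ((2 - ρ) * s) * Lf g (Real.exp s / 2)) * (Real.exp (t - s) - 1) := by ring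
      _ ≤ _ := mul_le_mul_of_nonneg_right e3 (by linarith)
  have hd : ph g ρ t - ph g ρ s =
      (Real.exp ((2 - ρ) * t) - Real.exp ((2 - ρ) * s)) * Lf g (Real.exp t) -
      Real.exp ((2 - ρ) * s) * (Lf g (Real.exp s) - Lf g (Real.exp t)) := by
    unfold ph; ring
  rw [hd, abs_le]
  have : 0 ≤ C * (Real.exp (t - s) - 1) := mul_nonneg hC.le (by linarith)
  constructor <;> nlinarith

lemma Good.ph_uc (h : Good g ρ) : UniformContinuous (ph g ρ) := by
  obtain ⟨C, hC, hm⟩ := h.ph_mod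
  rw [Metric.uniformContinuous_iff]
  intro ε hε
  have hcont : Tendsto (fun u : ℝ => C * (Real.exp u - 1)) (𝓝 0) (𝓝 0) := by
    have : Continuous (fun u : ℝ => C * (Real.exp u - 1)) := by fun_prop
    simpa using this.tendsto 0
  obtain ⟨δ, hδ, hd⟩ := Metric.tendsto_nhds_nhds.1 hcont ε hε
  have main : ∀ s t, s ≤ t → dist s t < δ → dist (ph g ρ s) (ph g ρ t) < ε := by
    intro s t hst hdist
    have h1 := hm s t hst
    have h2 : dist (t - s) 0 < δ := by
      rw [Real.dist_eq, sub_zero, abs_sub_comm]; exact hdist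
    have h3 := hd h2
    rw [Real.dist_eq, sub_zero] at h3
    rw [Real.dist_eq, abs_sub_comm]
    exact h1.trans_lt ((le_abs_self _).trans_lt h3)
  refine ⟨δ, hδ, fun {s t} hst => ?_⟩
  rcases le_total s t with h1 | h1
  · exact main s t h1 hst
  · rw [dist_comm]; exact main t s h1 (by rwa [dist_comm])

lemma Good.ph_shift (h : Good g ρ) (a : α) :
    Tendsto (fun t => ph g ρ (t - xi g a) - ph g ρ t) atTop (𝓝 0) := by
  obtain ⟨C, hC, hb⟩ := h.ph_bdd
  have huc := h.ph_uc
  have hc := huc.continuous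
  have hucs : ∀ b, UniformContinuous (fun t => ph g ρ (t - xi g b)) := fun b =>
    huc.comp (uniformContinuous_id.sub uniformContinuous_const)
  have hkeq : ∀ t, kf ρ t = ph g ρ t - ∑ b, g b ^ ρ * ph g ρ (t - xi g b) := fun t => by
    linarith [h.ph_rec t]
  have hqpos : ∀ b, 0 < g b ^ ρ := fun b => Real.rpow_pos_of_pos (h.pos b) _
  have hDuc : UniformContinuous (fun t => ph g ρ (t - xi g a) - ph g ρ t + kf ρ t) := by
    have : (fun t => ph g ρ (t - xi g a) - ph g ρ t + kf ρ t) =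
        fun t => ph g ρ (t - xi g a) - ∑ b, g b ^ ρ * ph g ρ (t - xi g b) := by
      funext t; rw [hkeq]; ring
    rw [this]
    refine (hucs a).sub ?_
    have hs : ∀ s : Finset α, UniformContinuous
        (fun t => ∑ b ∈ s, g b ^ ρ * ph g ρ (t - xi g b)) := by
      classical
      intro s
      induction s using Finset.induction_on with
      | empty => simpa using uniformContinuous_const
      | insert b s hb ih =>
        simp only [Finset.sum_insert hb]
        exact ((hucs b).const_mul' _).add ih
    exact hs Finset.univ
  have hDc := hDuc.continuous
  have hkc := kf_continuous ρ
  have hintg : ∀ u v, IntervalIntegrable (fun t => ph g ρ t ^ 2) volume u v :=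
    fun u v => (hc.pow 2).intervalIntegrable u v
  have hL2 : ∀ T, 0 ≤ T → ∫ t in (0:ℝ)..T, (ph g ρ (t - xi g a) - ph g ρ t + kf ρ t) ^ 2 ≤
      (∑ b, g b ^ ρ * (xi g b * C ^ 2) + 4 * C) / g a ^ ρ := by
    intro T hT
    rw [le_div_iff₀ (hqpos a), mul_comm, ← intervalIntegral.integral_const_mul]
    have hpt : ∀ t, g a ^ ρ * (ph g ρ (t - xi g a) - ph g ρ t + kf ρ t) ^ 2 ≤
        ∑ b, g b ^ ρ * (ph g ρ (t - xi g b) ^ 2 - ph g ρ t ^ 2) + 2 * C * kf ρ t := by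
      intro t
      have e1 : g a ^ ρ * (ph g ρ (t - xi g a) - ph g ρ t + kf ρ t) ^ 2 ≤
          ∑ b, g b ^ ρ * (ph g ρ (t - xi g b) - ph g ρ t + kf ρ t) ^ 2 :=
        Finset.single_le_sum (f := fun b => g b ^ ρ * (ph g ρ (t - xi g b) - ph g ρ t + kf ρ t) ^ 2)
          (fun b _ => mul_nonneg (hqpos b).le (sq_nonneg _)) (Finset.mem_univ a)
      have e2 : ∑ b, g b ^ ρ * (ph g ρ (t - xi g b) - ph g ρ t + kf ρ t) ^ 2 =
          ∑ b, g b ^ ρ * (ph g ρ (t - xi g b) ^ 2 - ph g ρ t ^ 2)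
           + 2 * (kf ρ t - ph g ρ t) * ∑ b, g b ^ ρ * ph g ρ (t - xi g b)
           + ((kf ρ t - ph g ρ t) ^ 2 + ph g ρ t ^ 2) * ∑ b, g b ^ ρ := by
        rw [Finset.mul_sum, Finset.mul_sum, ← Finset.sum_add_distrib, ← Finset.sum_add_distrib]
        refine Finset.sum_congr rfl fun b _ => ?_
        ring
      have e3 : ∑ b, g b ^ ρ * ph g ρ (t - xi g b) = ph g ρ t - kf ρ t := by linarith [hkeq t]
      rw [e3, h.sum] at e2
      have := kf_pos ρ t
      nlinarith [hb t, sq_nonneg (kf ρ t)]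
    have hicont : ∀ b, Continuous
        (fun t => g b ^ ρ * (ph g ρ (t - xi g b) ^ 2 - ph g ρ t ^ 2)) := fun b => by fun_prop
    calc _ ≤ ∫ t in (0:ℝ)..T, (∑ b, g b ^ ρ * (ph g ρ (t - xi g b) ^ 2 - ph g ρ t ^ 2)
              + 2 * C * kf ρ t) := by
          refine intervalIntegral.integral_mono_on hT ?_ ?_ (fun t _ => hpt t)
          · exact (continuous_const.mul (hDc.pow 2)).intervalIntegrable _ _
          · refine Continuous.intervalIntegrable ?_ _ _
            fun_prop
      _ = ∑ b, (∫ t in (0:ℝ)..T, g b ^ ρ * (ph g ρ (t - xi g b) ^ 2 - ph g ρ t ^ 2)) +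
            ∫ t in (0:ℝ)..T, 2 * C * kf ρ t := by
          rw [intervalIntegral.integral_add, intervalIntegral.integral_finsetSum]
          · exact fun b _ => (hicont b).intervalIntegrable _ _
          · exact (continuous_finsetSum _ fun b _ => hicont b).intervalIntegrable _ _
          · exact (continuous_const.mul hkc).intervalIntegrable _ _
      _ ≤ _ := by
          refine add_le_add (Finset.sum_le_sum fun b _ => ?_) ?_
          · rw [intervalIntegral.integral_const_mul]
            refine mul_le_mul_of_nonneg_left ?_ (hqpos b).le
            rw [intervalIntegral.integral_sub, intervalIntegral.integral_comp_sub_right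
              (fun t => ph g ρ t ^ 2)]
            · have i1 := intervalIntegral.integral_add_adjacent_intervals
                (hintg (0 - xi g b) (T - xi g b)) (hintg (T - xi g b) T)
              have i2 := intervalIntegral.integral_add_adjacent_intervals
                (hintg (0 - xi g b) 0) (hintg 0 T)
              have hx := h.xi_pos b
              have i3 : 0 ≤ ∫ t in (T - xi g b)..T, ph g ρ t ^ 2 :=
                intervalIntegral.integral_nonneg (by linarith) (fun t _ => sq_nonneg _)
              have i4 : ∫ t in (0 - xi g b)..0, ph g ρ t ^ 2 ≤ ∫ t in (0 - xi g b)..0, C ^ 2 := by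
                refine intervalIntegral.integral_mono_on (by linarith) (hintg _ _) (by simp)
                  (fun t _ => ?_)
                have := hb t
                have := ph_nonneg g ρ t
                gcongr
                
              rw [intervalIntegral.integral_const, smul_eq_mul] at i4
              have : (0 - (0 - xi g b)) * C ^ 2 = xi g b * C ^ 2 := by ring
              linarith
            · exact Continuous.intervalIntegrable (by fun_prop) _ _
            · exact hintg _ _
          · rw [intervalIntegral.integral_const_mul]
            have : ∫ t in (0:ℝ)..T, kf ρ t ≤ ∫ t in (0:ℝ)..T, 2 * Real.exp (-t) := by
              refine intervalIntegral.integral_mono_on hT (hkc.intervalIntegrable _ _)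
                (Continuous.intervalIntegrable (by fun_prop) _ _) (fun t ht => ?_)
              refine (kf_le2 ρ t).trans ?_
              have : t ≤ ρ * t := le_mul_of_one_le_left ht.1 h.one_lt.le
              gcongr
            have h2 : ∫ t in (0:ℝ)..T, 2 * Real.exp (-t) = 2 * (1 - Real.exp (-T)) := by
              rw [intervalIntegral.integral_const_mul, intervalIntegral.integral_comp_neg
                (fun t => Real.exp t), integral_exp]
              simp
            have := Real.exp_pos (-T)
            nlinarith
  have hD0 := barbalat hDuc hL2
  have hk0 : Tendsto (kf ρ) atTop (𝓝 0) := by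
    refine squeeze_zero (fun t => (kf_pos ρ t).le) (kf_le2 ρ) ?_
    have h1 : Tendsto (fun t : ℝ => ρ * t) atTop atTop :=
      tendsto_id.const_mul_atTop (by linarith [h.one_lt])
    simpa using (Real.tendsto_exp_neg_atTop_nhds_zero.comp h1).const_mul 2
  have := hD0.sub hk0
  rw [sub_zero] at this
  exact this.congr fun t => by ring

end R
end GT

open MeasureTheory ProbabilityTheory Filter Topology

namespace GT

lemma norm_Gamma_le {s : ℂ} (hs : 0 < s.re) : ‖Complex.Gamma s‖ ≤ Real.Gamma s.re := by
  rw [Complex.Gamma_eq_integral hs, Real.Gamma_eq_integral hs, Complex.GammaIntegral]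
  refine (norm_integral_le_integral_norm _).trans (le_of_eq ?_)
  refine setIntegral_congr_fun measurableSet_Ioi fun x hx => ?_
  simp only [norm_mul]
  rw [Complex.norm_cpow_eq_rpow_re_of_pos hx]
  rw [Complex.norm_real, Real.norm_of_nonneg (Real.exp_pos _).le, Complex.sub_re, Complex.one_re]

lemma summable_Gamma_line {σ d : ℝ} (hσ : 0 < σ) (hd : 0 < d) :
    Summable (fun n : ℤ => Complex.Gamma ((σ : ℂ) + 2 * Real.pi * n / d * Complex.I)) := by
  have hb : Summable (fun n : ℤ => Real.Gamma (σ + 2) * (d / (2 * Real.pi)) ^ 2 * (1 / (n : ℝ) ^ 2)) :=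
    (Real.summable_one_div_int_pow.2 one_lt_two).mul_left _
  refine Summable.of_norm_bounded_eventually hb ?_
  have : {n : ℤ | n ≠ 0} ∈ cofinite := by
    rw [mem_cofinite]; simp
  filter_upwards [this] with n hn
  set s : ℂ := (σ : ℂ) + 2 * Real.pi * n / d * Complex.I with hs
  have hse : s = (σ : ℂ) + ((2 * Real.pi * n / d : ℝ) : ℂ) * Complex.I := by
    rw [hs]; push_cast; ring
  have hre : s.re = σ := by rw [hse]; simp
  have him : s.im = 2 * Real.pi * n / d := by rw [hse]; simp
  have him0 : s.im ≠ 0 := by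
    rw [him]
    have : (n:ℝ) ≠ 0 := by exact_mod_cast hn
    positivity
  have hs0 : s ≠ 0 := fun h => him0 (by rw [h]; simp)
  have hs1 : s + 1 ≠ 0 := fun h => him0 (by
    have := congrArg Complex.im h
    simpa using this)
  have e1 := Complex.Gamma_add_one s hs0
  have e2 := Complex.Gamma_add_one (s + 1) hs1
  rw [e1] at e2
  have e3 := norm_Gamma_le (s := s + 1 + 1) (by simp [hre]; linarith)
  rw [e2, norm_mul, norm_mul] at e3
  have hre2 : (s + 1 + 1).re = σ + 2 := by simp [hre]; ring
  rw [hre2] at e3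
  have a1 : |s.im| ≤ ‖s‖ := Complex.abs_im_le_norm s
  have a2 : |s.im| ≤ ‖s + 1‖ := by simpa using Complex.abs_im_le_norm (s + 1)
  have a3 : 0 < |s.im| := abs_pos.2 him0
  have e4 : |s.im| ^ 2 * ‖Complex.Gamma s‖ ≤ Real.Gamma (σ + 2) := by
    calc _ = |s.im| * (|s.im| * ‖Complex.Gamma s‖) := by ring
      _ ≤ ‖s + 1‖ * (‖s‖ * ‖Complex.Gamma s‖) := by gcongr
      _ ≤ _ := e3
  rw [sq_abs, him] at e4
  have hnr : (n:ℝ) ≠ 0 := by exact_mod_cast hn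
  have hp := Real.pi_pos
  have : ‖Complex.Gamma s‖ = (d / (2 * Real.pi)) ^ 2 * (1 / (n : ℝ) ^ 2) *
      ((2 * Real.pi * n / d) ^ 2 * ‖Complex.Gamma s‖) := by
    field_simp
  rw [this]
  calc _ ≤ (d / (2 * Real.pi)) ^ 2 * (1 / (n : ℝ) ^ 2) * Real.Gamma (σ + 2) := by gcongr
    _ = _ := by ring

lemma kf_bound {ρ : ℝ} (h1 : 1 < ρ) (h2 : ρ < 2) :
    ∃ C, 0 < C ∧ ∀ t, kf ρ t ≤ C * (1 + t ^ 2)⁻¹ := by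
  have hc : 0 < 2 - ρ := by linarith
  have e1 : ∀ t, kf ρ t ≤ 2 * Real.exp (-((2 - ρ) * |t|)) := by
    intro t
    rcases le_total 0 t with ht | ht
    · refine (kf_le2 ρ t).trans ?_
      rw [abs_of_nonneg ht]
      have : (2 - ρ) * t ≤ ρ * t := by nlinarith
      gcongr
    · refine (kf_le1 ρ t).trans ?_
      rw [abs_of_nonpos ht]
      have := Real.exp_pos ((2 - ρ) * t)
      have e : -((2 - ρ) * -t) = (2 - ρ) * t := by ring
      rw [e]; linarith
  refine ⟨2 + 4 / (2 - ρ) ^ 2, by positivity, fun t => ?_⟩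
  rw [← div_eq_mul_inv, le_div_iff₀ (by positivity)]
  have a1 := e1 t
  have hy : 0 ≤ (2 - ρ) * |t| := by positivity
  have a2 := Real.quadratic_le_exp_of_nonneg hy
  rw [Real.exp_neg] at a1
  have a3 : kf ρ t * Real.exp ((2 - ρ) * |t|) ≤ 2 := by
    calc _ ≤ 2 * (Real.exp ((2 - ρ) * |t|))⁻¹ * Real.exp ((2 - ρ) * |t|) := by gcongr
      _ = 2 := by rw [mul_assoc, inv_mul_cancel₀ (Real.exp_pos _).ne', mul_one]
  have hk := kf_pos ρ t
  have a4 : kf ρ t * 1 ≤ 2 := by nlinarith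
  have a5 : kf ρ t * ((2 - ρ) ^ 2 * t ^ 2 / 2) ≤ 2 := by
    have : ((2 - ρ) * |t|) ^ 2 = (2 - ρ) ^ 2 * t ^ 2 := by rw [mul_pow, sq_abs]
    rw [this] at a2
    refine le_trans (mul_le_mul_of_nonneg_left ?_ hk.le) a3
    linarith
  have a6 : kf ρ t * t ^ 2 ≤ 4 / (2 - ρ) ^ 2 := by
    rw [le_div_iff₀ (by positivity)]; linarith
  linarith

lemma kf_integrable {ρ : ℝ} (h1 : 1 < ρ) (h2 : ρ < 2) : Integrable (kf ρ) := by
  obtain ⟨C, hC, hb⟩ := kf_bound h1 h2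
  refine (integrable_inv_one_add_sq.const_mul C).mono'
    (kf_continuous ρ).aestronglyMeasurable (ae_of_all _ fun t => ?_)
  rw [Real.norm_of_nonneg (kf_pos ρ t).le]; exact hb t

open FourierTransform in
lemma kf_fourier {ρ d : ℝ} (h2 : ρ < 2) (hd : 0 < d) (n : ℤ) :
    𝓕 (fun y : ℝ => ((kf ρ (-(d * y)) : ℝ) : ℂ)) (n : ℝ) =
      (d : ℂ)⁻¹ * Complex.Gamma (((2 - ρ : ℝ) : ℂ) + 2 * Real.pi * n / d * Complex.I) := by
  set s : ℂ := ((d * (2 - ρ) : ℝ) : ℂ) + ((2 * Real.pi * n : ℝ) : ℂ) * Complex.I with hs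
  have hre : s.re = d * (2 - ρ) := by simp [hs]
  have him : s.im = 2 * Real.pi * n := by simp [hs]
  have e1 := mellin_comp_rpow (fun x : ℝ => ((Real.exp (-x) : ℝ) : ℂ)) s d
  rw [mellin_eq_fourier] at e1
  have hn : s.im / (2 * Real.pi) = n := by rw [him]; field_simp
  have hsd : s / d = ((2 - ρ : ℝ) : ℂ) + 2 * Real.pi * n / d * Complex.I := by
    have : (d:ℂ) ≠ 0 := by exact_mod_cast hd.ne'
    rw [hs]; push_cast; field_simp
  rw [hn, ← Complex.GammaIntegral_eq_mellin, ← Complex.Gamma_eq_integral, hsd, abs_of_pos hd] at e1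
  · rw [show (d:ℂ)⁻¹ * Complex.Gamma (((2 - ρ : ℝ) : ℂ) + 2 * Real.pi * n / d * Complex.I) =
      d⁻¹ • Complex.Gamma (((2 - ρ : ℝ) : ℂ) + 2 * Real.pi * n / d * Complex.I) by simp]
    rw [← e1]
    refine congrArg (fun f : ℝ → ℂ => FourierTransform.fourier f (n : ℝ)) ?_
    funext y
    rw [hre, ← Real.exp_mul, Complex.real_smul, ← Complex.ofReal_mul, ← Real.exp_add]
    unfold kf
    ring_nf
  · rw [hsd]
    have : ((2 - ρ : ℝ) : ℂ) + 2 * Real.pi * n / d * Complex.I =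
      ((2 - ρ : ℝ) : ℂ) + ((2 * Real.pi * n / d : ℝ) : ℂ) * Complex.I := by push_cast; ring
    rw [this]
    simp; linarith

lemma kf_integral {ρ : ℝ} (h2 : ρ < 2) :
    ∫ t, kf ρ t = Real.Gamma (2 - ρ) := by
  have h := kf_fourier h2 one_pos 0
  rw [Real.fourier_real_eq_integral_exp_smul] at h
  simp only [one_mul, Int.cast_zero, mul_zero, Complex.ofReal_zero, zero_mul, Complex.exp_zero,
    one_smul, Complex.ofReal_one, inv_one, zero_div, add_zero, Complex.Gamma_ofReal] at h
  rw [integral_complex_ofReal] at h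
  have h' := Complex.ofReal_injective h
  rw [← h', integral_neg_eq_self (kf ρ)]

lemma kf_poisson {ρ d : ℝ} (h1 : 1 < ρ) (h2 : ρ < 2) (hd : 0 < d) (T : ℝ) :
    ((∑' n : ℤ, kf ρ (T - n * d) : ℝ) : ℂ) = (d : ℂ)⁻¹ * ∑' n : ℤ,
      Complex.Gamma (((2 - ρ : ℝ) : ℂ) + 2 * Real.pi * n / d * Complex.I) *
        Complex.exp (-(2 * Real.pi * n * T / d * Complex.I)) := by
  have hsum := summable_Gamma_line (by linarith : 0 < 2 - ρ) hd
  have hFf : Summable (fun n : ℤ => FourierTransform.fourier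
      (fun y : ℝ => ((kf ρ (-(d * y)) : ℝ) : ℂ)) (n : ℝ)) := by
    simp only [kf_fourier h2 hd]
    exact hsum.mul_left _
  have hcont : Continuous (fun y : ℝ => ((kf ρ (-(d * y)) : ℝ) : ℂ)) := by
    have := kf_continuous ρ
    fun_prop
  obtain ⟨C, hC, hb⟩ := kf_bound h1 h2
  have hO : (fun y : ℝ => ((kf ρ (-(d * y)) : ℝ) : ℂ)) =O[cocompact ℝ]
      fun x : ℝ => |x| ^ (-2 : ℝ) := by
    refine Asymptotics.IsBigO.of_bound (C * (d ^ 2)⁻¹) ?_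
    have : {(0:ℝ)}ᶜ ∈ cocompact ℝ := isCompact_singleton.compl_mem_cocompact
    filter_upwards [this] with y hy
    have hy0 : y ≠ 0 := hy
    have hyp : 0 < |y| := abs_pos.2 hy0
    rw [Complex.norm_real, Real.norm_of_nonneg (kf_pos _ _).le, Real.rpow_neg hyp.le,
      Real.rpow_two, sq_abs, norm_inv, Real.norm_of_nonneg (sq_nonneg y), mul_assoc]
    refine (hb _).trans ?_
    rw [← mul_inv]
    have : 0 < d ^ 2 * y ^ 2 := by positivity
    gcongr
    nlinarith
  have hP := Real.tsum_eq_tsum_fourier_of_rpow_decay_of_summable hcont one_lt_two hO hFf (-(T / d))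
  simp only [kf_fourier h2 hd] at hP
  rw [Complex.ofReal_tsum, ← tsum_mul_left]
  convert hP using 1
  · refine tsum_congr fun n => ?_
    congr 2
    field_simp; ring
  · refine tsum_congr fun n => ?_
    rw [fourier_coe_apply, ← mul_assoc]
    refine congrArg₂ (· * ·) rfl (congrArg Complex.exp ?_)
    push_cast
    have : (d:ℂ) ≠ 0 := by exact_mod_cast hd.ne'
    field_simp

end GT

open MeasureTheory ProbabilityTheory Filter Topology

namespace GT
section R
variable {α : Type*} [Fintype α] {g : α → ℝ} {ρ : ℝ}

noncomputable def mu (g : α → ℝ) (ρ : ℝ) : ℝ := ∑ a, g a ^ ρ * xi g a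

lemma Good.mu_pos (h : Good g ρ) : 0 < mu g ρ := by
  have := h.nonempty
  exact Finset.sum_pos (fun a _ => mul_pos (Real.rpow_pos_of_pos (h.pos a) _) (h.xi_pos a))
    Finset.univ_nonempty

def perGroup (g : α → ℝ) (ρ : ℝ) : AddSubgroup ℝ where
  carrier := {s | Tendsto (fun t => ph g ρ (t - s) - ph g ρ t) atTop (𝓝 0)}
  zero_mem' := by simp
  add_mem' := by
    intro s s' hs hs'
    have h1 := hs'.comp (tendsto_atTop_add_const_right atTop (-s) tendsto_id)
    have h2 := h1.add hs
    rw [add_zero] at h2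
    refine h2.congr fun t => ?_
    simp only [Function.comp, id]
    have : t + -s - s' = t - (s + s') := by ring
    rw [this]; rw [← sub_eq_add_neg t s]; ring
  neg_mem' := by
    intro s hs
    have h1 := (hs.comp (tendsto_atTop_add_const_right atTop s tendsto_id)).neg
    rw [neg_zero] at h1
    refine h1.congr fun t => ?_
    simp

lemma Good.perGroup_closed (h : Good g ρ) {s : ℝ}
    (hs : s ∈ closure (perGroup g ρ : Set ℝ)) : s ∈ perGroup g ρ := by
  change Tendsto (fun t => ph g ρ (t - s) - ph g ρ t) atTop (𝓝 0)
  rw [Metric.tendsto_atTop]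
  intro ε hε
  obtain ⟨δ, hδ, hu⟩ := Metric.uniformContinuous_iff.1 h.ph_uc (ε / 2) (by positivity)
  obtain ⟨s', hs', hd⟩ := Metric.mem_closure_iff.1 hs δ hδ
  obtain ⟨N, hN⟩ := Metric.tendsto_atTop.1 (show Tendsto (fun t => ph g ρ (t - s') - ph g ρ t)
    atTop (𝓝 0) from hs') (ε / 2) (by positivity)
  refine ⟨N, fun t ht => ?_⟩
  have e1 := hN t ht
  have e2 : dist (t - s) (t - s') < δ := by rw [dist_sub_left]; exact hd
  have e3 := hu e2
  rw [Real.dist_eq] at *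
  rw [sub_zero] at *
  calc |ph g ρ (t - s) - ph g ρ t| =
      |(ph g ρ (t - s) - ph g ρ (t - s')) + (ph g ρ (t - s') - ph g ρ t)| := by ring_nf
    _ ≤ _ := abs_add_le _ _
    _ < ε := by linarith

lemma Good.closure_le (h : Good g ρ) : AddSubgroup.closure (Set.range (xi g)) ≤ perGroup g ρ := by
  rw [AddSubgroup.closure_le]
  rintro _ ⟨a, rfl⟩
  exact h.ph_shift a

lemma Good.dense_case (h : Good g ρ)
    (hd : Dense (AddSubgroup.closure (Set.range (xi g)) : Set ℝ)) :
    Tendsto (ph g ρ) atTop (𝓝 (Real.Gamma (2 - ρ) / mu g ρ)) := by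
  obtain ⟨C, hC, hb⟩ := h.ph_bdd
  have hc := h.ph_uc.continuous
  have hkc := kf_continuous ρ
  have hper : ∀ s, Tendsto (fun t => ph g ρ (t - s) - ph g ρ t) atTop (𝓝 0) := fun s =>
    h.perGroup_closed (closure_mono h.closure_le (hd s))
  have hintg : ∀ u v, IntervalIntegrable (ph g ρ) volume u v := fun u v => hc.intervalIntegrable u v
  let H : ℝ → ℝ := fun T => ∑ a, g a ^ ρ * ∫ s in (0:ℝ)..(xi g a), ph g ρ (T - s)
  have hH1 : Tendsto (fun T => H T - ph g ρ T * mu g ρ) atTop (𝓝 0) := by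
    have e : ∀ T, H T - ph g ρ T * mu g ρ =
        ∑ a, g a ^ ρ * ∫ s in (0:ℝ)..(xi g a), (ph g ρ (T - s) - ph g ρ T) := by
      intro T
      simp only [H, mu]
      rw [Finset.mul_sum, ← Finset.sum_sub_distrib]
      refine Finset.sum_congr rfl fun a _ => ?_
      rw [intervalIntegral.integral_sub (Continuous.intervalIntegrable (by fun_prop) _ _) (by simp),
        intervalIntegral.integral_const, smul_eq_mul]
      ring
    simp only [e]
    rw [show 𝓝 (0:ℝ) = 𝓝 (∑ a, g a ^ ρ * ∫ s in (0:ℝ)..(xi g a), (0:ℝ)) by simp]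
    refine tendsto_finsetSum _ fun a _ => Tendsto.const_mul _ ?_
    refine intervalIntegral.tendsto_integral_filter_of_dominated_convergence (fun _ => C + C)
      (Eventually.of_forall fun T => ?_) (Eventually.of_forall fun T => ?_)
      ?_ ?_
    · exact (Continuous.aestronglyMeasurable (by fun_prop))
    · refine ae_of_all _ fun s _ => ?_
      have := hb (T - s); have := hb T
      have := ph_nonneg g ρ (T - s); have := ph_nonneg g ρ T
      rw [Real.norm_eq_abs, abs_le]; constructor <;> linarith
    · exact Continuous.intervalIntegrable (by fun_prop) _ _
    · exact ae_of_all _ fun s _ => hper s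
  have hH2 : Tendsto (fun T => H (-T)) atTop (𝓝 0) := by
    rw [show (0:ℝ) = ∑ a, g a ^ ρ * ∫ s in (0:ℝ)..(xi g a), (0:ℝ) by simp]
    refine tendsto_finsetSum _ fun a _ => Tendsto.const_mul _ ?_
    refine intervalIntegral.tendsto_integral_filter_of_dominated_convergence (fun _ => C)
      (Eventually.of_forall fun T => ?_) (Eventually.of_forall fun T => ?_) (by simp) ?_
    · exact (Continuous.aestronglyMeasurable (by fun_prop))
    · refine ae_of_all _ fun s _ => ?_
      rw [Real.norm_of_nonneg (ph_nonneg _ _ _)]; exact hb _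
    · refine ae_of_all _ fun s _ => ?_
      refine h.ph_tendsto_bot.comp ?_
      simp only [sub_eq_add_neg]
      exact tendsto_atBot_add_const_right _ _ tendsto_neg_atTop_atBot
  have hcons : ∀ T, H T - H (-T) = ∫ t in (-T)..T, kf ρ t := by
    intro T
    have e1 : ∀ t, kf ρ t = ∑ a, g a ^ ρ * (ph g ρ t - ph g ρ (t - xi g a)) := by
      intro t
      simp only [mul_sub]
      rw [Finset.sum_sub_distrib, ← Finset.sum_mul, h.sum]
      linarith [h.ph_rec t]
    simp only [e1, H]
    rw [intervalIntegral.integral_finsetSum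
      (fun a _ => Continuous.intervalIntegrable (by fun_prop) _ _), ← Finset.sum_sub_distrib]
    refine Finset.sum_congr rfl fun a _ => ?_
    rw [intervalIntegral.integral_const_mul, ← mul_sub,
      intervalIntegral.integral_sub (hintg _ _) (Continuous.intervalIntegrable (by fun_prop) _ _),
      intervalIntegral.integral_comp_sub_right (ph g ρ),
      intervalIntegral.integral_comp_sub_left (ph g ρ),
      intervalIntegral.integral_comp_sub_left (ph g ρ), sub_zero, sub_zero]
    have i1 := intervalIntegral.integral_add_adjacent_intervals
      (hintg (-T - xi g a) (T - xi g a)) (hintg (T - xi g a) T)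
    have i2 := intervalIntegral.integral_add_adjacent_intervals
      (hintg (-T - xi g a) (-T)) (hintg (-T) T)
    congr 1
    linarith
  have hk := intervalIntegral_tendsto_integral (kf_integrable h.one_lt h.lt_two)
    tendsto_neg_atTop_atBot tendsto_id
  rw [kf_integral h.lt_two] at hk
  have hfin := ((hk.add hH2).sub hH1).div_const (mu g ρ)
  rw [add_zero, sub_zero] at hfin
  refine hfin.congr fun T => ?_
  have := hcons T
  simp only [id]
  rw [← this]
  have := h.mu_pos.ne'
  field_simp
  ring

lemma Good.lattice_case (h : Good g ρ) {d : ℝ} (hd : 0 < d) (nn : α → ℕ)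
    (hn : ∀ a, xi g a = nn a * d) (hdm : d ∈ perGroup g ρ) :
    Tendsto (fun T => ph g ρ T - d / mu g ρ * ∑' n : ℤ, kf ρ (T - n * d)) atTop (𝓝 0) := by
  obtain ⟨C, hC, hkb⟩ := kf_bound h.one_lt h.lt_two
  have hmu := h.mu_pos
  let D : ℝ → ℝ := fun T => ∑ a, g a ^ ρ * ∑ i ∈ Finset.range (nn a), ph g ρ (T - i * d)
  have hmud : mu g ρ / d = ∑ a, g a ^ ρ * nn a := by
    unfold mu
    rw [Finset.sum_div]
    refine Finset.sum_congr rfl fun a _ => ?_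
    rw [hn]; field_simp
  have hD1 : Tendsto (fun T => D T - ph g ρ T * (mu g ρ / d)) atTop (𝓝 0) := by
    have e : ∀ T, D T - ph g ρ T * (mu g ρ / d) =
        ∑ a, g a ^ ρ * ∑ i ∈ Finset.range (nn a), (ph g ρ (T - i * d) - ph g ρ T) := by
      intro T
      simp only [D]
      rw [hmud, Finset.mul_sum, ← Finset.sum_sub_distrib]
      refine Finset.sum_congr rfl fun a _ => ?_
      rw [Finset.sum_sub_distrib]
      simp
      ring
    simp only [e]
    rw [show (0:ℝ) = ∑ a, g a ^ ρ * ∑ i ∈ Finset.range (nn a), (0:ℝ) by simp]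
    refine tendsto_finsetSum _ fun a _ => Tendsto.const_mul _ (tendsto_finsetSum _ fun i _ => ?_)
    have := (perGroup g ρ).nsmul_mem hdm i
    rw [nsmul_eq_mul] at this
    exact this
  have hstep : ∀ T, D T - D (T - d) = kf ρ T := by
    intro T
    have e1 : kf ρ T = ∑ a, g a ^ ρ * (ph g ρ T - ph g ρ (T - xi g a)) := by
      simp only [mul_sub]
      rw [Finset.sum_sub_distrib, ← Finset.sum_mul, h.sum]
      linarith [h.ph_rec T]
    rw [e1]
    simp only [D]
    rw [← Finset.sum_sub_distrib]
    refine Finset.sum_congr rfl fun a _ => ?_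
    rw [← mul_sub, ← Finset.sum_sub_distrib]
    congr 1
    have := Finset.sum_range_sub' (fun i : ℕ => ph g ρ (T - i * d)) (nn a)
    rw [hn]
    simp only [Nat.cast_zero, zero_mul, sub_zero] at this
    rw [← this]
    refine Finset.sum_congr rfl fun i _ => ?_
    push_cast
    ring_nf
  have hsumZ : ∀ T, Summable (fun n : ℤ => kf ρ (T - n * d)) := by
    intro T
    have hs : Summable (fun n : ℤ => C * (1 + (T - n * d) ^ 2)⁻¹) := by
      refine Summable.mul_left _ ?_
      refine summable_of_isBigO (Real.summable_abs_int_rpow (b := 2) one_lt_two) ?_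
      have hO : (fun y : ℝ => (1 + (T - y * d) ^ 2)⁻¹) =O[cocompact ℝ] fun y => |y| ^ (-2 : ℝ) := by
        refine Asymptotics.IsBigO.of_bound (4 / d ^ 2) ?_
        have : (Set.Icc (-(2 * |T| / d + 1)) (2 * |T| / d + 1))ᶜ ∈ cocompact ℝ :=
          isCompact_Icc.compl_mem_cocompact
        filter_upwards [this] with y hy
        have hy1 : 2 * |T| / d + 1 < |y| := by
          by_contra hcon
          push Not at hcon
          exact hy (abs_le.1 hcon)
        have hT : 0 ≤ 2 * |T| / d := by positivity
        have hyp : 0 < |y| := by linarith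
        have hT2 : 2 * |T| < |y| * d := by
          have : 2 * |T| / d < |y| := by linarith
          rwa [div_lt_iff₀ hd] at this
        rw [Real.rpow_neg hyp.le, Real.rpow_two, norm_inv, norm_inv,
          Real.norm_of_nonneg (by positivity), Real.norm_of_nonneg (by positivity),
          ← div_eq_mul_inv, div_div, inv_eq_one_div,
          div_le_div_iff₀ (by positivity) (by positivity)]
        have h3 : |y| * d / 2 ≤ |T - y * d| := by
          have := abs_sub_abs_le_abs_sub (y * d) T
          rw [abs_mul, abs_of_pos hd, abs_sub_comm] at this
          linarith
        have h4 : (|y| * d / 2) ^ 2 ≤ (T - y * d) ^ 2 := by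
          rw [← sq_abs (T - y * d)]; gcongr
        nlinarith
      exact hO.comp_tendsto Int.tendsto_coe_cofinite
    exact Summable.of_nonneg_of_le (fun n => (kf_pos _ _).le) (fun n => hkb _) hs
  have hDsum : ∀ T, ∑' n : ℕ, kf ρ (T - n * d) = D T := by
    intro T
    have hs : Summable (fun n : ℕ => kf ρ (T - n * d)) := by
      have := (hsumZ T).comp_injective (Nat.cast_injective (R := ℤ))
      exact this.congr fun n => by simp
    have e1 := hs.hasSum.tendsto_sum_nat
    have e2 : ∀ N : ℕ, ∑ n ∈ Finset.range N, kf ρ (T - n * d) = D T - D (T - N * d) := by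
      intro N
      have := Finset.sum_range_sub' (fun i : ℕ => D (T - i * d)) N
      simp only [Nat.cast_zero, zero_mul, sub_zero] at this
      rw [← this]
      refine Finset.sum_congr rfl fun n _ => ?_
      rw [← hstep]; push_cast; ring_nf
    simp only [e2] at e1
    have e3 : Tendsto (fun N : ℕ => D (T - N * d)) atTop (𝓝 0) := by
      rw [show (0:ℝ) = ∑ a, g a ^ ρ * ∑ i ∈ Finset.range (nn a), (0:ℝ) by simp]
      refine tendsto_finsetSum _ fun a _ => Tendsto.const_mul _ (tendsto_finsetSum _ fun i _ => ?_)
      refine h.ph_tendsto_bot.comp ?_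
      have : Tendsto (fun N : ℕ => (N : ℝ) * d) atTop atTop :=
        tendsto_natCast_atTop_atTop.atTop_mul_const hd
      simp only [sub_eq_add_neg]
      exact tendsto_atBot_add_const_right _ _ (tendsto_atBot_add_const_left _ _
        (tendsto_neg_atTop_atBot.comp this))
    have e4 := (tendsto_const_nhds (x := D T)).sub e3
    rw [sub_zero] at e4
    exact tendsto_nhds_unique e1 e4
  have htail : Tendsto (fun T => ∑' n : ℕ, kf ρ (T + (n + 1) * d)) atTop (𝓝 0) := by
    have hr := h.one_lt
    have hgeo : Summable (fun n : ℕ => Real.exp (-(ρ * d)) ^ n) :=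
      summable_geometric_of_lt_one (Real.exp_pos _).le
        (Real.exp_lt_one_iff.2 (by nlinarith))
    have hb : ∀ T, ∀ n : ℕ, kf ρ (T + (n + 1) * d) ≤
        2 * Real.exp (-(ρ * T)) * Real.exp (-(ρ * d)) ^ n := by
      intro T n
      refine (kf_le2 _ _).trans ?_
      rw [← Real.exp_nat_mul, mul_assoc, ← Real.exp_add]
      gcongr
      nlinarith
    have hb2 : ∀ T, ∑' n : ℕ, kf ρ (T + (n + 1) * d) ≤
        2 * Real.exp (-(ρ * T)) * ∑' n : ℕ, Real.exp (-(ρ * d)) ^ n := by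
      intro T
      rw [← tsum_mul_left]
      exact Summable.tsum_le_tsum (hb T)
        (Summable.of_nonneg_of_le (fun n => (kf_pos _ _).le) (hb T) (hgeo.mul_left _))
        (hgeo.mul_left _)
    refine squeeze_zero (fun T => tsum_nonneg fun n => (kf_pos _ _).le) hb2 ?_
    have h1 : Tendsto (fun t : ℝ => ρ * t) atTop atTop :=
      tendsto_id.const_mul_atTop (by linarith [h.one_lt])
    have h2 := ((Real.tendsto_exp_neg_atTop_nhds_zero.comp h1).const_mul 2).mul_const
      (∑' n : ℕ, Real.exp (-(ρ * d)) ^ n)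
    simpa using h2
  have hsplit : ∀ T, ∑' n : ℤ, kf ρ (T - n * d) = D T + ∑' n : ℕ, kf ρ (T + (n + 1) * d) := by
    intro T
    have hs := hsumZ T
    rw [tsum_of_nat_of_neg_add_one (f := fun n : ℤ => kf ρ (T - n * d))]
    · rw [← hDsum]
      push_cast
      congr 1
      refine tsum_congr fun n => ?_
      congr 1; ring
    · exact hs.comp_injective (i := fun n : ℕ => (n : ℤ)) Nat.cast_injective
    · exact hs.comp_injective (i := fun n : ℕ => -((n : ℤ) + 1)) (fun a b hab => by
        simp only at hab; omega)
  have hfin := ((hD1.add htail).const_mul (-(d / mu g ρ)))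
  rw [add_zero, mul_zero] at hfin
  refine hfin.congr fun T => ?_
  rw [hsplit]
  field_simp
  ring

end R
end GT

open MeasureTheory ProbabilityTheory Filter Topology

namespace GT
section R
variable {α : Type*} [Fintype α] {g : α → ℝ} {ρ : ℝ}

def rts (g : α → ℝ) (ρ : ℝ) : Set ℂ := {s | ∑ a, (g a : ℂ) ^ s = 1 ∧ s.re = ρ}

lemma Good.cpow_eq (h : Good g ρ) (a : α) (θ : ℝ) :
    (g a : ℂ) ^ ((ρ : ℂ) + θ * Complex.I) =
      ((g a ^ ρ : ℝ) : ℂ) * Complex.exp (-((θ * xi g a : ℝ) * Complex.I)) := by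
  have hpos := h.pos a
  rw [Complex.cpow_add _ _ (by exact_mod_cast hpos.ne'), Complex.ofReal_cpow hpos.le]
  congr 1
  rw [Complex.cpow_def_of_ne_zero (by exact_mod_cast hpos.ne'), ← Complex.ofReal_log hpos.le]
  congr 1
  simp only [xi]; push_cast; ring

noncomputable def expGroup (θ : ℝ) : AddSubgroup ℝ where
  carrier := {x | Complex.exp ((θ * x : ℝ) * Complex.I) = 1}
  zero_mem' := by simp
  add_mem' := by
    intro x y hx hy
    simp only [Set.mem_ofPred_eq] at *
    have : ((θ * (x + y) : ℝ) : ℂ) * Complex.I =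
      ((θ * x : ℝ) : ℂ) * Complex.I + ((θ * y : ℝ) : ℂ) * Complex.I := by push_cast; ring
    rw [this, Complex.exp_add, hx, hy, one_mul]
  neg_mem' := by
    intro x hx
    simp only [Set.mem_ofPred_eq] at *
    have : ((θ * (-x) : ℝ) : ℂ) * Complex.I = -(((θ * x : ℝ) : ℂ) * Complex.I) := by
      push_cast; ring
    rw [this, Complex.exp_neg, hx, inv_one]

lemma mem_expGroup {θ x : ℝ} : x ∈ expGroup θ ↔ Complex.exp ((θ * x : ℝ) * Complex.I) = 1 :=
  Iff.rfl

lemma Good.root_iff (h : Good g ρ) (θ : ℝ) :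
    ((ρ : ℂ) + θ * Complex.I) ∈ rts g ρ ↔ ∀ a, xi g a ∈ expGroup θ := by
  constructor
  · rintro ⟨h1, -⟩
    simp only [h.cpow_eq] at h1
    have h2 := congrArg Complex.re h1
    rw [Complex.re_sum] at h2
    have e : ∀ a, (((g a ^ ρ : ℝ) : ℂ) * Complex.exp (-((θ * xi g a : ℝ) * Complex.I))).re =
        g a ^ ρ * Real.cos (θ * xi g a) := by
      intro a
      rw [Complex.re_ofReal_mul, ← neg_mul, ← Complex.ofReal_neg, Complex.exp_ofReal_mul_I_re,
        Real.cos_neg]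
    simp only [e, Complex.one_re] at h2
    have h3 : ∑ a, g a ^ ρ * (1 - Real.cos (θ * xi g a)) = 0 := by
      simp only [mul_sub, mul_one, Finset.sum_sub_distrib, h2, h.sum, sub_self]
    rw [Finset.sum_eq_zero_iff_of_nonneg (fun a _ => mul_nonneg
      (Real.rpow_pos_of_pos (h.pos a) _).le (sub_nonneg.2 (Real.cos_le_one _)))] at h3
    intro a
    have h4 := (mul_eq_zero.1 (h3 a (Finset.mem_univ a))).resolve_left
      (Real.rpow_pos_of_pos (h.pos a) _).ne'
    have h5 : Real.cos (θ * xi g a) = 1 := by linarith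
    have h6 : Real.sin (θ * xi g a) = 0 := by
      have := Real.sin_sq_add_cos_sq (θ * xi g a)
      rw [h5] at this
      have : Real.sin (θ * xi g a) ^ 2 = 0 := by linarith
      exact pow_eq_zero_iff (two_ne_zero) |>.1 this
    rw [mem_expGroup, Complex.exp_mul_I, ← Complex.ofReal_cos, ← Complex.ofReal_sin, h5, h6]
    simp
  · intro hx
    refine ⟨?_, by simp⟩
    simp only [h.cpow_eq]
    have : ∀ a, Complex.exp (-((θ * xi g a : ℝ) * Complex.I)) = 1 := fun a => by
      rw [Complex.exp_neg, mem_expGroup.1 (hx a), inv_one]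
    simp only [this, mul_one]
    rw [← Complex.ofReal_sum, h.sum, Complex.ofReal_one]

lemma rts_eq {s : ℂ} (hs : s ∈ rts g ρ) : s = (ρ : ℂ) + s.im * Complex.I := by
  conv_lhs => rw [← Complex.re_add_im s, hs.2]

lemma Good.root_log (h : Good g ρ) {s : ℂ} (hs : s ∈ rts g ρ) :
    ∑ a, (g a : ℂ) ^ s * (Real.log (g a) : ℂ) = -(mu g ρ : ℂ) := by
  obtain ⟨θ, rfl⟩ : ∃ θ : ℝ, s = ρ + θ * Complex.I := ⟨_, rts_eq hs⟩
  have hx := (h.root_iff _).1 hs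
  simp only [h.cpow_eq]
  have : ∀ a, Complex.exp (-((θ * xi g a : ℝ) * Complex.I)) = 1 := fun a => by
    rw [Complex.exp_neg, mem_expGroup.1 (hx a), inv_one]
  simp only [this, mul_one, mu]
  simp only [xi]
  push_cast
  rw [← Finset.sum_neg_distrib]
  exact Finset.sum_congr rfl fun a _ => by ring

lemma Good.closure_le_exp (h : Good g ρ) {θ : ℝ} (hs : ((ρ : ℂ) + θ * Complex.I) ∈ rts g ρ) :
    AddSubgroup.closure (Set.range (xi g)) ≤ expGroup θ := by
  rw [AddSubgroup.closure_le]
  rintro _ ⟨a, rfl⟩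
  exact (h.root_iff θ).1 hs a

lemma Good.roots_tendsto (h : Good g ρ) :
    Tendsto (fun T : ℝ => (ph g ρ T : ℂ) - ∑' β : rts g ρ, Complex.Gamma (2 - β) / mu g ρ *
      Complex.exp (T * ((β : ℂ) - ρ))) atTop (𝓝 0) := by
  have hmu := h.mu_pos
  rcases AddSubgroup.dense_or_cyclic (AddSubgroup.closure (Set.range (xi g))) with hd | ⟨d0, hd0⟩
  · have hroot : rts g ρ = {(ρ : ℂ)} := by
      ext s
      rw [Set.mem_singleton_iff]
      constructor
      · intro hs
        obtain ⟨θ, rfl⟩ : ∃ θ : ℝ, s = ρ + θ * Complex.I := ⟨_, rts_eq hs⟩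
        have hle := h.closure_le_exp hs
        have hcl : IsClosed (expGroup θ : Set ℝ) := by
          have : Continuous fun x : ℝ => Complex.exp ((θ * x : ℝ) * Complex.I) := by fun_prop
          exact isClosed_eq this continuous_const
        have hall : ∀ x, x ∈ expGroup θ := by
          intro x
          have : x ∈ closure (AddSubgroup.closure (Set.range (xi g)) : Set ℝ) := hd x
          exact closure_minimal hle hcl this
        by_cases hθ : θ = 0
        · simp [hθ]
        · have := hall (Real.pi / θ)
          rw [mem_expGroup, mul_div_cancel₀ _ hθ, Complex.exp_pi_mul_I] at this
          norm_num at this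
      · rintro rfl
        have := (h.root_iff 0).2 (fun a => by simp [mem_expGroup])
        simpa using this
    have := h.dense_case hd
    rw [hroot, ]
    have e : ∀ T : ℝ, ∑' β : ({(ρ:ℂ)} : Set ℂ), Complex.Gamma (2 - β) / mu g ρ *
      Complex.exp (T * ((β : ℂ) - ρ)) = ((Real.Gamma (2 - ρ) / mu g ρ : ℝ) : ℂ) := by
      intro T
      rw [tsum_singleton (f := fun β : ℂ => Complex.Gamma (2 - β) / mu g ρ *
        Complex.exp (T * ((β : ℂ) - ρ)))]
      simp [← Complex.Gamma_ofReal]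
    simp only [e]
    have h2 := (Complex.continuous_ofReal.tendsto _).comp (this.sub_const (Real.Gamma (2 - ρ) / mu g ρ))
    rw [sub_self, Complex.ofReal_zero] at h2
    exact h2.congr fun T => by simp
  · obtain ⟨a0⟩ := h.nonempty
    have hz : ∀ a, ∃ k : ℤ, k • d0 = xi g a := by
      intro a
      have : xi g a ∈ AddSubgroup.closure (Set.range (xi g)) :=
        AddSubgroup.subset_closure ⟨a, rfl⟩
      rw [hd0, AddSubgroup.mem_closure_singleton] at this
      exact this
    have hd0ne : d0 ≠ 0 := by
      rintro rfl
      obtain ⟨k, hk⟩ := hz a0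
      have := h.xi_pos a0
      rw [smul_zero] at hk; linarith
    set d := |d0| with hdd
    have hdpos : 0 < d := abs_pos.2 hd0ne
    have hn : ∀ a, ∃ n : ℕ, xi g a = n * d := by
      intro a
      obtain ⟨k, hk⟩ := hz a
      refine ⟨k.natAbs, ?_⟩
      rw [← abs_of_pos (h.xi_pos a), ← hk, zsmul_eq_mul, abs_mul, Nat.cast_natAbs, Int.cast_abs]
    choose nn hnn using hn
    have hdcl : d ∈ AddSubgroup.closure (Set.range (xi g)) := by
      rw [hd0, hdd]
      rcases abs_choice d0 with e | e <;> rw [e]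
      · exact AddSubgroup.subset_closure rfl
      · exact neg_mem (AddSubgroup.subset_closure rfl)
    have hdm : d ∈ perGroup g ρ := h.closure_le hdcl
    have hlat := h.lattice_case hdpos nn hnn hdm
    have hdc : (d : ℂ) ≠ 0 := by exact_mod_cast hdpos.ne'
    have hmem : ∀ n : ℤ, ((ρ : ℂ) + ((-(2 * Real.pi * n / d) : ℝ) : ℂ) * Complex.I) ∈ rts g ρ := by
      intro n
      rw [h.root_iff]
      intro a
      rw [mem_expGroup, Complex.exp_eq_one_iff]
      refine ⟨-(n * nn a), ?_⟩
      rw [hnn]; push_cast; field_simp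
    let F : ℤ → rts g ρ := fun n => ⟨_, hmem n⟩
    have hF : Function.Bijective F := by
      constructor
      · intro m n hmn
        have := congrArg (fun z : rts g ρ => (z : ℂ).im) hmn
        simp only [F, Complex.add_im, Complex.ofReal_im, zero_add,
          Complex.im_ofReal_mul, Complex.I_im, mul_one] at this
        have h1 : (2 * Real.pi / d) * (m : ℝ) = (2 * Real.pi / d) * n := by
          have h0 : 2 * Real.pi * m / d = 2 * Real.pi * n / d := by linarith
          rw [div_mul_eq_mul_div, div_mul_eq_mul_div, h0]
        have h2 := mul_left_cancel₀ (by positivity) h1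
        exact_mod_cast h2
      · rintro ⟨s, hs⟩
        have hs' := hs
        rw [rts_eq hs] at hs'
        have := h.closure_le_exp hs' hdcl
        rw [mem_expGroup, Complex.exp_eq_one_iff] at this
        obtain ⟨k, hk⟩ := this
        refine ⟨-k, Subtype.ext ?_⟩
        simp only [F]
        rw [rts_eq hs]
        congr 2
        have h1 : ((s.im * d : ℝ) : ℂ) = ((k * (2 * Real.pi) : ℝ) : ℂ) := by
          have h2 := mul_right_cancel₀ Complex.I_ne_zero (hk.trans (mul_assoc _ _ _).symm)
          rw [h2]; push_cast; ring
        have h3 : s.im * d = k * (2 * Real.pi) := by exact_mod_cast h1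
        have h4 : s.im = -(2 * Real.pi * (-k : ℤ) / d) := by
          rw [eq_comm, ← neg_div, div_eq_iff hdpos.ne', h3]; push_cast; ring
        rw [← h4]
    have key : ∀ T : ℝ, ∑' β : rts g ρ, Complex.Gamma (2 - β) / mu g ρ *
        Complex.exp (T * ((β : ℂ) - ρ)) =
        ((d / mu g ρ * ∑' n : ℤ, kf ρ (T - n * d) : ℝ) : ℂ) := by
      intro T
      rw [← (Equiv.ofBijective F hF).tsum_eq, Complex.ofReal_mul,
        kf_poisson h.one_lt h.lt_two hdpos T, ← mul_assoc, ← tsum_mul_left]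
      refine tsum_congr fun n => ?_
      simp only [Equiv.ofBijective_apply, F]
      have e1 : (2 - ((ρ : ℂ) + ((-(2 * Real.pi * n / d) : ℝ) : ℂ) * Complex.I)) =
        (((2-ρ:ℝ):ℂ)+2*Real.pi*n/d*Complex.I) := by push_cast; ring
      have e2 : (T:ℂ) * ((ρ : ℂ) + ((-(2 * Real.pi * n / d) : ℝ) : ℂ) * Complex.I - ρ) =
        -(2*Real.pi*n*T/d*Complex.I) := by push_cast; ring
      rw [e1, e2]
      push_cast
      field_simp
    have h2 := (Complex.continuous_ofReal.tendsto _).comp hlat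
    rw [Complex.ofReal_zero] at h2
    refine h2.congr fun T => ?_
    rw [key]; simp
end R
end GT

open MeasureTheory ProbabilityTheory Filter Topology

namespace GT

noncomputable def psi (n : ℕ) (a b t : ℝ) : ℝ :=
  (1 - a - b + t) ^ n + n * (1 - a - b + t) ^ (n - 1) * (a + b - t) +
    n * (n - 1) * (1 - a - b + t) ^ (n - 2) * ((a - t) * (b - t))

noncomputable def phi (n : ℕ) (a : ℝ) : ℝ := (1 - a) ^ n + n * a * (1 - a) ^ (n - 1)

lemma psi_mul (n : ℕ) (hn : 2 ≤ n) (a b : ℝ) : psi n a b (a * b) = phi n a * phi n b := by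
  obtain ⟨k, rfl⟩ : ∃ k, n = k + 2 := ⟨n - 2, by omega⟩
  have e1 : k + 2 - 1 = k + 1 := by omega
  have e2 : k + 2 - 2 = k := by omega
  simp only [psi, phi, e1, e2]
  rw [show 1 - a - b + a * b = (1 - a) * (1 - b) by ring, mul_pow, mul_pow, mul_pow]
  push_cast
  ring

lemma psi_comm (n : ℕ) (a b t : ℝ) : psi n a b t = psi n b a t := by
  simp only [psi]
  rw [show 1 - a - b + t = 1 - b - a + t by ring]; ring

lemma psi_prefixes (n : ℕ) (a b : ℝ) : psi n a b b = phi n a := by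
  simp only [psi, phi]
  rw [show 1 - a - b + b = 1 - a by ring]; ring

lemma phi_bounds (n : ℕ) (hn : 1 ≤ n) {b : ℝ} (h0 : 0 ≤ b) (h1 : b ≤ 1) :
    0 ≤ phi n b ∧ phi n b ≤ 1 ∧ 1 - phi n b ≤ (n * b) ^ 2 := by
  obtain ⟨k, rfl⟩ : ∃ k, n = k + 1 := ⟨n - 1, by omega⟩
  have e : phi (k + 1) b = (1 - b) ^ k * (1 + k * b) := by
    simp only [phi, Nat.add_sub_cancel]; push_cast; ring
  have h2 : 0 ≤ 1 - b := by linarith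
  have hk : (0:ℝ) ≤ k := Nat.cast_nonneg k
  rw [e]
  refine ⟨by positivity, ?_, ?_⟩
  · calc (1 - b) ^ k * (1 + k * b) ≤ (1 - b) ^ k * (1 + b) ^ k := by
          gcongr
          exact one_add_mul_le_pow (by linarith) k
      _ = (1 - b ^ 2) ^ k := by rw [← mul_pow]; ring_nf
      _ ≤ 1 := pow_le_one₀ (by nlinarith) (by nlinarith)
  · have := one_add_mul_le_pow (a := -b) (by linarith) k
    have h3 : (1 + k * (-b)) * (1 + k * b) ≤ (1 - b) ^ k * (1 + k * b) := by
      gcongr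
      rwa [← sub_eq_add_neg] at this
    push_cast
    nlinarith [mul_nonneg hk h0]

lemma pow_sub_pow_bound {x y c : ℝ} (hx : 0 ≤ x) (hy : 0 ≤ y) (hxc : x ≤ c) (hyc : y ≤ c) (m : ℕ) :
    |x ^ (m + 1) - y ^ (m + 1)| ≤ (m + 1) * |x - y| * c ^ m := by
  induction m with
  | zero => simp
  | succ m ih =>
    have e : x ^ (m + 1 + 1) - y ^ (m + 1 + 1) =
      x * (x ^ (m + 1) - y ^ (m + 1)) + (x - y) * y ^ (m + 1) := by ring
    rw [e]
    refine (abs_add_le _ _).trans ?_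
    rw [abs_mul, abs_mul, abs_of_nonneg hx, abs_of_nonneg (pow_nonneg hy _)]
    have h1 : x * |x ^ (m + 1) - y ^ (m + 1)| ≤ c * ((m + 1) * |x - y| * c ^ m) := by
      have := hx.trans hxc
      gcongr
    have h2 : |x - y| * y ^ (m + 1) ≤ |x - y| * c ^ (m + 1) := by gcongr
    push_cast
    calc _ ≤ _ := add_le_add h1 h2
      _ = _ := by ring

set_option maxHeartbeats 2000000 in
lemma dpsi_bound : ∃ C : ℝ, 0 < C ∧ ∀ (k : ℕ) (N a b t : ℝ), N = k + 4 → 0 ≤ a → a ≤ 1 → 0 ≤ b →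
    b ≤ 1 → 0 ≤ t → t ≤ a → t ≤ b → 0 ≤ 1 - a - b + t →
    |N * (N - 1) * (1 - a - b + t) ^ (k + 2) * t +
      N * (N - 1) * (N - 2) * (1 - a - b + t) ^ (k + 1) * ((a - t) * (b - t)) -
      N ^ 3 * a * b * Real.exp (-(N * (a + b)))| ≤
    C * (N ^ 2 * (t + a * b) * Real.exp (-(N * (a + b) / 4))) := by
  refine ⟨69 * Real.exp 4 + 69 * Real.exp 4 + 12 * Real.exp 6, by positivity, ?_⟩
  intro k N a b t hN ha ha1 hb hb1 ht hta htb hr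
  set s := a + b with hs
  set r := 1 - a - b + t with hrd
  set E := Real.exp (-(N * s / 4)) with hE
  set K := Real.exp 4 with hK
  have hk : (0:ℝ) ≤ k := Nat.cast_nonneg k
  have hNp : 4 ≤ N := by linarith
  have hs0 : 0 ≤ s := by positivity
  have hs2 : s ≤ 2 := by linarith
  have hE0 : 0 < E := Real.exp_pos _
  have hE1 : E ≤ 1 := Real.exp_le_one_iff.2 (by have : 0 ≤ N * s := by positivity
                                                linarith)
  have hK0 : 0 < K := Real.exp_pos _
  have hz0 : 0 ≤ N * s := by positivity
  have hzE : N * s * E ≤ 4 := by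
    have h1 : N * s / 4 ≤ Real.exp (N * s / 4) := by
      have := Real.add_one_le_exp (N * s / 4); linarith
    have h2 : Real.exp (N * s / 4) * E = 1 := by rw [hE, ← Real.exp_add]; simp
    nlinarith
  have hzE2 : (N * s) ^ 2 * E ≤ 64 := by
    have h1 : N * s / 8 ≤ Real.exp (N * s / 8) := by
      have := Real.add_one_le_exp (N * s / 8); linarith
    have h2 : Real.exp (N * s / 8) ^ 2 * E = 1 := by
      rw [hE, ← Real.exp_nat_mul, ← Real.exp_add]; simp; ring
    have h3 : (N * s / 8) ^ 2 ≤ Real.exp (N * s / 8) ^ 2 := by gcongr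
    nlinarith
  have hrs : r ≤ Real.exp (-(s / 2)) := by
    have := Real.add_one_le_exp (-(s / 2))
    have : r ≤ 1 - s / 2 := by rw [hrd, hs]; linarith
    linarith
  have hpow : ∀ j : ℕ, k ≤ j → Real.exp (-(s / 2)) ^ j ≤ K * E ^ 2 := by
    intro j hj
    rw [← Real.exp_nat_mul, hE, ← Real.exp_nat_mul, hK, ← Real.exp_add]
    apply Real.exp_le_exp.2
    have : (k : ℝ) ≤ j := by exact_mod_cast hj
    push_cast
    rw [hN]
    nlinarith
  have hrpow : ∀ j : ℕ, k ≤ j → r ^ j ≤ K * E ^ 2 := fun j hj =>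
    (pow_le_pow_left₀ hr hrs j).trans (hpow j hj)
  have hEE : K * E ^ 2 ≤ K * E := by
    have : E ^ 2 ≤ E := by nlinarith
    gcongr
  have hes : |r - Real.exp (-s)| ≤ t + s ^ 2 := by
    have h1 := Real.add_one_le_exp (-s)
    have h2 : Real.exp (-s) ≤ 1 - s + s ^ 2 := by
      by_cases h : s ≤ 1
      · have := Real.abs_exp_sub_one_sub_id_le (x := -s) (by rw [abs_neg, abs_of_nonneg hs0]; exact h)
        have := (abs_le.1 this).2
        nlinarith
      · push Not at h
        have : Real.exp (-s) ≤ 1 := Real.exp_le_one_iff.2 (by linarith)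
        nlinarith
    rw [abs_le]; constructor <;> rw [hrd] <;> nlinarith
  have hD1 : |r ^ (k + 1) - Real.exp (-s) ^ (k + 1)| ≤ N * (t + s ^ 2) * (K * E ^ 2) := by
    refine (pow_sub_pow_bound hr (Real.exp_pos _).le hrs
      (Real.exp_le_exp.2 (by linarith)) k).trans ?_
    have := hpow k le_rfl
    have : (k : ℝ) + 1 ≤ N := by linarith
    gcongr
  have hE4 : Real.exp (-(N * s)) = E ^ 4 := by
    rw [hE, ← Real.exp_nat_mul]; congr 1; push_cast; ring
  have hD2 : |Real.exp (-s) ^ (k + 1) - Real.exp (-(N * s))| ≤ 3 * Real.exp 6 * s * E ^ 4 := by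
    have h1 : Real.exp (-s) ^ (k + 1) = Real.exp (3 * s) * E ^ 4 := by
      rw [← hE4, ← Real.exp_nat_mul, ← Real.exp_add]; congr 1; push_cast; rw [hN]; ring
    rw [h1, hE4]
    have h2 : 1 ≤ Real.exp (3 * s) := Real.one_le_exp (by linarith)
    have h3 : Real.exp (3 * s) - 1 ≤ 3 * s * Real.exp (3 * s) := by
      have h4 := Real.add_one_le_exp (-(3 * s))
      have h5 : Real.exp (-(3 * s)) * Real.exp (3 * s) = 1 := by rw [← Real.exp_add]; simp
      nlinarith
    have h6 : Real.exp (3 * s) ≤ Real.exp 6 := Real.exp_le_exp.2 (by linarith)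
    rw [show Real.exp (3 * s) * E ^ 4 - E ^ 4 = (Real.exp (3 * s) - 1) * E ^ 4 by ring,
      abs_of_nonneg (mul_nonneg (by linarith) (by positivity))]
    gcongr
    calc _ ≤ _ := h3
      _ ≤ 3 * s * Real.exp 6 := by gcongr
      _ = _ := by ring
  have hD : |r ^ (k + 1) - Real.exp (-(N * s))| ≤
      N * (t + s ^ 2) * (K * E ^ 2) + 3 * Real.exp 6 * s * E ^ 4 :=
    (abs_sub_le _ (Real.exp (-s) ^ (k + 1)) _).trans (add_le_add hD1 hD2)
  have hab : a * b ≤ s ^ 2 := by rw [hs]; nlinarith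
  have habn : 0 ≤ a * b := by positivity
  have htt : 0 ≤ t * s - t ^ 2 := by
    have : 0 ≤ t * (s - t) := mul_nonneg ht (by rw [hs]; linarith)
    linarith [this, (by ring : t * (s - t) = t * s - t ^ 2)]
  have e : N * (N - 1) * r ^ (k + 2) * t + N * (N - 1) * (N - 2) * r ^ (k + 1) * ((a - t) * (b - t)) -
      N ^ 3 * a * b * Real.exp (-(N * s)) =
      N * (N - 1) * r ^ (k + 2) * t - N * (N - 1) * (N - 2) * r ^ (k + 1) * (t * s - t ^ 2)
      - a * b * (3 * N ^ 2 - 2 * N) * r ^ (k + 1)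
      + N ^ 3 * (a * b) * (r ^ (k + 1) - Real.exp (-(N * s))) := by rw [hs]; ring
  rw [e]
  have b1 : |N * (N - 1) * r ^ (k + 2) * t| ≤ K * (N ^ 2 * t * E) := by
    have : 0 ≤ N - 1 := by linarith
    rw [abs_of_nonneg (by positivity)]
    calc N * (N - 1) * r ^ (k + 2) * t ≤ N * N * (K * E) * t := by
          have := (hrpow (k+2) (by omega)).trans hEE
          gcongr
          linarith
      _ = _ := by ring
  have b2 : |N * (N - 1) * (N - 2) * r ^ (k + 1) * (t * s - t ^ 2)| ≤ 4 * K * (N ^ 2 * t * E) := by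
    have : 0 ≤ N - 1 := by linarith
    have : 0 ≤ N - 2 := by linarith
    rw [abs_of_nonneg (by positivity)]
    calc N * (N - 1) * (N - 2) * r ^ (k + 1) * (t * s - t ^ 2) ≤ N * N * N * (K * E ^ 2) * (t * s) := by
          have := (hrpow (k+1) (by omega))
          gcongr
          · linarith
          · linarith
          · nlinarith
      _ = K * (N ^ 2 * t * E) * (N * s * E) := by ring
      _ ≤ K * (N ^ 2 * t * E) * 4 := by gcongr
      _ = _ := by ring
  have b3 : |a * b * (3 * N ^ 2 - 2 * N) * r ^ (k + 1)| ≤ 3 * K * (N ^ 2 * (a * b) * E) := by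
    have : 0 ≤ 3 * N ^ 2 - 2 * N := by nlinarith
    rw [abs_of_nonneg (by positivity)]
    calc a * b * (3 * N ^ 2 - 2 * N) * r ^ (k + 1) ≤ a * b * (3 * N ^ 2) * (K * E) := by
          have := (hrpow (k+1) (by omega)).trans hEE
          gcongr
          linarith
      _ = _ := by ring
  have b4 : |N ^ 3 * (a * b) * (r ^ (k + 1) - Real.exp (-(N * s)))| ≤
      64 * K * (N ^ 2 * t * E) + 64 * K * (N ^ 2 * (a * b) * E) +
        12 * Real.exp 6 * (N ^ 2 * (a * b) * E) := by
    rw [abs_mul, abs_of_nonneg (by positivity)]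
    calc _ ≤ N ^ 3 * (a * b) * (N * (t + s ^ 2) * (K * E ^ 2) + 3 * Real.exp 6 * s * E ^ 4) := by
          gcongr
      _ = K * (N ^ 4 * (a * b) * E) * t * E + K * (N ^ 2 * (a * b) * E) * ((N * s) ^ 2 * E)
          + 3 * Real.exp 6 * (N ^ 2 * (a * b) * (E * E ^ 2)) * (N * s * E) := by ring
      _ ≤ K * (N ^ 4 * s ^ 2 * E) * t * E + K * (N ^ 2 * (a * b) * E) * 64
          + 3 * Real.exp 6 * (N ^ 2 * (a * b) * (E * 1)) * 4 := by
          have : E ^ 2 ≤ 1 := pow_le_one₀ hE0.le hE1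
          gcongr
      _ = K * (N ^ 2 * t * E) * ((N * s) ^ 2 * E) + K * (N ^ 2 * (a * b) * E) * 64
          + 3 * Real.exp 6 * (N ^ 2 * (a * b) * E) * 4 := by ring
      _ ≤ K * (N ^ 2 * t * E) * 64 + K * (N ^ 2 * (a * b) * E) * 64
          + 3 * Real.exp 6 * (N ^ 2 * (a * b) * E) * 4 := by gcongr
      _ = _ := by ring
  have hA := abs_add_le (N * (N - 1) * r ^ (k + 2) * t - N * (N - 1) * (N - 2) * r ^ (k + 1) * (t * s - t ^ 2)
      - a * b * (3 * N ^ 2 - 2 * N) * r ^ (k + 1)) (N ^ 3 * (a * b) * (r ^ (k + 1) - Real.exp (-(N * s))))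
  have hB := abs_sub (N * (N - 1) * r ^ (k + 2) * t - N * (N - 1) * (N - 2) * r ^ (k + 1) * (t * s - t ^ 2))
      (a * b * (3 * N ^ 2 - 2 * N) * r ^ (k + 1))
  have hC := abs_sub (N * (N - 1) * r ^ (k + 2) * t) (N * (N - 1) * (N - 2) * r ^ (k + 1) * (t * s - t ^ 2))
  have p1 : 0 ≤ K * (N ^ 2 * t * E) := by positivity
  have p2 : 0 ≤ K * (N ^ 2 * (a * b) * E) := by positivity
  have p3 : 0 ≤ Real.exp 6 * (N ^ 2 * t * E) := by positivity
  have fin : (69 * K + 69 * K + 12 * Real.exp 6) * (N ^ 2 * (t + a * b) * E) =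
    138 * (K * (N ^ 2 * t * E)) + 138 * (K * (N ^ 2 * (a * b) * E)) +
    12 * (Real.exp 6 * (N ^ 2 * t * E)) + 12 * Real.exp 6 * (N ^ 2 * (a * b) * E) := by ring
  rw [fin]
  linarith

lemma psi_deriv (k : ℕ) (a b t : ℝ) : HasDerivAt (fun t => psi (k + 4) a b t)
    (((k + 4 : ℕ) : ℝ) * (((k + 4 : ℕ) : ℝ) - 1) * (1 - a - b + t) ^ (k + 2) * t +
      ((k + 4 : ℕ) : ℝ) * (((k + 4 : ℕ) : ℝ) - 1) * (((k + 4 : ℕ) : ℝ) - 2) *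
        (1 - a - b + t) ^ (k + 1) * ((a - t) * (b - t))) t := by
  have e1 : k + 4 - 1 = k + 3 := by omega
  have e2 : k + 4 - 2 = k + 2 := by omega
  simp only [psi, e1, e2]
  have hr : HasDerivAt (fun t => 1 - a - b + t) 1 t := by
    simpa using (hasDerivAt_id t).const_add (1 - a - b)
  have h1 := hr.pow (k + 4)
  have h2 := ((hr.pow (k + 3)).const_mul ((k + 4 : ℕ) : ℝ)).mul ((hasDerivAt_id t).const_sub (a + b))
  have h3 := ((hr.pow (k + 2)).const_mul (((k + 4 : ℕ) : ℝ) * (((k + 4 : ℕ) : ℝ) - 1))).mul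
    (((hasDerivAt_id t).const_sub a).mul ((hasDerivAt_id t).const_sub b))
  refine ((h1.add h2).add h3).congr_deriv ?_
  simp only [Pi.pow_apply, Pi.mul_apply, id, Nat.add_sub_cancel, e1, show k + 3 - 1 = k + 2 by omega,
    show k + 2 - 1 = k + 1 by omega]
  push_cast
  ring

lemma psi_cov : ∃ C : ℝ, 0 < C ∧ ∀ (n : ℕ) (a b q : ℝ), 4 ≤ n → 0 ≤ a → a ≤ 1 → 0 ≤ b →
    b ≤ 1 → 0 ≤ q → q ≤ a → q ≤ b → 0 ≤ 1 - a - b + q →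
    |psi n a b q - phi n a * phi n b - (n : ℝ) ^ 3 * (q - a * b) * (a * b) * Real.exp (-(n * (a + b)))| ≤
    C * ((n : ℝ) ^ 2 * (q ^ 2 + (a * b) ^ 2) * Real.exp (-(n * (a + b) / 4))) := by
  obtain ⟨C, hC, hb⟩ := dpsi_bound
  refine ⟨2 * C, by positivity, ?_⟩
  intro n a b q hn ha ha1 hb0 hb1 hq hqa hqb hr
  obtain ⟨k, rfl⟩ : ∃ k, n = k + 4 := ⟨n - 4, by omega⟩
  rw [← psi_mul _ (by omega)]
  set N : ℝ := ((k + 4 : ℕ) : ℝ) with hN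
  set c := N ^ 3 * a * b * Real.exp (-(N * (a + b))) with hc
  set m := max q (a * b) with hm
  have habn : 0 ≤ a * b := by positivity
  have hm0 : 0 ≤ m := le_max_of_le_left hq
  have hr2 : 0 ≤ 1 - a - b + a * b := by nlinarith
  have hE := Real.exp_pos (-(N * (a + b) / 4))
  have key := Convex.norm_image_sub_le_of_norm_hasDerivWithin_le (𝕜 := ℝ)
    (f := fun t => psi (k + 4) a b t - c * t)
    (f' := fun t => N * (N - 1) * (1 - a - b + t) ^ (k + 2) * t +
      N * (N - 1) * (N - 2) * (1 - a - b + t) ^ (k + 1) * ((a - t) * (b - t)) - c)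
    (C := C * (N ^ 2 * (m + m) * Real.exp (-(N * (a + b) / 4)))) (s := Set.uIcc (a * b) q)
    (x := a * b) (y := q)
    (fun t _ => by
      have := (psi_deriv k a b t).sub ((hasDerivAt_id t).const_mul c)
      simp only [id, mul_one] at this
      exact this.hasDerivWithinAt)
    (fun t ht => by
      have h1 : min (a * b) q ≤ t := ht.1
      have h2 : t ≤ max (a * b) q := ht.2
      have h3 : t ≤ a := h2.trans (max_le (by nlinarith) hqa)
      have h4 : t ≤ b := h2.trans (max_le (by nlinarith) hqb)
      have h5 : 0 ≤ t := (le_min habn hq).trans h1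
      have h6 : 0 ≤ 1 - a - b + t := by
        rcases min_le_iff.1 h1 with h | h <;> linarith
      refine (hb k N a b t (by rw [hN]; push_cast; ring) ha ha1 hb0 hb1 h5 h3 h4 h6).trans ?_
      rw [max_comm] at h2
      have h7 : a * b ≤ m := le_max_right _ _
      gcongr)
    (convex_uIcc _ _) Set.left_mem_uIcc Set.right_mem_uIcc
  simp only [Real.norm_eq_abs] at key
  have e : psi (k + 4) a b q - psi (k + 4) a b (a * b) -
      N ^ 3 * (q - a * b) * (a * b) * Real.exp (-(N * (a + b))) =
      psi (k + 4) a b q - c * q - (psi (k + 4) a b (a * b) - c * (a * b)) := by rw [hc]; ring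
  rw [e]
  refine key.trans ?_
  have h1 : |q - a * b| ≤ m := by
    rw [abs_le]; constructor
    · have : a * b ≤ m := le_max_right _ _
      linarith
    · have : q ≤ m := le_max_left _ _
      linarith
  have h2 : m * m ≤ q ^ 2 + (a * b) ^ 2 := by
    rcases max_choice q (a * b) with h | h <;> rw [hm, h] <;> nlinarith
  calc _ ≤ C * (N ^ 2 * (m + m) * Real.exp (-(N * (a + b) / 4))) * m := by gcongr
    _ = 2 * C * (N ^ 2 * (m * m) * Real.exp (-(N * (a + b) / 4))) := by ring
    _ ≤ _ := by gcongr

end GT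

open MeasureTheory ProbabilityTheory Filter Topology

namespace GT
section J
variable {M A : ℕ} {p : Fin A → ℝ}

def gg (M : ℕ) {A : ℕ} (p : Fin A → ℝ) : Fin M × Fin A → ℝ := fun x => p x.2

noncomputable def qj (p : Fin A → ℝ) : List (Fin M × Fin A) → List (Fin M × Fin A) → ℝ
  | [], w => wt (gg M p) w
  | x :: v, [] => wt (gg M p) (x :: v)
  | x :: v, y :: v' => if x = y then p x.2 * qj p v v' else if x.1 = y.1 then 0 else
      wt (gg M p) (x :: v) * wt (gg M p) (y :: v')

noncomputable def qt (p : Fin A → ℝ) : List (Fin M × Fin A) → List (Fin M × Fin A) → ℝ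
  | [], _ => 0
  | _ :: _, [] => 0
  | x :: v, y :: v' => if x = y then p x.2 * qt p v v' else if x.1 = y.1 then 0 else
      wt (gg M p) (x :: v) * wt (gg M p) (y :: v')

def Div : List (Fin M × Fin A) → List (Fin M × Fin A) → Prop
  | [], _ => False
  | _ :: _, [] => False
  | x :: _, y :: _ => x.1 ≠ y.1

lemma qj_tri (w w' : List (Fin M × Fin A)) :
    (w <+: w' ∧ qj p w w' = wt (gg M p) w' ∧ qt p w w' = 0) ∨
    (w' <+: w ∧ qj p w w' = wt (gg M p) w ∧ qt p w w' = 0) ∨ qj p w w' = qt p w w' := by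
  induction w generalizing w' with
  | nil => left; simp [qj, qt]
  | cons x v ih =>
    cases w' with
    | nil => right; left; simp [qj, qt]
    | cons y v' =>
      by_cases hxy : x = y
      · subst hxy
        rcases ih v' with ⟨h1, h2, h3⟩ | ⟨h1, h2, h3⟩ | h
        · left; simp [qj, qt, h1, h2, h3, gg]
        · right; left; simp [qj, qt, h1, h2, h3, gg]
        · right; right; simp [qj, qt, h]
      · right; right; simp [qj, qt, hxy]

lemma qj_bounds (hp0 : ∀ j, 0 < p j) (hp1 : ∀ j, p j < 1) (hs : ∑ j, p j = 1)
    (w w' : List (Fin M × Fin A)) :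
    0 ≤ qj p w w' ∧ qj p w w' ≤ wt (gg M p) w ∧ qj p w w' ≤ wt (gg M p) w' ∧
      0 ≤ 1 - wt (gg M p) w - wt (gg M p) w' + qj p w w' := by
  have hpos : ∀ w, 0 < wt (gg M p) w := wt_pos fun x => hp0 x.2
  have hle : ∀ w, wt (gg M p) w ≤ 1 := wt_le_one (fun x => hp0 x.2) fun x => hp1 x.2
  induction w generalizing w' with
  | nil => simp only [qj, wt_nil]; have := hpos w'; have := hle w'; refine ⟨?_, ?_, ?_, ?_⟩ <;> linarith
  | cons x v ih =>
    cases w' with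
    | nil =>
      simp only [qj]; have := hpos (x :: v); have := hle (x :: v); simp only [wt_nil]
      refine ⟨?_, ?_, ?_, ?_⟩ <;> linarith
    | cons y v' =>
      have hx := hp0 x.2
      have hx1 := hp1 x.2
      by_cases hxy : x = y
      · subst hxy
        obtain ⟨h1, h2, h3, h4⟩ := ih v'
        simp only [qj, if_true, wt_cons, gg]
        refine ⟨by positivity, by gcongr, by gcongr, ?_⟩
        nlinarith
      · simp only [qj, if_neg hxy]
        by_cases h1 : x.1 = y.1
        · simp only [if_pos h1]
          have h2 : x.2 ≠ y.2 := fun h => hxy (Prod.ext h1 h)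
          have h3 : p x.2 + p y.2 ≤ 1 := by
            rw [← hs, ← Finset.sum_pair h2]
            exact Finset.sum_le_sum_of_subset_of_nonneg (Finset.subset_univ _) fun i _ _ => (hp0 i).le
          refine ⟨le_rfl, (hpos _).le, (hpos _).le, ?_⟩
          have := hle v; have := hle v'; have := hpos v; have := hpos v'
          have := hp0 y.2
          simp only [wt_cons, gg] at *
          nlinarith
        · simp only [if_neg h1]
          have := hpos (x :: v); have := hpos (y :: v'); have := hle (x :: v); have := hle (y :: v')
          refine ⟨by positivity, by nlinarith, by nlinarith, by nlinarith⟩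

lemma qt_append (u s s' : List (Fin M × Fin A)) (hd : Div s s') :
    qt p (u ++ s) (u ++ s') = wt (gg M p) u * (wt (gg M p) s * wt (gg M p) s') := by
  induction u with
  | nil =>
    match s, s', hd with
    | x :: v, y :: v', hd =>
      have : x ≠ y := fun h => hd (by rw [h])
      simp only [List.nil_append, qt, if_neg this, wt_nil, one_mul]
      rw [if_neg hd]
  | cons x u ih => simp only [List.cons_append, qt, if_true, ih, wt_cons, gg]; ring

lemma qt_range (w w' : List (Fin M × Fin A)) (h : qt p w w' ≠ 0) :
    ∃ u s s', Div s s' ∧ w = u ++ s ∧ w' = u ++ s' := by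
  induction w generalizing w' with
  | nil => simp [qt] at h
  | cons x v ih =>
    cases w' with
    | nil => simp [qt] at h
    | cons y v' =>
      by_cases hxy : x = y
      · subst hxy
        simp only [qt, if_true] at h
        obtain ⟨u, s, s', hd, h1, h2⟩ := ih v' (right_ne_zero_of_mul h)
        exact ⟨x :: u, s, s', hd, by simp [h1], by simp [h2]⟩
      · by_cases h1 : x.1 = y.1
        · simp [qt, hxy, h1] at h
        · exact ⟨[], x :: v, y :: v', h1, rfl, rfl⟩

def io (i : List (Fin M × Fin A) × {z : List (Fin M × Fin A) × List (Fin M × Fin A) // Div z.1 z.2}) :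
    List (Fin M × Fin A) × List (Fin M × Fin A) := (i.1 ++ i.2.1.1, i.1 ++ i.2.1.2)

lemma io_inj : Function.Injective (io (M := M) (A := A)) := by
  have key : ∀ (u u' s t s' t' : List (Fin M × Fin A)), Div s t → Div s' t' →
      u ++ s = u' ++ s' → u ++ t = u' ++ t' → u = u' ∧ s = s' ∧ t = t' := by
    intro u
    induction u with
    | nil =>
      intro u' s t s' t' h h' h1 h2
      cases u' with
      | nil => simpa using ⟨h1, h2⟩
      | cons c u' =>
        simp only [List.nil_append, List.cons_append] at h1 h2
        subst h1 h2
        simp [Div] at h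
    | cons b u ih =>
      intro u' s t s' t' h h' h1 h2
      cases u' with
      | nil =>
        simp only [List.nil_append, List.cons_append] at h1 h2
        subst h1 h2
        simp [Div] at h'
      | cons c u' =>
        simp only [List.cons_append, List.cons.injEq] at h1 h2
        obtain ⟨e1, e2, e3⟩ := ih u' s t s' t' h h' h1.2 h2.2
        exact ⟨by rw [h1.1, e1], e2, e3⟩
  rintro ⟨u, ⟨⟨s, t⟩, h⟩⟩ ⟨u', ⟨⟨s', t'⟩, h'⟩⟩ e
  simp only [io, Prod.mk.injEq] at e
  obtain ⟨e1, e2, e3⟩ := key u u' s t s' t' h h' e.1 e.2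
  subst e1 e2 e3
  rfl

end J
end GT

open MeasureTheory ProbabilityTheory Filter Topology

namespace GT
section J
variable {M A : ℕ} {p : Fin A → ℝ} {ρ : ℝ}

noncomputable def hL (M : ℕ) {A : ℕ} (p : Fin A → ℝ) (x : ℝ) (w : List (Fin M × Fin A)) : ℝ :=
  wt (gg M p) w ^ 2 * Real.exp (-(x * wt (gg M p) w))

lemma hL_nonneg (x : ℝ) (w : List (Fin M × Fin A)) : 0 ≤ hL M p x w := by
  unfold hL; positivity

lemma hasSum_mul_pair {ι : Type*} {f f' : ι → ℝ} (hf : ∀ i, 0 ≤ f i) (hf' : ∀ i, 0 ≤ f' i) {a a' : ℝ}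
    (h : HasSum f a) (h' : HasSum f' a') : HasSum (fun z : ι × ι => f z.1 * f' z.2) (a * a') :=
  h.mul h' (h.summable.mul_of_nonneg h'.summable hf hf')

open Classical in
lemma div_hasSum (h : Good (gg M p) ρ) {x : ℝ} (hx : 0 ≤ x) :
    HasSum (fun z : {z : List (Fin M × Fin A) × List (Fin M × Fin A) // Div z.1 z.2} =>
      hL M p x z.1.1 * hL M p x z.1.2)
      ((1 - 1 / (M : ℝ)) * (Lf (gg M p) x - Real.exp (-x)) ^ 2) := by
  obtain ⟨a0⟩ := h.nonempty
  have hM : (M : ℝ) ≠ 0 := by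
    have := a0.1.pos
    exact_mod_cast this.ne'
  have hs : Summable (hL M p x) := h.summable_L hx
  let B : Fin A → ℝ := fun j => ∑' w : List (Fin M × Fin A),
    (p j * wt (gg M p) w) ^ 2 * Real.exp (-(x * (p j * wt (gg M p) w)))
  let S := ∑ j, B j
  have hLf : Lf (gg M p) x = Real.exp (-x) + M * S := by
    have := tsum_list hs
    simp only [hL, wt_nil, wt_cons, one_pow, one_mul, mul_one, gg] at this
    unfold Lf
    refine this.trans ?_
    rw [Fintype.sum_prod_type]
    simp [S, B, gg]
  let h0 : List (Fin M × Fin A) → ℝ := fun w => if w = [] then 0 else hL M p x w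
  let hm : Fin M → List (Fin M × Fin A) → ℝ := fun m w =>
    if w.head?.map Prod.fst = some m then hL M p x w else 0
  have hmc : ∀ m a v, hm m (a :: v) = if a.1 = m then hL M p x (a :: v) else 0 := by
    intro m a v
    simp only [hm, List.head?_cons, Option.map_some, Option.some.injEq]
  have h0n : ∀ w, 0 ≤ h0 w := fun w => by
    simp only [h0]; split_ifs; exacts [le_rfl, hL_nonneg _ _]
  have hmn : ∀ m w, 0 ≤ hm m w := fun m w => by
    simp only [hm]; split_ifs; exacts [hL_nonneg _ _, le_rfl]
  have s0 : Summable h0 := Summable.of_nonneg_of_le h0n (fun w => by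
    simp only [h0]; split_ifs; exacts [hL_nonneg _ _, le_rfl]) hs
  have sm : ∀ m, Summable (hm m) := fun m => Summable.of_nonneg_of_le (hmn m) (fun w => by
    simp only [hm]; split_ifs; exacts [le_rfl, hL_nonneg _ _]) hs
  have t0 : HasSum h0 (M * S) := by
    have := tsum_list s0
    rw [s0.hasSum_iff, this, Fintype.sum_prod_type]
    simp [h0, S, B, gg, hL]
  have tm : ∀ m, HasSum (hm m) S := by
    intro m
    have := tsum_list (sm m)
    rw [(sm m).hasSum_iff, this, Fintype.sum_prod_type, Finset.sum_eq_single m]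
    · simp [hm, S, B, gg, hL]
    · intro b _ hb
      simp [hm, hb]
    · simp
  have big : HasSum (fun z : List (Fin M × Fin A) × List (Fin M × Fin A) =>
      h0 z.1 * h0 z.2 - ∑ m, hm m z.1 * hm m z.2) (M * S * (M * S) - ∑ m : Fin M, S * S) :=
    (hasSum_mul_pair h0n h0n t0 t0).sub
      (hasSum_sum fun m _ => hasSum_mul_pair (hmn m) (hmn m) (tm m) (tm m))
  have hval : (1 - 1 / (M : ℝ)) * (Lf (gg M p) x - Real.exp (-x)) ^ 2 =
      M * S * (M * S) - ∑ m : Fin M, S * S := by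
    rw [hLf]; simp; field_simp
  rw [hval]
  have := hasSum_subtype_iff_indicator (s := {z : List (Fin M × Fin A) × List (Fin M × Fin A) | Div z.1 z.2})
    (f := fun z => hL M p x z.1 * hL M p x z.2) (a := M * S * (M * S) - ∑ m : Fin M, S * S)
  refine this.2 ?_
  refine big.congr_fun ?_
  rintro ⟨s, s'⟩
  rw [Set.indicator_apply]
  match s, s' with
  | [], _ => simp [h0, hm, Div]
  | a :: v, [] => simp [h0, hm, Div]
  | a :: v, b :: v' =>
    by_cases hab : a.1 = b.1
    · simp only [hmc, hab]
      simp [h0, Div, hab]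
    · have : ∀ m, (if a.1 = m then hL M p x (a :: v) else 0) * (if b.1 = m then hL M p x (b :: v') else 0) = 0 := by
        intro m
        by_cases h1 : a.1 = m
        · have : b.1 ≠ m := fun h2 => hab (h1.trans h2.symm)
          simp [this]
        · simp [h1]
      simp only [hmc, this]
      simp [h0, Div, hab]

lemma div_tree_hasSum (h : Good (gg M p) ρ)
    (F : List (Fin M × Fin A) × List (Fin M × Fin A) → ℝ) (c X : List (Fin M × Fin A) → ℝ)
    (hc : ∀ u, 0 ≤ c u) (hX : ∀ u, 0 ≤ X u) (hF : ∀ z, qt p z.1 z.2 = 0 → F z = 0)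
    (hF2 : ∀ u s s', Div s s' → F (u ++ s, u ++ s') = c u * (hL M p (X u) s * hL M p (X u) s'))
    (hsum : Summable fun u => c u * ((1 - 1 / (M : ℝ)) *
      (Lf (gg M p) (X u) - Real.exp (-(X u))) ^ 2)) :
    HasSum F (∑' u, c u * ((1 - 1 / (M : ℝ)) *
      (Lf (gg M p) (X u) - Real.exp (-(X u))) ^ 2)) := by
  rw [← io_inj.hasSum_iff]
  · have hfib : ∀ u, HasSum (fun z => (F ∘ io) (u, z)) (c u * ((1 - 1 / (M : ℝ)) *
        (Lf (gg M p) (X u) - Real.exp (-(X u))) ^ 2)) := by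
      intro u
      refine ((div_hasSum h (hX u)).mul_left (c u)).congr_fun ?_
      rintro ⟨⟨s, s'⟩, hd⟩
      exact hF2 u s s' hd
    have hnn : 0 ≤ F ∘ io := by
      rintro ⟨u, ⟨⟨s, s'⟩, hd⟩⟩
      simp only [Pi.zero_apply, Function.comp, io]
      rw [hF2 u s s' hd]
      exact mul_nonneg (hc u) (mul_nonneg (hL_nonneg _ _) (hL_nonneg _ _))
    have hS : Summable (F ∘ io) := by
      rw [summable_prod_of_nonneg hnn]
      refine ⟨fun u => (hfib u).summable, ?_⟩
      exact hsum.congr fun u => ((hfib u).tsum_eq).symm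
    have := hS.hasSum.prod_fiberwise hfib
    rw [this.tsum_eq]
    exact hS.hasSum
  · rintro ⟨w, w'⟩ hz
    apply hF
    by_contra hq
    obtain ⟨u, s, s', hd, e1, e2⟩ := qt_range w w' hq
    exact hz ⟨(u, ⟨(s, s'), hd⟩), by simp [io, e1, e2]⟩

end J
end GT

open MeasureTheory ProbabilityTheory Filter Topology

namespace GT
section J
variable {M A : ℕ} {p : Fin A → ℝ} {ρ : ℝ}

noncomputable def cov (p : Fin A → ℝ) (n : ℕ)
    (z : List (Fin M × Fin A) × List (Fin M × Fin A)) : ℝ :=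
  psi n (wt (gg M p) z.1) (wt (gg M p) z.2) (qj p z.1 z.2) -
    phi n (wt (gg M p) z.1) * phi n (wt (gg M p) z.2)

open Classical in
noncomputable def Pr (p : Fin A → ℝ) (σ : ℝ)
    (z : List (Fin M × Fin A) × List (Fin M × Fin A)) : ℝ :=
  (if z.1 <+: z.2 then wt (gg M p) z.2 ^ σ else 0) +
  (if z.2 <+: z.1 then wt (gg M p) z.1 ^ σ else 0)

lemma aux_prefixes {n : ℕ} (hn : 4 ≤ n) {a b σ : ℝ} (ha : 0 ≤ a) (ha1 : a ≤ 1) (hb : 0 < b)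
    (hb1 : b ≤ 1) (h1 : 1 ≤ σ) (h2 : σ ≤ 2) :
    |phi n a - phi n a * phi n b + (n : ℝ) ^ 3 * (a * b) ^ 2 * Real.exp (-(n * (a + b)))| ≤
      2 * ((n : ℝ) ^ σ * b ^ σ) := by
  have hn0 : (0:ℝ) < n := by exact_mod_cast (by omega : 0 < n)
  set x := (n : ℝ) * b with hx
  have hx0 : 0 < x := by positivity
  rw [← Real.mul_rpow hn0.le hb.le, ← hx]
  obtain ⟨pa0, pa1, -⟩ := phi_bounds n (by omega) ha ha1
  obtain ⟨pb0, pb1, pb2⟩ := phi_bounds n (by omega) hb.le hb1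
  have e1 : 1 - phi n b ≤ x ^ σ := by
    rcases le_total x 1 with h | h
    · refine pb2.trans ?_
      rw [← hx, ← Real.rpow_two]
      exact Real.rpow_le_rpow_of_exponent_ge hx0 h h2
    · have := Real.one_le_rpow h (by linarith : 0 ≤ σ)
      linarith
  have e2 : x ^ 2 * Real.exp (-x) ≤ x ^ σ := by
    rcases le_total x 1 with h | h
    · have h3 : x ^ 2 ≤ x ^ σ := by
        rw [← Real.rpow_two]
        exact Real.rpow_le_rpow_of_exponent_ge hx0 h h2
      have : Real.exp (-x) ≤ 1 := Real.exp_le_one_iff.2 (by linarith)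
      nlinarith [sq_nonneg x]
    · have h3 : x ≤ x ^ σ := by
        conv_lhs => rw [← Real.rpow_one x]
        exact Real.rpow_le_rpow_of_exponent_le h h1
      have h4 : x * Real.exp (-x) ≤ 1 := by
        have h5 := Real.add_one_le_exp x
        have h6 : Real.exp x * Real.exp (-x) = 1 := by rw [← Real.exp_add]; simp
        have := Real.exp_pos (-x)
        nlinarith
      nlinarith
  have e3 : (n : ℝ) * a ^ 2 * Real.exp (-(n * a)) ≤ 1 := by
    have h5 := Real.add_one_le_exp (n * a)
    have h6 : Real.exp (n * a) * Real.exp (-(n * a)) = 1 := by rw [← Real.exp_add]; simp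
    have h7 := Real.exp_pos (-(n * a))
    have h8 : (n : ℝ) * a * Real.exp (-(n * a)) ≤ 1 := by nlinarith
    have h9 : 0 ≤ (n : ℝ) * a * Real.exp (-(n * a)) := by positivity
    nlinarith
  have e4 : (n : ℝ) ^ 3 * (a * b) ^ 2 * Real.exp (-(n * (a + b))) =
      (x ^ 2 * Real.exp (-x)) * ((n : ℝ) * a ^ 2 * Real.exp (-(n * a))) := by
    rw [show -((n:ℝ) * (a + b)) = -x + -(n * a) by rw [hx]; ring, Real.exp_add, hx]; ring
  have e5 : (x ^ 2 * Real.exp (-x)) * ((n : ℝ) * a ^ 2 * Real.exp (-(n * a))) ≤ x ^ σ := by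
    calc _ ≤ (x ^ 2 * Real.exp (-x)) * 1 := by gcongr
      _ ≤ _ := by linarith
  have e6 : 0 ≤ (x ^ 2 * Real.exp (-x)) * ((n : ℝ) * a ^ 2 * Real.exp (-(n * a))) := by positivity
  rw [e4, abs_of_nonneg (by nlinarith)]
  nlinarith

lemma cov_bound (hp0 : ∀ j, 0 < p j) (hp1 : ∀ j, p j < 1) (hs : ∑ j, p j = 1) :
    ∃ C : ℝ, 0 < C ∧ ∀ (n : ℕ) (σ : ℝ) (z : List (Fin M × Fin A) × List (Fin M × Fin A)),
    4 ≤ n → 1 ≤ σ → σ ≤ 2 →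
    |cov p n z - (n ^ 3 * qt p z.1 z.2 * (wt (gg M p) z.1 * wt (gg M p) z.2) *
      Real.exp (-(n * (wt (gg M p) z.1 + wt (gg M p) z.2))) -
      n ^ 3 * (wt (gg M p) z.1 * wt (gg M p) z.2) ^ 2 *
      Real.exp (-(n * (wt (gg M p) z.1 + wt (gg M p) z.2))))| ≤
    C * (n ^ 2 * qt p z.1 z.2 ^ 2 * Real.exp (-(n * (wt (gg M p) z.1 + wt (gg M p) z.2) / 4)) +
      n ^ 2 * (wt (gg M p) z.1 * wt (gg M p) z.2) ^ 2 *
        Real.exp (-(n * (wt (gg M p) z.1 + wt (gg M p) z.2) / 4)) + n ^ σ * Pr p σ z) := by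
  obtain ⟨C, hC, hcov⟩ := psi_cov
  refine ⟨C + 2, by positivity, ?_⟩
  rintro n σ ⟨w, w'⟩ hn h1 h2
  obtain ⟨b1, b2, b3, b4⟩ := qj_bounds hp0 hp1 hs w w'
  have ha := wt_pos (g := gg M p) (fun x => hp0 x.2) w
  have hb := wt_pos (g := gg M p) (fun x => hp0 x.2) w'
  have ha1 := wt_le_one (g := gg M p) (fun x => hp0 x.2) (fun x => hp1 x.2) w
  have hb1 := wt_le_one (g := gg M p) (fun x => hp0 x.2) (fun x => hp1 x.2) w'
  have hPr : 0 ≤ Pr p σ (w, w') := by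
    unfold Pr
    refine add_nonneg ?_ ?_ <;> split_ifs <;> positivity
  have hnσ : 0 ≤ (n : ℝ) ^ σ := by positivity
  simp only [cov]
  set a := wt (gg M p) w
  set b := wt (gg M p) w'
  rcases qj_tri (p := p) w w' with ⟨hpre, hq, ht⟩ | ⟨hpre, hq, ht⟩ | hq
  · have key := aux_prefixes hn ha.le ha1 hb hb1 h1 h2
    rw [hq, ht, psi_prefixes]
    have hP : b ^ σ ≤ Pr p σ (w, w') := by
      unfold Pr
      rw [if_pos hpre]
      have : (0:ℝ) ≤ if w' <+: w then wt (gg M p) w ^ σ else 0 := by split_ifs <;> positivity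
      simp only
      linarith
    calc _ = |phi n a - phi n a * phi n b + (n : ℝ) ^ 3 * (a * b) ^ 2 * Real.exp (-(n * (a + b)))| := by
          congr 1; ring
      _ ≤ _ := key
      _ ≤ 2 * (n ^ σ * Pr p σ (w, w')) := by gcongr
      _ ≤ (C + 2) * (n ^ σ * Pr p σ (w, w')) := by
        have : 0 ≤ n ^ σ * Pr p σ (w, w') := by positivity
        nlinarith
      _ ≤ _ := by
        gcongr
        have : 0 ≤ (n:ℝ) ^ 2 * (a * b) ^ 2 * Real.exp (-(n * (a + b) / 4)) := by positivity
        simp only [ne_eq, OfNat.ofNat_ne_zero, not_false_eq_true, zero_pow, mul_zero, zero_mul, zero_add]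
        linarith
  · have key := aux_prefixes hn hb.le hb1 ha ha1 h1 h2
    rw [hq, ht, psi_comm, psi_prefixes]
    have hP : a ^ σ ≤ Pr p σ (w, w') := by
      unfold Pr
      have : (0:ℝ) ≤ if w <+: w' then wt (gg M p) w' ^ σ else 0 := by split_ifs <;> positivity
      simp only [if_pos hpre]
      linarith
    calc _ = |phi n b - phi n b * phi n a + (n : ℝ) ^ 3 * (b * a) ^ 2 * Real.exp (-(n * (b + a)))| := by
          congr 1; rw [add_comm b a]; ring
      _ ≤ _ := key
      _ ≤ 2 * (n ^ σ * Pr p σ (w, w')) := by gcongr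
      _ ≤ (C + 2) * (n ^ σ * Pr p σ (w, w')) := by
        have : 0 ≤ n ^ σ * Pr p σ (w, w') := by positivity
        nlinarith
      _ ≤ _ := by
        gcongr
        have : 0 ≤ (n:ℝ) ^ 2 * (a * b) ^ 2 * Real.exp (-(n * (a + b) / 4)) := by positivity
        simp only [ne_eq, OfNat.ofNat_ne_zero, not_false_eq_true, zero_pow, mul_zero, zero_mul, zero_add]
        linarith
  · have key := hcov n a b (qj p w w') hn ha.le ha1 hb.le hb1 b1 b2 b3 b4
    rw [← hq]
    calc _ = |psi n a b (qj p w w') - phi n a * phi n b -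
          (n : ℝ) ^ 3 * (qj p w w' - a * b) * (a * b) * Real.exp (-(n * (a + b)))| := by
          congr 1; ring
      _ ≤ _ := key
      _ = C * (n ^ 2 * qj p w w' ^ 2 * Real.exp (-(n * (a + b) / 4)) +
          n ^ 2 * (a * b) ^ 2 * Real.exp (-(n * (a + b) / 4))) := by ring
      _ ≤ _ := by
        have : 0 ≤ (n:ℝ) ^ σ * Pr p σ (w, w') := by positivity
        exact mul_le_mul (by linarith) (by linarith) (by positivity) (by positivity)

lemma Pr_summable (h : Good (gg M p) ρ) {σ : ℝ} (hσ : ρ < σ) :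
    Summable (Pr (M := M) p σ) := by
  classical
  have hs := h.summable_rpow hσ
  have hp : ∀ w, 0 < wt (gg M p) w := wt_pos h.pos
  have key : Summable (fun z : List (Fin M × Fin A) × List (Fin M × Fin A) =>
      if z.1 <+: z.2 then wt (gg M p) z.2 ^ σ else 0) := by
    have hinj : Function.Injective (fun z : List (Fin M × Fin A) × List (Fin M × Fin A) =>
        (z.1, z.1 ++ z.2)) := by
      rintro ⟨a, b⟩ ⟨c, d⟩ h
      simp only [Prod.mk.injEq] at h
      obtain ⟨rfl, h⟩ := h
      simpa using h
    rw [← hinj.summable_iff]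
    · have := hs.mul_of_nonneg hs (fun w => (Real.rpow_pos_of_pos (hp w) _).le)
        (fun w => (Real.rpow_pos_of_pos (hp w) _).le)
      refine this.congr ?_
      rintro ⟨a, b⟩
      simp [Real.mul_rpow (hp a).le (hp b).le]
    · rintro ⟨a, b⟩ hz
      rw [if_neg]
      rintro ⟨v, hv⟩
      exact hz ⟨(a, v), by simp only [hv]⟩
  have key2 := (Equiv.prodComm _ _).summable_iff.2 key
  refine (key.add key2).congr ?_
  rintro ⟨a, b⟩
  simp [Pr]

end J
end GT

open MeasureTheory ProbabilityTheory Filter Topology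

namespace GT
section J
variable {M A : ℕ} {p : Fin A → ℝ} {ρ : ℝ}

lemma Good.wt_mem_per {α : Type*} [Fintype α] {g : α → ℝ} (h : Good g ρ) (u : List α) :
    -Real.log (wt g u) ∈ perGroup g ρ := by
  apply h.closure_le
  induction u with
  | nil => simp
  | cons x u ih =>
    rw [wt_cons, Real.log_mul (h.pos x).ne' (wt_pos h.pos u).ne', neg_add]
    exact add_mem (AddSubgroup.subset_closure ⟨x, rfl⟩) ih

lemma main_term {α : Type*} (g : α → ℝ) {X : ℝ} (hX : 0 < X) :
    X ^ 3 * (Lf g X - Real.exp (-X)) ^ 2 =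
      X ^ (2 * ρ - 1) * (ph g ρ (Real.log X) - kf ρ (Real.log X)) ^ 2 := by
  have e : ph g ρ (Real.log X) - kf ρ (Real.log X) = X ^ (2 - ρ) * (Lf g X - Real.exp (-X)) := by
    unfold ph kf
    rw [Real.exp_sub, Real.exp_log hX, mul_comm (2 - ρ), ← Real.rpow_def_of_pos hX, Real.exp_neg]
    rw [mul_sub, div_eq_mul_inv]
  rw [e, mul_pow, ← mul_assoc, ← Real.rpow_natCast (X ^ (2 - ρ)), ← Real.rpow_mul hX.le,
    ← Real.rpow_add hX, ← Real.rpow_natCast X 3]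
  congr 2
  push_cast; ring

lemma L_term {α : Type*} (g : α → ℝ) {X : ℝ} (hX : 0 < X) :
    X ^ 3 * (Lf g X) ^ 2 = X ^ (2 * ρ - 1) * (ph g ρ (Real.log X)) ^ 2 := by
  have e : ph g ρ (Real.log X) = X ^ (2 - ρ) * (Lf g X) := by
    unfold ph
    rw [Real.exp_log hX, mul_comm (2 - ρ), ← Real.rpow_def_of_pos hX]
  rw [e, mul_pow, ← mul_assoc, ← Real.rpow_natCast (X ^ (2 - ρ)), ← Real.rpow_mul hX.le,
    ← Real.rpow_add hX, ← Real.rpow_natCast X 3]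
  congr 2
  push_cast; ring

lemma Good.kf_le_ph {α : Type*} [Fintype α] {g : α → ℝ} (h : Good g ρ) (t : ℝ) :
    kf ρ t ≤ ph g ρ t := by
  have h1 := h.L_rec (Real.exp_pos t).le
  have h2 : Real.exp (-Real.exp t) ≤ Lf g (Real.exp t) := by
    rw [h1]
    have : 0 ≤ ∑ a, g a ^ 2 * Lf g (g a * Real.exp t) :=
      Finset.sum_nonneg fun a _ => mul_nonneg (sq_nonneg _) (Lf_nonneg _)
    linarith
  unfold kf ph
  rw [sub_eq_add_neg, Real.exp_add]
  gcongr

lemma Good.exp_le_L {α : Type*} [Fintype α] {g : α → ℝ} (h : Good g ρ) {x : ℝ} (hx : 0 ≤ x) :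
    Real.exp (-x) ≤ Lf g x := by
  rw [h.L_rec hx]
  have : 0 ≤ ∑ a, g a ^ 2 * Lf g (g a * x) :=
    Finset.sum_nonneg fun a _ => mul_nonneg (sq_nonneg _) (Lf_nonneg _)
  linarith

lemma Good.err_L {α : Type*} [Fintype α] {g : α → ℝ} (h : Good g ρ) {σ : ℝ} (h1 : ρ < σ) (h2 : σ < 2) :
    ∃ C, 0 < C ∧ ∀ X, 0 < X → X ^ 2 * Lf g (X / 4) ^ 2 ≤ C * X ^ σ := by
  obtain ⟨C, hC, hb⟩ := h.L_bound
  refine ⟨Lf g 0 ^ 2 + C ^ 2 * (4 ^ (2 - ρ)) ^ 2, by positivity, ?_⟩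
  intro X hX
  have hL0 := Lf_nonneg (g := g) (X / 4)
  have hρ := h.lt_two
  rcases le_total X 1 with hX1 | hX1
  · have e1 : X ^ 2 ≤ X ^ σ := by
      rw [← Real.rpow_two]
      exact Real.rpow_le_rpow_of_exponent_ge hX hX1 h2.le
    have e2 : Lf g (X / 4) ≤ Lf g 0 := h.L_anti le_rfl (by positivity)
    calc _ ≤ X ^ σ * Lf g 0 ^ 2 := by gcongr
      _ ≤ _ := by
        have : 0 ≤ C ^ 2 * (4 ^ (2 - ρ)) ^ 2 * X ^ σ := by positivity
        nlinarith
  · have e1 := hb (X / 4) (by positivity)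
    have e2 : (X / 4) ^ (ρ - 2) = X ^ (ρ - 2) * 4 ^ (2 - ρ) := by
      rw [Real.div_rpow hX.le (by norm_num), div_eq_mul_inv, ← Real.rpow_neg (by norm_num)]
      congr 2; ring
    rw [e2] at e1
    have e3 : X ^ 2 * (X ^ (ρ - 2)) ^ 2 ≤ X ^ σ := by
      rw [← Real.rpow_natCast X 2, ← Real.rpow_natCast (X ^ (ρ - 2)), ← Real.rpow_mul hX.le,
        ← Real.rpow_add hX]
      apply Real.rpow_le_rpow_of_exponent_le hX1
      push_cast; linarith
    calc _ ≤ X ^ 2 * (C * (X ^ (ρ - 2) * 4 ^ (2 - ρ))) ^ 2 := by gcongr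
      _ = (X ^ 2 * (X ^ (ρ - 2)) ^ 2) * (C ^ 2 * (4 ^ (2 - ρ)) ^ 2) := by ring
      _ ≤ X ^ σ * (C ^ 2 * (4 ^ (2 - ρ)) ^ 2) := by gcongr
      _ ≤ _ := by
        have : 0 ≤ Lf g 0 ^ 2 * X ^ σ := by positivity
        nlinarith

lemma tannery {α : Type*} [Fintype α] {g : α → ℝ} (h : Good g ρ) :
    Tendsto (fun n : ℕ => ∑' u, (wt g u ^ (2 * ρ - 1) *
      ((ph g ρ (Real.log n + Real.log (wt g u)) - kf ρ (Real.log n + Real.log (wt g u))) ^ 2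
        - ph g ρ (Real.log n) ^ 2))) atTop (𝓝 0) := by
  obtain ⟨C, hC, hb⟩ := h.ph_bdd
  have hρ := h.one_lt
  have hs := h.summable_rpow (σ := 2 * ρ - 1) (by linarith)
  have hln : Tendsto (fun n : ℕ => Real.log n) atTop atTop :=
    Real.tendsto_log_atTop.comp tendsto_natCast_atTop_atTop
  rw [show 𝓝 (0:ℝ) = 𝓝 (∑' u : List α, (0:ℝ)) by simp]
  refine tendsto_tsum_of_dominated_convergence (bound := fun u => wt g u ^ (2 * ρ - 1) * (2 * C ^ 2))
    (hs.mul_right _) (fun u => ?_) (Eventually.of_forall fun n u => ?_)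
  · rw [show 𝓝 (0:ℝ) = 𝓝 (wt g u ^ (2 * ρ - 1) * 0) by simp]
    refine Tendsto.const_mul _ ?_
    have h1 : Tendsto (fun n : ℕ => ph g ρ (Real.log n + Real.log (wt g u)) - ph g ρ (Real.log n))
        atTop (𝓝 0) := by
      have := (show Tendsto _ _ _ from h.wt_mem_per u).comp hln
      simpa only [Function.comp_def, sub_neg_eq_add] using this
    have h2 : Tendsto (fun n : ℕ => kf ρ (Real.log n + Real.log (wt g u))) atTop (𝓝 0) := by
      have h3 : Tendsto (fun t : ℝ => 2 * Real.exp (-(ρ * t))) atTop (𝓝 0) := by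
        rw [show 𝓝 (0:ℝ) = 𝓝 (2 * 0) by simp]
        refine Tendsto.const_mul _ (Real.tendsto_exp_neg_atTop_nhds_zero.comp ?_)
        exact tendsto_id.const_mul_atTop (by linarith)
      have h4 := squeeze_zero (fun t => (kf_pos ρ t).le) (fun t => kf_le2 ρ t) h3
      exact h4.comp (tendsto_atTop_add_const_right _ _ hln)
    have h5 := h1.sub h2
    rw [sub_zero] at h5
    refine squeeze_zero_norm (a := fun n : ℕ =>
      |ph g ρ (Real.log n + Real.log (wt g u)) - ph g ρ (Real.log n) -
        kf ρ (Real.log n + Real.log (wt g u))| * (2 * C)) (fun n => ?_) ?_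
    · rw [Real.norm_eq_abs, show ∀ x y z : ℝ, (x - y) ^ 2 - z ^ 2 = (x - z - y) * (x - y + z) by
        intros; ring, abs_mul]
      gcongr
      have a1 := hb (Real.log n + Real.log (wt g u))
      have a2 := hb (Real.log n)
      have a3 := h.kf_le_ph (Real.log n + Real.log (wt g u))
      have a4 := ph_nonneg g ρ (Real.log n)
      have a5 := kf_pos ρ (Real.log n + Real.log (wt g u))
      rw [abs_le]; constructor <;> linarith
    · simpa using h5.abs.mul_const (2 * C)
  · have hw := wt_pos h.pos u
    rw [norm_mul, Real.norm_of_nonneg (by positivity)]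
    gcongr
    have a1 := hb (Real.log n + Real.log (wt g u))
    have a2 := hb (Real.log n)
    have a3 := h.kf_le_ph (Real.log n + Real.log (wt g u))
    have a4 := ph_nonneg g ρ (Real.log n)
    have a5 := kf_pos ρ (Real.log n + Real.log (wt g u))
    have a6 : (ph g ρ (Real.log n + Real.log (wt g u)) - kf ρ (Real.log n + Real.log (wt g u))) ^ 2 ≤
      C ^ 2 := pow_le_pow_left₀ (by linarith) (by linarith) 2
    have a7 : ph g ρ (Real.log n) ^ 2 ≤ C ^ 2 := pow_le_pow_left₀ a4 a2 2
    rw [Real.norm_eq_abs, abs_le]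
    constructor <;> nlinarith [sq_nonneg (ph g ρ (Real.log n)),
      sq_nonneg (ph g ρ (Real.log n + Real.log (wt g u)) - kf ρ (Real.log n + Real.log (wt g u)))]

end J
end GT

open MeasureTheory ProbabilityTheory Filter Topology

namespace GT
section J
variable {M A : ℕ} {p : Fin A → ℝ} {ρ : ℝ}

noncomputable def mn (M : ℕ) {A : ℕ} (p : Fin A → ℝ) (ρ : ℝ) (n : ℕ) (u : List (Fin M × Fin A)) : ℝ :=
  wt (gg M p) u ^ (2 * ρ - 1) *
    (ph (gg M p) ρ (Real.log n + Real.log (wt (gg M p) u)) - kf ρ (Real.log n + Real.log (wt (gg M p) u))) ^ 2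

lemma mn_summable (h : Good (gg M p) ρ) (n : ℕ) : Summable (mn M p ρ n) := by
  obtain ⟨C, hC, hb⟩ := h.ph_bdd
  have hρ := h.one_lt
  have hs := h.summable_rpow (σ := 2 * ρ - 1) (by linarith)
  refine Summable.of_nonneg_of_le (fun u => ?_) (fun u => ?_) (hs.mul_right (C ^ 2))
  · exact mul_nonneg (Real.rpow_nonneg (wt_pos h.pos u).le _) (sq_nonneg _)
  · refine mul_le_mul_of_nonneg_left ?_ (Real.rpow_nonneg (wt_pos h.pos u).le _)
    have h1 := h.kf_le_ph (Real.log n + Real.log (wt (gg M p) u))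
    have h2 := hb (Real.log n + Real.log (wt (gg M p) u))
    have h3 := kf_pos ρ (Real.log n + Real.log (wt (gg M p) u))
    exact pow_le_pow_left₀ (by linarith) (by linarith) 2

lemma F1_hasSum (h : Good (gg M p) ρ) {n : ℕ} (hn : 0 < n) :
    HasSum (fun z : List (Fin M × Fin A) × List (Fin M × Fin A) =>
      (n:ℝ) ^ 3 * qt p z.1 z.2 * (wt (gg M p) z.1 * wt (gg M p) z.2) *
      Real.exp (-(n * (wt (gg M p) z.1 + wt (gg M p) z.2))))
      ((n:ℝ) ^ (2 * ρ - 1) * (1 - 1 / (M:ℝ)) * ∑' u, mn M p ρ n u) := by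
  have hn' : (0:ℝ) < n := by exact_mod_cast hn
  have hw : ∀ u : List (Fin M × Fin A), 0 < wt (gg M p) u := wt_pos h.pos
  have hterm : ∀ u, (n * wt (gg M p) u) ^ 3 * ((1 - 1 / (M : ℝ)) *
      (Lf (gg M p) (n * wt (gg M p) u) - Real.exp (-(n * wt (gg M p) u))) ^ 2) =
      (n:ℝ) ^ (2 * ρ - 1) * (1 - 1 / (M:ℝ)) * mn M p ρ n u := by
    intro u
    have := main_term (ρ := ρ) (gg M p) (mul_pos hn' (hw u))
    rw [mul_left_comm, this, Real.log_mul hn'.ne' (hw u).ne', Real.mul_rpow hn'.le (hw u).le, mn]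
    ring
  have := div_tree_hasSum h (fun z : List (Fin M × Fin A) × List (Fin M × Fin A) =>
      (n:ℝ) ^ 3 * qt p z.1 z.2 * (wt (gg M p) z.1 * wt (gg M p) z.2) *
      Real.exp (-(n * (wt (gg M p) z.1 + wt (gg M p) z.2))))
      (fun u => (n * wt (gg M p) u) ^ 3) (fun u => n * wt (gg M p) u)
      (fun u => by have := hw u; positivity) (fun u => by have := hw u; positivity)
      (fun z hz => by simp [hz]) ?_ ?_
  · simp only [hterm] at this
    rwa [tsum_mul_left] at this
  · intro u s s' hd
    simp only [qt_append u s s' hd, wt_append, hL]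
    rw [show -(n * (wt (gg M p) u * wt (gg M p) s + wt (gg M p) u * wt (gg M p) s')) =
      -(n * wt (gg M p) u * wt (gg M p) s) + -(n * wt (gg M p) u * wt (gg M p) s') by ring, Real.exp_add]
    ring
  · simp only [hterm]
    exact (mn_summable h n).mul_left _

lemma F2_hasSum (h : Good (gg M p) ρ) {σ : ℝ} (h1 : ρ < σ) (h2 : σ < 2) :
    ∃ C : ℝ, 0 < C ∧ ∀ n : ℕ, 0 < n → ∃ a : ℝ, a ≤ C * (n:ℝ) ^ σ ∧
    HasSum (fun z : List (Fin M × Fin A) × List (Fin M × Fin A) =>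
      (n:ℝ) ^ 2 * qt p z.1 z.2 ^ 2 * Real.exp (-(n * (wt (gg M p) z.1 + wt (gg M p) z.2) / 4))) a := by
  obtain ⟨C, hC, hb⟩ := h.err_L h1 h2
  have hM : 1 - 1 / (M:ℝ) ≤ 1 := by
    have : 0 ≤ 1 / (M:ℝ) := by positivity
    linarith
  have hM0 : 0 ≤ 1 - 1 / (M:ℝ) := by
    obtain ⟨a0⟩ := h.nonempty
    have : (1:ℝ) ≤ M := by exact_mod_cast a0.1.pos
    have := (div_le_one (by linarith : (0:ℝ) < M)).2 this
    linarith
  have hw : ∀ u : List (Fin M × Fin A), 0 < wt (gg M p) u := wt_pos h.pos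
  have hs := h.summable_rpow h1
  have hs0 : 0 ≤ ∑' u, wt (gg M p) u ^ σ := tsum_nonneg fun u => Real.rpow_nonneg (hw u).le _
  refine ⟨C * (∑' u, wt (gg M p) u ^ σ) + 1, by positivity, fun n hn => ?_⟩
  have hn' : (0:ℝ) < n := by exact_mod_cast hn
  have hb2 : ∀ u, (n * wt (gg M p) u) ^ 2 * ((1 - 1 / (M : ℝ)) *
      (Lf (gg M p) (n * wt (gg M p) u / 4) - Real.exp (-(n * wt (gg M p) u / 4))) ^ 2) ≤
      C * n ^ σ * wt (gg M p) u ^ σ := by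
    intro u
    have hX := mul_pos hn' (hw u)
    have e1 := h.exp_le_L (x := n * wt (gg M p) u / 4) (by positivity)
    have e2 := Real.exp_pos (-(n * wt (gg M p) u / 4))
    have e3 := hb _ hX
    rw [Real.mul_rpow hn'.le (hw u).le, ← mul_assoc] at e3
    refine le_trans ?_ e3
    refine mul_le_mul_of_nonneg_left ?_ (by positivity)
    calc _ ≤ 1 * Lf (gg M p) (n * wt (gg M p) u / 4) ^ 2 := by
          refine mul_le_mul hM (pow_le_pow_left₀ (by linarith) (by linarith) 2) (sq_nonneg _) zero_le_one
      _ = _ := one_mul _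
  have hsm : Summable (fun u => (n * wt (gg M p) u) ^ 2 * ((1 - 1 / (M : ℝ)) *
      (Lf (gg M p) (n * wt (gg M p) u / 4) - Real.exp (-(n * wt (gg M p) u / 4))) ^ 2)) :=
    Summable.of_nonneg_of_le (fun u => mul_nonneg (sq_nonneg _) (mul_nonneg hM0 (sq_nonneg _))) hb2
      (hs.mul_left _)
  refine ⟨_, ?_, div_tree_hasSum h _
      (fun u => (n * wt (gg M p) u) ^ 2) (fun u => n * wt (gg M p) u / 4)
      (fun u => by have := hw u; positivity) (fun u => by have := hw u; positivity)
      (fun z hz => by simp [hz]) ?_ hsm⟩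
  · refine (hsm.tsum_le_tsum hb2 (hs.mul_left _)).trans ?_
    rw [tsum_mul_left]
    have : 0 ≤ (n:ℝ) ^ σ := by positivity
    nlinarith
  · intro u s s' hd
    simp only [qt_append u s s' hd, wt_append, hL]
    rw [show -(n * (wt (gg M p) u * wt (gg M p) s + wt (gg M p) u * wt (gg M p) s') / 4) =
      -(n * wt (gg M p) u / 4 * wt (gg M p) s) + -(n * wt (gg M p) u / 4 * wt (gg M p) s') by ring, Real.exp_add]
    ring

lemma G_hasSum (h : Good (gg M p) ρ) {x : ℝ} (hx : 0 ≤ x) (k : ℝ) :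
    HasSum (fun z : List (Fin M × Fin A) × List (Fin M × Fin A) =>
      k * (wt (gg M p) z.1 * wt (gg M p) z.2) ^ 2 *
      Real.exp (-(x * (wt (gg M p) z.1 + wt (gg M p) z.2)))) (k * Lf (gg M p) x ^ 2) := by
  have hs : HasSum (hL M p x) (Lf (gg M p) x) := (h.summable_L hx).hasSum
  have := (hasSum_mul_pair (hL_nonneg x) (hL_nonneg x) hs hs).mul_left k
  rw [← sq] at this
  refine this.congr_fun fun z => ?_
  rw [mul_add, neg_add, Real.exp_add, hL, hL]
  ring

lemma cov_sum_bound (hp0 : ∀ j, 0 < p j) (hp1 : ∀ j, p j < 1) (hs : ∑ j, p j = 1)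
    (h : Good (gg M p) ρ) {σ : ℝ} (h1 : ρ < σ) (h2 : σ < 2) :
    ∃ C : ℝ, 0 < C ∧ ∀ n : ℕ, 4 ≤ n → Summable (cov (M := M) p n) ∧
      |∑' z, cov (M := M) p n z - ((n:ℝ) ^ (2 * ρ - 1) * (1 - 1 / (M:ℝ)) * (∑' u, mn M p ρ n u) -
        (n:ℝ) ^ (2 * ρ - 1) * ph (gg M p) ρ (Real.log n) ^ 2)| ≤ C * (n:ℝ) ^ σ := by
  obtain ⟨C1, hC1, hb1⟩ := cov_bound (M := M) hp0 hp1 hs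
  obtain ⟨C2, hC2, hb2⟩ := F2_hasSum h h1 h2
  obtain ⟨C3, hC3, hb3⟩ := h.err_L h1 h2
  have hPr := (Pr_summable h h1).hasSum
  have hPr0 : 0 ≤ ∑' z, Pr (M := M) p σ z := tsum_nonneg fun z => by
    have a1 := Real.rpow_nonneg (wt_pos h.pos z.1).le σ
    have a2 := Real.rpow_nonneg (wt_pos h.pos z.2).le σ
    unfold Pr
    split_ifs <;> simp_all <;> positivity
  refine ⟨C1 * (C2 + C3 + ∑' z, Pr (M := M) p σ z), by positivity, fun n hn => ?_⟩
  have hn0 : 0 < n := by omega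
  have hn' : (0:ℝ) < n := by exact_mod_cast hn0
  obtain ⟨a, ha, hF2⟩ := hb2 n hn0
  have hF1 := F1_hasSum h hn0
  have hG1 := G_hasSum h hn'.le ((n:ℝ) ^ 3)
  have hG2 := G_hasSum h (x := n / 4) (by positivity) ((n:ℝ) ^ 2)
  rw [L_term (ρ := ρ) _ hn'] at hG1
  have hE := ((hF2.add hG2).add (hPr.mul_left ((n:ℝ) ^ σ))).mul_left C1
  have hD := hF1.sub hG1
  have hcb := fun z => hb1 n σ z hn (by linarith [h.one_lt]) h2.le
  have e4 : ∀ z : List (Fin M × Fin A) × List (Fin M × Fin A), 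
    -(n * (wt (gg M p) z.1 + wt (gg M p) z.2) / 4) = -((n:ℝ) / 4 * (wt (gg M p) z.1 + wt (gg M p) z.2)) := fun z => by ring
  simp only [e4] at hcb hE
  simp only [← Real.norm_eq_abs] at hcb
  have hdiff : Summable (fun z => cov (M := M) p n z - ((n:ℝ) ^ 3 * qt p z.1 z.2 * (wt (gg M p) z.1 * wt (gg M p) z.2) *
      Real.exp (-(n * (wt (gg M p) z.1 + wt (gg M p) z.2))) -
      n ^ 3 * (wt (gg M p) z.1 * wt (gg M p) z.2) ^ 2 *
      Real.exp (-(n * (wt (gg M p) z.1 + wt (gg M p) z.2))))) :=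
    Summable.of_norm_bounded hE.summable hcb
  have hcs : Summable (cov (M := M) p n) := by
    refine (hdiff.add hD.summable).congr fun z => ?_
    simp
  refine ⟨hcs, ?_⟩
  rw [← (hcs.hasSum.sub hD).tsum_eq]
  have := tsum_of_norm_bounded hE hcb
  rw [Real.norm_eq_abs] at this
  refine this.trans ?_
  have := hb3 n hn'
  rw [mul_assoc]
  refine mul_le_mul_of_nonneg_left ?_ hC1.le
  nlinarith

lemma det_main (hp0 : ∀ j, 0 < p j) (hp1 : ∀ j, p j < 1) (hs : ∑ j, p j = 1)
    (h : Good (gg M p) ρ) :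
    (∀ n : ℕ, 4 ≤ n → Summable (cov (M := M) p n)) ∧
    Tendsto (fun n : ℕ => (∑' z, cov (M := M) p n z) / (n:ℝ) ^ (2 * ρ - 1) -
      ((1 - 1 / (M:ℝ)) * (1 - ∑ x, gg M p x ^ (2 * ρ - 1))⁻¹ - 1) * ph (gg M p) ρ (Real.log n) ^ 2)
      atTop (𝓝 0) := by
  have hρ1 := h.one_lt
  have hρ2 := h.lt_two
  set m := min 2 (2 * ρ - 1) with hm
  have hm1 : ρ < m := lt_min hρ2 (by linarith)
  have hm2 : m ≤ 2 := min_le_left _ _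
  have hm3 : m ≤ 2 * ρ - 1 := min_le_right _ _
  obtain ⟨C, hC, hb⟩ := cov_sum_bound hp0 hp1 hs h (σ := (ρ + m) / 2) (by linarith) (by linarith)
  refine ⟨fun n hn => (hb n hn).1, ?_⟩
  have ht := (tannery h).const_mul (1 - 1 / (M:ℝ))
  have hsm := h.summable_rpow (σ := 2 * ρ - 1) (by linarith)
  have hts := h.tsum_rpow (σ := 2 * ρ - 1) (by linarith)
  have ht' : Tendsto (fun n : ℕ => (1 - 1 / (M:ℝ)) * (∑' u, mn M p ρ n u -
      (1 - ∑ x, gg M p x ^ (2 * ρ - 1))⁻¹ * ph (gg M p) ρ (Real.log n) ^ 2)) atTop (𝓝 0) := by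
    rw [mul_zero] at ht
    refine ht.congr fun n => ?_
    congr 1
    rw [← hts, ← tsum_mul_right, ← (mn_summable h n).tsum_sub (hsm.mul_right _)]
    refine tsum_congr fun u => ?_
    rw [mn]; ring
  have he : Tendsto (fun n : ℕ => C * (n:ℝ) ^ ((ρ + m) / 2 - (2 * ρ - 1))) atTop (𝓝 0) := by
    rw [show 𝓝 (0:ℝ) = 𝓝 (C * 0) by simp]
    refine Tendsto.const_mul _ ?_
    have := (tendsto_rpow_neg_atTop (y := (2 * ρ - 1) - (ρ + m) / 2) (by linarith)).comp
      (tendsto_natCast_atTop_atTop (R := ℝ))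
    refine this.congr fun n => ?_
    simp
  have hd : Tendsto (fun n : ℕ => (∑' z, cov (M := M) p n z) / (n:ℝ) ^ (2 * ρ - 1) -
      ((1 - 1 / (M:ℝ)) * (∑' u, mn M p ρ n u) - ph (gg M p) ρ (Real.log n) ^ 2)) atTop (𝓝 0) := by
    refine squeeze_zero_norm' ?_ he
    filter_upwards [eventually_ge_atTop 4] with n hn
    have hn' : (0:ℝ) < n := by exact_mod_cast (by omega : 0 < n)
    have hq : 0 < (n:ℝ) ^ (2 * ρ - 1) := Real.rpow_pos_of_pos hn' _
    have := (hb n hn).2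
    rw [Real.rpow_sub hn' ((ρ + m) / 2), ← mul_div_assoc, le_div_iff₀ hq, Real.norm_eq_abs]
    refine le_trans (le_of_eq ?_) this
    rw [← abs_of_pos hq, ← abs_mul, abs_of_pos hq]
    congr 1
    field_simp
  have := hd.add ht'
  rw [add_zero] at this
  refine this.congr fun n => ?_
  ring

end J
end GT

open MeasureTheory ProbabilityTheory Filter Topology

namespace GT
section J
variable {M A : ℕ} {p : Fin A → ℝ} {ρ : ℝ}

def OccF (L : List (Fin M) → Fin A) : List (Fin M) → List (Fin M × Fin A) → Prop
  | _, [] => True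
  | z, x :: v => L (z ++ [x.1]) = x.2 ∧ OccF L (z ++ [x.1]) v

lemma occF_iff (L : List (Fin M) → Fin A) (w : List (Fin M × Fin A)) (z : List (Fin M)) :
    (∀ t : Fin w.length, L (z ++ (w.take (t.1 + 1)).map Prod.fst) = (w.get t).2) ↔ OccF L z w := by
  induction w generalizing z with
  | nil => simp [OccF]
  | cons x v ih =>
    rw [OccF, ← ih]
    constructor
    · intro h
      refine ⟨by simpa using h ⟨0, by simp⟩, fun t => ?_⟩
      have := h ⟨t.1 + 1, by simp⟩
      simpa using this
    · rintro ⟨h1, h2⟩ ⟨t, ht⟩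
      cases t with
      | zero => simpa using h1
      | succ t =>
        have := h2 ⟨t, by simpa using ht⟩
        simpa using this

lemma occurs_iff (L : List (Fin M) → Fin A) (w : List (Fin M × Fin A)) :
    Occurs L w ↔ OccF L [] w := by
  rw [← occF_iff]; rfl

lemma cyl_insert (p : Fin A → ℝ) (z : List (Fin M)) (a : Fin A) (s : Finset (List (Fin M))) (f : List (Fin M) → Fin A)
    (hz : z ∉ s) : ∃ (s' : Finset (List (Fin M))) (f' : List (Fin M) → Fin A),
    (∀ L : List (Fin M) → Fin A, (∀ u ∈ s', L u = f' u) ↔ (∀ u ∈ s, L u = f u) ∧ L z = a) ∧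
    (∏ u ∈ s', ENNReal.ofReal (p (f' u)) = (∏ u ∈ s, ENNReal.ofReal (p (f u))) * ENNReal.ofReal (p a)) ∧
    (∀ u ∈ s', u ∈ s ∨ u = z) := by
  classical
  have hf : ∀ u ∈ s, Function.update f z a u = f u := fun u hu =>
    Function.update_of_ne (fun h => hz (by rwa [h] at hu)) _ _
  refine ⟨insert z s, Function.update f z a, fun L => ?_, ?_, ?_⟩
  · rw [Finset.forall_mem_insert, Function.update_self, and_comm]
    refine and_congr_left fun _ => forall₂_congr fun u hu => ?_
    rw [hf u hu]
  · rw [Finset.prod_insert hz, Function.update_self, mul_comm]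
    congr 1
    exact Finset.prod_congr rfl fun u hu => by rw [hf u hu]
  · intro u hu
    rw [Finset.mem_insert] at hu
    tauto

lemma cyl_occ (hp0 : ∀ j, 0 < p j) (w : List (Fin M × Fin A)) : ∀ (z : List (Fin M)) (s : Finset (List (Fin M)))
    (f : List (Fin M) → Fin A),
    (∀ y, y ≠ [] → z ++ y ∉ s) → ∃ (s' : Finset (List (Fin M))) (f' : List (Fin M) → Fin A),
    (∀ L : List (Fin M) → Fin A, (∀ u ∈ s', L u = f' u) ↔ (∀ u ∈ s, L u = f u) ∧ OccF L z w) ∧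
    (∏ u ∈ s', ENNReal.ofReal (p (f' u)) = (∏ u ∈ s, ENNReal.ofReal (p (f u))) * ENNReal.ofReal (wt (gg M p) w)) ∧
    (∀ u ∈ s', u ∈ s ∨ ∃ y, y ≠ [] ∧ u = z ++ y) := by
  induction w with
  | nil =>
    intro z s f h
    exact ⟨s, f, fun L => by simp [OccF], by simp, fun u hu => Or.inl hu⟩
  | cons x v ih =>
    intro z s f h
    obtain ⟨s1, f1, a1, a2, a3⟩ := cyl_insert p (z ++ [x.1]) x.2 s f (h _ (by simp))
    obtain ⟨s2, f2, b1, b2, b3⟩ := ih (z ++ [x.1]) s1 f1 (by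
      intro y hy hm
      rcases a3 _ hm with h1 | h1
      · rw [List.append_assoc] at h1
        exact h _ (by simp) h1
      · simp at h1; exact hy h1)
    refine ⟨s2, f2, fun L => ?_, ?_, ?_⟩
    · rw [b1, a1, OccF, and_assoc]
    · rw [b2, a2, wt_cons]
      simp only [gg]
      rw [ENNReal.ofReal_mul (hp0 _).le, mul_assoc]
    · intro u hu
      rcases b3 u hu with h1 | ⟨y, hy, h1⟩
      · rcases a3 u h1 with h2 | h2
        · exact Or.inl h2
        · exact Or.inr ⟨_, by simp, h2⟩
      · exact Or.inr ⟨x.1 :: y, by simp, by simpa using h1⟩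

lemma joint_occ (hp0 : ∀ j, 0 < p j) {μL : Measure (List (Fin M) → Fin A)} (hμ : IsLabelingMeasure p μL)
    (w : List (Fin M × Fin A)) : ∀ (w' : List (Fin M × Fin A)) (z : List (Fin M)) (s : Finset (List (Fin M)))
    (f : List (Fin M) → Fin A),
    (∀ y, y ≠ [] → z ++ y ∉ s) →
    μL {L | (∀ u ∈ s, L u = f u) ∧ OccF L z w ∧ OccF L z w'} =
      (∏ u ∈ s, ENNReal.ofReal (p (f u))) * ENNReal.ofReal (qj p w w') := by
  have single : ∀ (w : List (Fin M × Fin A)) (z : List (Fin M)) (s : Finset (List (Fin M)))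
    (f : List (Fin M) → Fin A), (∀ y, y ≠ [] → z ++ y ∉ s) →
    μL {L | (∀ u ∈ s, L u = f u) ∧ OccF L z w} =
      (∏ u ∈ s, ENNReal.ofReal (p (f u))) * ENNReal.ofReal (wt (gg M p) w) := by
    intro w z s f h
    obtain ⟨s', f', a1, a2, -⟩ := cyl_occ hp0 w z s f h
    simp only [← a1, ← a2]
    exact hμ s' f'
  induction w with
  | nil =>
    intro w' z s f h
    simp only [OccF, true_and, qj]
    exact single w' z s f h
  | cons x v ih =>
    intro w' z s f h
    cases w' with
    | nil =>
      simp only [qj]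
      rw [← single (x :: v) z s f h]
      simp [OccF]
    | cons y v' =>
      obtain ⟨s1, f1, a1, a2, a3⟩ := cyl_insert p (z ++ [x.1]) x.2 s f (h _ (by simp))
      have h1 : ∀ y, y ≠ [] → z ++ [x.1] ++ y ∉ s1 := by
        intro y hy hm
        rcases a3 _ hm with h1 | h1
        · rw [List.append_assoc] at h1
          exact h _ (by simp) h1
        · simp at h1; exact hy h1
      by_cases hxy : x = y
      · subst hxy
        have e := ih v' (z ++ [x.1]) s1 f1 h1
        rw [a2, mul_assoc, ← ENNReal.ofReal_mul (hp0 _).le] at e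
        simp only [qj, if_true]
        rw [← e]
        congr 1
        ext L
        simp only [Set.mem_ofPred_eq, a1, OccF]
        tauto
      · by_cases hc : x.1 = y.1
        · simp only [qj, if_neg hxy, if_pos hc, ENNReal.ofReal_zero, mul_zero]
          convert measure_empty (μ := μL)
          ext L
          simp only [Set.mem_ofPred_eq, OccF, Set.mem_empty_iff_false, iff_false]
          rintro ⟨-, ⟨h2, -⟩, h3, -⟩
          rw [hc] at h2
          exact hxy (Prod.ext hc (h2.symm.trans h3))
        · simp only [qj, if_neg hxy, if_neg hc]
          obtain ⟨s2, f2, b1, b2, b3⟩ := cyl_occ hp0 v (z ++ [x.1]) s1 f1 h1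
          have h2 : ∀ t, z ++ y.1 :: t ∉ s2 := by
            intro t hm
            rcases b3 _ hm with h3 | ⟨r, -, h3⟩
            · rcases a3 _ h3 with h4 | h4
              · exact h _ (by simp) h4
              · simp at h4; exact hc h4.1.symm
            · simp at h3; exact hc h3.1.symm
          obtain ⟨s3, f3, c1, c2, c3⟩ := cyl_insert p (z ++ [y.1]) y.2 s2 f2 (h2 [])
          have e := single v' (z ++ [y.1]) s3 f3 (by
            intro t ht hm
            rcases c3 _ hm with h3 | h3
            · rw [List.append_assoc] at h3
              exact h2 t h3
            · simp at h3; exact ht h3)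
          have hw := wt_nonneg (g := gg M p) (fun x => (hp0 x.2).le) v
          rw [wt_cons, wt_cons]
          simp only [gg] at *
          rw [ENNReal.ofReal_mul (mul_nonneg (hp0 _).le hw), ENNReal.ofReal_mul (hp0 _).le,
            ENNReal.ofReal_mul (hp0 _).le]
          rw [c2, b2, a2] at e
          rw [mul_assoc, mul_assoc, mul_assoc] at e
          rw [mul_assoc, ← e]
          congr 1
          ext L
          simp only [Set.mem_ofPred_eq, c1, b1, a1, OccF]
          tauto

lemma occ_meas (w : List (Fin M × Fin A)) : MeasurableSet {L : List (Fin M) → Fin A | Occurs L w} := by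
  unfold Occurs
  rw [Set.ofPred_forall]
  exact MeasurableSet.iInter fun t => measurableSet_eq_fun (measurable_pi_apply _) measurable_const

lemma occ_joint (hp0 : ∀ j, 0 < p j) {μL : Measure (List (Fin M) → Fin A)} (hμ : IsLabelingMeasure p μL)
    (f : Fin A) (w w' : List (Fin M × Fin A)) :
    μL ({L | Occurs L w} ∩ {L | Occurs L w'}) = ENNReal.ofReal (qj p w w') := by
  have := joint_occ hp0 hμ w w' [] ∅ (fun _ => f) (by simp)
  simp only [Finset.notMem_empty, false_imp_iff, implies_true, true_and, Finset.prod_empty, one_mul] at this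
  rw [← this]
  congr 1
  ext L
  simp [occurs_iff]

lemma occ_single (hp0 : ∀ j, 0 < p j) {μL : Measure (List (Fin M) → Fin A)} (hμ : IsLabelingMeasure p μL)
    (f : Fin A) (w : List (Fin M × Fin A)) :
    μL {L | Occurs L w} = ENNReal.ofReal (wt (gg M p) w) := by
  have := occ_joint hp0 hμ f [] w
  rw [qj] at this
  rw [← this]
  congr 1
  ext L
  simp [Occurs]

end J
end GT

open MeasureTheory ProbabilityTheory Filter Topology

namespace GT
section K
variable {Ω : Type*} [MeasurableSpace Ω] {μ : Measure Ω} [IsProbabilityMeasure μ] {n : ℕ}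

noncomputable def sg (E : Set Ω) (b : Prop) [Decidable b] : Ω → ℝ :=
  if b then E.indicator 1 else Eᶜ.indicator 1

open Classical in
noncomputable def Yi (E : Set Ω) (x : Fin n → Ω) : ℝ :=
  if Nat.card {i // x i ∈ E} ≤ 1 then 1 else 0

lemma Yi_eq (E : Set Ω) (x : Fin n → Ω) :
    Yi E x = ∑ o : Option (Fin n), ∏ k, sg E (o = some k) (x k) := by
  classical
  have hz : ∀ o : Option (Fin n), ∏ k, sg E (o = some k) (x k) =
      if ∀ k, (x k ∈ E ↔ o = some k) then 1 else 0 := by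
    intro o
    have : ∀ k, sg E (o = some k) (x k) = if (x k ∈ E ↔ o = some k) then 1 else 0 := by
      intro k
      unfold sg
      by_cases h1 : o = some k <;> by_cases h2 : x k ∈ E <;> simp [h1, h2]
    simp only [this, Finset.prod_boole]
    simp
  simp only [hz]
  unfold Yi
  split_ifs with h
  · have := Finite.card_le_one_iff_subsingleton.1 h
    by_cases he : ∃ i, x i ∈ E
    · obtain ⟨i, hi⟩ := he
      rw [Finset.sum_eq_single (some i)]
      · rw [if_pos]
        intro k
        constructor
        · intro hk
          have := Subsingleton.elim (⟨i, hi⟩ : {i // x i ∈ E}) ⟨k, hk⟩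
          simpa using this
        · intro hk
          simp only [Option.some.injEq] at hk
          rwa [← hk]
      · intro o _ ho
        rw [if_neg]
        intro hk
        exact ho ((hk i).1 hi)
      · simp
    · push Not at he
      rw [Finset.sum_eq_single none]
      · simp [he]
      · intro o _ ho
        rw [if_neg]
        intro hk
        obtain ⟨i, rfl⟩ := Option.ne_none_iff_exists'.1 ho
        exact he i ((hk i).2 rfl)
      · simp
  · symm
    apply Finset.sum_eq_zero
    intro o _
    rw [if_neg]
    intro hk
    apply h
    rw [Finite.card_le_one_iff_subsingleton]
    refine ⟨fun a b => Subtype.ext ?_⟩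
    have h1 := (hk a).1 a.2
    have h2 := (hk b).1 b.2
    rw [h1] at h2
    simpa using h2

lemma sg_mul_integrable {E F : Set Ω} (hE : MeasurableSet E) (hF : MeasurableSet F) (b c : Prop)
    [Decidable b] [Decidable c] : Integrable (fun x => sg E b x * sg F c x) μ := by
  have hm : ∀ (E : Set Ω) (hE : MeasurableSet E) (b : Prop) [Decidable b], Measurable (sg E b) := by
    intro E hE b _
    unfold sg
    split_ifs
    · exact measurable_one.indicator hE
    · exact measurable_one.indicator hE.compl
  have hb : ∀ (E : Set Ω) (b : Prop) [Decidable b] (x), ‖sg E b x‖ ≤ 1 := by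
    intro E b _ x
    unfold sg
    by_cases hx : x ∈ E <;> by_cases hb : b <;> simp [hx, hb]
  refine Integrable.of_bound (C := 1) ((hm E hE b).mul (hm F hF c)).aestronglyMeasurable
    (Eventually.of_forall fun x => ?_)
  rw [norm_mul]
  exact mul_le_one₀ (hb E b x) (norm_nonneg _) (hb F c x)

lemma sg_mul_integral {E F : Set Ω} (hE : MeasurableSet E) (hF : MeasurableSet F) (b c : Prop)
    [Decidable b] [Decidable c] : ∫ x, sg E b x * sg F c x ∂μ =
      if b then (if c then μ.real (E ∩ F) else μ.real E - μ.real (E ∩ F)) else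
        if c then μ.real F - μ.real (E ∩ F) else 1 - μ.real E - μ.real F + μ.real (E ∩ F) := by
  have hi : ∀ (E F : Set Ω), MeasurableSet E → MeasurableSet F → 
      ∫ x, (E.indicator 1 x : ℝ) * F.indicator 1 x ∂μ = μ.real (E ∩ F) := by
    intro E F hE hF
    rw [← integral_indicator_one (hE.inter hF)]
    congr 1
    ext x
    rw [Set.inter_indicator_one]; rfl
  have h1 : ∀ (E F : Set Ω), MeasurableSet E → MeasurableSet F → μ.real (E ∩ Fᶜ) = μ.real E - μ.real (E ∩ F) := by
    intro E F hE hF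
    have := measureReal_inter_add_sdiff (μ := μ) (s := E) hF
    rw [Set.sdiff_eq] at this
    linarith
  unfold sg
  split_ifs
  · exact hi _ _ hE hF
  · rw [hi _ _ hE hF.compl, h1 _ _ hE hF]
  · rw [hi _ _ hE.compl hF, Set.inter_comm, h1 _ _ hF hE, Set.inter_comm]
  · rw [hi _ _ hE.compl hF.compl, h1 _ _ hE.compl hF, Set.inter_comm Eᶜ, h1 _ _ hF hE, Set.inter_comm F,
      probReal_compl_eq_one_sub hE]
    ring

lemma Yi_mul_eq (E F : Set Ω) (x : Fin n → Ω) : Yi E x * Yi F x =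
    ∑ o : Option (Fin n), ∑ o' : Option (Fin n), ∏ k, (sg E (o = some k) (x k) * sg F (o' = some k) (x k)) := by
  rw [Yi_eq, Yi_eq, Finset.sum_mul_sum]
  simp only [Finset.prod_mul_distrib]

lemma Yi_mul_integrable {E F : Set Ω} (hE : MeasurableSet E) (hF : MeasurableSet F) :
    Integrable (fun x : Fin n → Ω => Yi E x * Yi F x) (Measure.pi fun _ => μ) := by
  simp only [Yi_mul_eq]
  refine integrable_finsetSum _ fun o _ => integrable_finsetSum _ fun o' _ => ?_
  exact Integrable.fintype_prod (f := fun (k : Fin n) y => sg E (o = some k) y * sg F (o' = some k) y)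
    (μ := fun _ => μ) fun k => sg_mul_integrable hE hF _ _

lemma Yi_mul_integral {E F : Set Ω} (hE : MeasurableSet E) (hF : MeasurableSet F) (hn : 2 ≤ n) :
    ∫ x : Fin n → Ω, Yi E x * Yi F x ∂(Measure.pi fun _ => μ) =
      psi n (μ.real E) (μ.real F) (μ.real (E ∩ F)) := by
  simp only [Yi_mul_eq]
  have hi : ∀ o o' : Option (Fin n), Integrable (fun x : Fin n → Ω =>
      ∏ k, (sg E (o = some k) (x k) * sg F (o' = some k) (x k))) (Measure.pi fun _ => μ) := fun o o' =>
    Integrable.fintype_prod (f := fun (k : Fin n) y => sg E (o = some k) y * sg F (o' = some k) y)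
      (μ := fun _ => μ) fun k => sg_mul_integrable hE hF _ _
  rw [integral_finsetSum _ fun o _ => integrable_finsetSum _ fun o' _ => hi o o']
  simp_rw [integral_finsetSum _ fun o' _ => hi _ o']
  have hp : ∀ o o' : Option (Fin n), ∫ x : Fin n → Ω,
      ∏ k, (sg E (o = some k) (x k) * sg F (o' = some k) (x k)) ∂(Measure.pi fun _ => μ) =
      ∏ k, ∫ y, sg E (o = some k) y * sg F (o' = some k) y ∂μ := fun o o' =>
    integral_fintype_prod_eq_prod (fun (k : Fin n) y => sg E (o = some k) y * sg F (o' = some k) y)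
  simp only [hp, sg_mul_integral hE hF]
  generalize μ.real E = a
  generalize μ.real F = b
  generalize μ.real (E ∩ F) = q
  have p1 : ∀ (i : Fin n) (u r : ℝ), ∏ k, (if i = k then u else r) = u * r ^ (n - 1) := by
    intro i u r
    rw [← Finset.mul_prod_erase _ _ (Finset.mem_univ i), if_pos rfl]
    congr 1
    rw [Finset.prod_congr rfl (g := fun _ => r), Finset.prod_const, Finset.card_erase_of_mem (Finset.mem_univ i)]
    · simp
    · intro k hk
      rw [if_neg (Finset.ne_of_mem_erase hk).symm]
  have p2 : ∀ (i j : Fin n) (u v w r : ℝ), ∏ k, (if i = k then (if j = k then w else u) else if j = k then v else r)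
      = if i = j then w * r ^ (n - 1) else u * v * r ^ (n - 2) := by
    intro i j u v w r
    split_ifs with hij
    · subst hij
      rw [← p1 i w r]
      refine Finset.prod_congr rfl fun k _ => ?_
      split_ifs <;> rfl
    · have hj : j ∈ Finset.univ.erase i := Finset.mem_erase.2 ⟨fun h => hij h.symm, Finset.mem_univ _⟩
      rw [← Finset.mul_prod_erase _ _ (Finset.mem_univ i), if_pos rfl, if_neg (fun h => hij h.symm),
        ← Finset.mul_prod_erase _ _ hj, if_neg hij, if_pos rfl, ← mul_assoc]
      congr 1
      rw [Finset.prod_congr rfl (g := fun _ => r), Finset.prod_const, Finset.card_erase_of_mem hj,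
        Finset.card_erase_of_mem (Finset.mem_univ i)]
      · simp [Nat.sub_sub]
      · intro k hk
        have hk1 := Finset.ne_of_mem_erase hk
        have hk2 := Finset.ne_of_mem_erase (Finset.mem_of_mem_erase hk)
        rw [if_neg hk2.symm, if_neg hk1.symm]
  rw [Fintype.sum_option]
  simp only [Fintype.sum_option, Option.some.injEq, reduceCtorEq, if_false, p1, p2]
  simp only [Finset.prod_const, Finset.card_univ, Fintype.card_fin, Finset.sum_const, nsmul_eq_mul,
    Finset.sum_add_distrib]
  have p3 : ∀ (i : Fin n) (u v : ℝ), ∑ j, (if i = j then u else v) = u + (n - 1) * v := by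
    intro i u v
    rw [← Finset.add_sum_erase _ _ (Finset.mem_univ i), if_pos rfl]
    congr 1
    rw [Finset.sum_congr rfl (g := fun _ => v), Finset.sum_const, Finset.card_erase_of_mem (Finset.mem_univ i)]
    · simp [Nat.cast_sub (by omega : 1 ≤ n)]
    · intro k hk
      rw [if_neg (Finset.ne_of_mem_erase hk).symm]
  simp only [p3, Finset.sum_const, Finset.card_univ, Fintype.card_fin, nsmul_eq_mul]
  unfold psi
  ring

lemma Yi_empty (x : Fin n → Ω) : Yi (∅ : Set Ω) x = 1 := by
  unfold Yi
  simp

lemma Yi_integrable {E : Set Ω} (hE : MeasurableSet E) :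
    Integrable (fun x : Fin n → Ω => Yi E x) (Measure.pi fun _ => μ) := by
  have := Yi_mul_integrable (μ := μ) (n := n) hE MeasurableSet.empty
  simpa only [Yi_empty, mul_one] using this

lemma Yi_integral {E : Set Ω} (hE : MeasurableSet E) (hn : 2 ≤ n) :
    ∫ x : Fin n → Ω, Yi E x ∂(Measure.pi fun _ => μ) = phi n (μ.real E) := by
  have := Yi_mul_integral (μ := μ) (n := n) hE MeasurableSet.empty hn
  simp only [Yi_empty, mul_one] at this
  rw [this]
  unfold psi phi
  simp
  ring

end K
end GT

open MeasureTheory ProbabilityTheory Filter Topology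

namespace GT
section K

open Classical in
lemma var_sum {Ω ι : Type*} [MeasurableSpace Ω] {μ : Measure Ω} [IsProbabilityMeasure μ] [Countable ι]
    (T : Ω → Set ι) (X : ι → Ω → ℝ) (hX : ∀ i ω, X i ω = if i ∈ T ω then 1 else 0)
    (hintg : ∀ i, Integrable (X i) μ) (e : ι → ℝ)
    (he : ∀ i, ∫ ω, X i ω ∂μ = e i) (hes : Summable e)
    (hint2 : ∀ i j, Integrable (fun ω => X i ω * X j ω) μ) (c : ι × ι → ℝ)
    (hc : ∀ i j, ∫ ω, X i ω * X j ω ∂μ = c (i, j) + e i * e j) (hcs : Summable c)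
    (i0 : ι) (h0 : ∀ ω, i0 ∈ T ω) :
    variance (fun ω => ((T ω).ncard : ℝ)) μ = ∑' z, c z := by
  have hX0 : ∀ i ω, 0 ≤ X i ω := fun i ω => by rw [hX]; split_ifs <;> norm_num
  have he0 : ∀ i, 0 ≤ e i := fun i => by rw [← he]; exact integral_nonneg (hX0 i)
  have hfin : ∀ᵐ ω ∂μ, (T ω).Finite := by
    refine ae_finite_setOfPred_mem (s := fun i => {ω | i ∈ T ω}) ?_
    refine ne_top_of_le_ne_top hes.tsum_ofReal_ne_top (ENNReal.tsum_le_tsum fun i => ?_)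
    have h1 := mul_meas_ge_le_integral_of_nonneg (Eventually.of_forall (hX0 i)) (hintg i) 1
    rw [one_mul, he] at h1
    have h2 : {ω | i ∈ T ω} = {ω | 1 ≤ X i ω} := by
      ext ω
      simp only [Set.mem_ofPred_eq, hX]
      split_ifs with h <;> simp [h]
    rw [h2]
    rw [← ofReal_measureReal]
    exact ENNReal.ofReal_le_ofReal h1
  have s1 : ∀ ω, (T ω).Finite → HasSum (fun i => X i ω) ((T ω).ncard : ℝ) := by
    intro ω hω
    have : ((T ω).ncard : ℝ) = ∑ i ∈ hω.toFinset, X i ω := by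
      rw [Finset.sum_congr rfl (g := fun _ => (1:ℝ))]
      · simp [Set.ncard_eq_toFinset_card _ hω]
      · intro i hi
        rw [hX, if_pos (by simpa using hi)]
    rw [this]
    apply hasSum_sum_of_ne_finset_zero
    intro i hi
    rw [hX, if_neg (by simpa using hi)]
  have s2 : ∀ ω, (T ω).Finite → HasSum (fun z : ι × ι => X z.1 ω * X z.2 ω) (((T ω).ncard : ℝ) ^ 2) := by
    intro ω hω
    rw [sq]
    exact hasSum_mul_pair (fun i => hX0 i ω) (fun i => hX0 i ω) (s1 ω hω) (s1 ω hω)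
  have t1 := hasSum_integral_of_summable_integral_norm (μ := μ) (F := X) hintg (by
    simp only [Real.norm_eq_abs, abs_of_nonneg (hX0 _ _), he]; exact hes)
  have hee : HasSum (fun z : ι × ι => e z.1 * e z.2) ((∑' i, e i) * ∑' i, e i) :=
    hasSum_mul_pair he0 he0 hes.hasSum hes.hasSum
  have t2 := hasSum_integral_of_summable_integral_norm (μ := μ) (F := fun (z : ι × ι) ω => X z.1 ω * X z.2 ω)
    (fun z => hint2 z.1 z.2) (by
    simp only [Real.norm_eq_abs, abs_of_nonneg (mul_nonneg (hX0 _ _) (hX0 _ _)), hc]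
    exact hcs.add hee.summable)
  have i1 : ∫ ω, ((T ω).ncard : ℝ) ∂μ = ∫ ω, ∑' i, X i ω ∂μ := by
    refine integral_congr_ae ?_
    filter_upwards [hfin] with ω hω
    exact (s1 ω hω).tsum_eq.symm
  have i2 : ∫ ω, ((T ω).ncard : ℝ) ^ 2 ∂μ = ∫ ω, ∑' z : ι × ι, X z.1 ω * X z.2 ω ∂μ := by
    refine integral_congr_ae ?_
    filter_upwards [hfin] with ω hω
    exact (s2 ω hω).tsum_eq.symm
  rw [← i1] at t1
  rw [← i2] at t2
  have p1 : (1:ℝ) ≤ ∫ ω, ((T ω).ncard : ℝ) ∂μ := by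
    refine le_trans (le_of_eq ?_) (le_hasSum t1 i0 fun i _ => integral_nonneg (hX0 i))
    simp [hX, h0]
  have p2 : (1:ℝ) ≤ ∫ ω, ((T ω).ncard : ℝ) ^ 2 ∂μ := by
    refine le_trans (le_of_eq ?_) (le_hasSum t2 (i0, i0) fun i _ => 
      integral_nonneg fun ω => mul_nonneg (hX0 _ ω) (hX0 _ ω))
    simp [hX, h0]
  have I1 : Integrable (fun ω => ((T ω).ncard : ℝ)) μ :=
    Integrable.of_integral_ne_zero (by linarith)
  have I2 : Integrable (fun ω => ((T ω).ncard : ℝ) ^ 2) μ :=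
    Integrable.of_integral_ne_zero (by linarith)
  rw [variance_eq_sub ((memLp_two_iff_integrable_sq I1.aestronglyMeasurable).2 I2)]
  simp only [Pi.pow_apply]
  simp only [he] at t1
  simp only [hc] at t2
  rw [t2.unique (hcs.hasSum.add hee), t1.unique hes.hasSum]
  ring

variable {M A : ℕ} {p : Fin A → ℝ} {ρ : ℝ}

lemma variance_eq (hp0 : ∀ j, 0 < p j) (hp1 : ∀ j, p j < 1) (hs : ∑ j, p j = 1)
    (h : Good (gg M p) ρ) {μL : Measure (List (Fin M) → Fin A)} [IsProbabilityMeasure μL]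
    (hμ : IsLabelingMeasure p μL) {n : ℕ} (hn : 2 ≤ n) (hcs : Summable (cov (M := M) p n)) :
    variance (fun Ls : Fin n → List (Fin M) → Fin A => gtrieSize Ls) (Measure.pi fun _ => μL) =
      ∑' z, cov (M := M) p n z := by
  classical
  obtain ⟨a0⟩ := h.nonempty
  have hw0 : ∀ w : List (Fin M × Fin A), 0 < wt (gg M p) w := wt_pos h.pos
  have hw1 : ∀ w : List (Fin M × Fin A), wt (gg M p) w ≤ 1 := wt_le_one h.pos h.lt1
  have hr : ∀ w : List (Fin M × Fin A), μL.real {L | Occurs L w} = wt (gg M p) w := fun w => by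
    rw [measureReal_def, occ_single hp0 hμ a0.2, ENNReal.toReal_ofReal (hw0 w).le]
  have hr2 : ∀ w w' : List (Fin M × Fin A), μL.real ({L | Occurs L w} ∩ {L | Occurs L w'}) = qj p w w' := fun w w' => by
    rw [measureReal_def, occ_joint hp0 hμ a0.2, ENNReal.toReal_ofReal]
    exact (qj_bounds hp0 hp1 hs w w').1
  have hY := fun w : List (Fin M × Fin A) => Yi_integrable (μ := μL) (n := n) (occ_meas w)
  have hYY := fun w w' : List (Fin M × Fin A) => Yi_mul_integrable (μ := μL) (n := n) (occ_meas w) (occ_meas w')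
  have eY := fun w : List (Fin M × Fin A) => Yi_integral (μ := μL) (n := n) (occ_meas w) hn
  have eYY := fun w w' : List (Fin M × Fin A) => Yi_mul_integral (μ := μL) (n := n) (occ_meas w) (occ_meas w') hn
  simp only [hr, hr2] at eY eYY
  have hprod : ∀ (w w' : List (Fin M × Fin A)) (Ls : Fin n → List (Fin M) → Fin A),
      (1 - Yi {L | Occurs L w} Ls) * (1 - Yi {L | Occurs L w'} Ls) =
      1 - Yi {L | Occurs L w} Ls - Yi {L | Occurs L w'} Ls + Yi {L | Occurs L w} Ls * Yi {L | Occurs L w'} Ls := by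
    intros; ring
  refine var_sum (μ := Measure.pi fun _ : Fin n => μL) (fun Ls => GTrie Ls)
    (fun w Ls => 1 - Yi {L | Occurs L w} Ls) ?_ ?_ (fun w => 1 - phi n (wt (gg M p) w)) ?_ ?_ ?_ 
    (cov (M := M) p n) ?_ hcs [] ?_
  · intro w Ls
    have : w ∈ GTrie Ls ↔ ¬ Nat.card {i // Ls i ∈ {L | Occurs L w}} ≤ 1 := by
      rw [not_le]; rfl
    unfold Yi
    by_cases h : Nat.card {i // Ls i ∈ {L | Occurs L w}} ≤ 1
    · rw [if_pos h, if_neg (by tauto)]; simp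
    · rw [if_neg h, if_pos (by tauto)]; simp
  · exact fun w => (integrable_const 1).sub (hY w)
  · intro w
    rw [integral_sub (integrable_const 1) (hY w), eY]
    simp
  · refine Summable.of_nonneg_of_le (fun w => ?_) (fun w => ?_) (h.summable_sq.mul_left ((n:ℝ) ^ 2))
    · have := (phi_bounds n (by omega) (hw0 w).le (hw1 w)).2.1
      linarith
    · have := (phi_bounds n (by omega) (hw0 w).le (hw1 w)).2.2
      rwa [mul_pow] at this
  · intro w w'
    simp only [hprod]
    exact (((integrable_const 1).sub (hY w)).sub (hY w')).add (hYY w w')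
  · intro w w'
    simp only [hprod]
    have J1 : Integrable (fun Ls : Fin n → List (Fin M) → Fin A => 1 - Yi {L | Occurs L w} Ls)
      (Measure.pi fun _ => μL) := (integrable_const 1).sub (hY w)
    have J2 : Integrable (fun Ls : Fin n → List (Fin M) → Fin A => 1 - Yi {L | Occurs L w} Ls -
      Yi {L | Occurs L w'} Ls) (Measure.pi fun _ => μL) := J1.sub (hY w')
    rw [integral_add J2 (hYY w w'), integral_sub J1 (hY w'), integral_sub (integrable_const 1) (hY w), eY, eY, eYY]
    simp only [cov, integral_const, probReal_univ, smul_eq_mul]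
    ring
  · intro Ls
    show 2 ≤ Nat.card _
    simp [Occurs, hn]

end K
end GT

/-- **Variance of the size of a G-trie, non-uniform case** (Proposition 2(ii)).
If not all `p_j` are equal and `ρ > 1`, then
`Var(S_n) = ((M-1)/(M·P(2ρ-1)) - 1) · (∑_{β ∈ S_ρ} β G_E(β) n^{β-1})² · n + o(n^{2ρ-1})`. -/
theorem gtrie_variance_nonuniform_case
    {M A : ℕ} (hM : 1 ≤ M) (hA : 2 ≤ A)
    (p : Fin A → ℝ) (hp0 : ∀ j, 0 < p j) (hp1 : ∀ j, p j < 1)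
    (hpsum : ∑ j, p j = 1)
    (hnonexp : ∑ j, (p j) ^ 2 < 1 / (M : ℝ))
    (hnonunif : ∃ j₁ j₂, p j₁ ≠ p j₂)
    (ρ : ℝ) (hρ : ∑ j, (p j) ^ ρ = 1 / (M : ℝ)) (hρ1 : 1 < ρ)
    (μL : Measure (List (Fin M) → Fin A)) [IsProbabilityMeasure μL]
    (hμL : IsLabelingMeasure p μL)
    (μ : (n : ℕ) → Measure (Fin n → List (Fin M) → Fin A))
    (hμ : ∀ n, μ n = Measure.pi fun _ => μL)
    (V : ℕ → ℝ)
    (hV : ∀ n, V n = variance (fun Ls => gtrieSize Ls) (μ n))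
    (c : ℝ)
    (hc : c = ((M : ℝ) - 1) / ((M : ℝ) * (1 - (M : ℝ) * ∑ j, (p j) ^ (2 * ρ - 1))) - 1) :
    (fun n : ℕ => (V n : ℂ) -
        (c : ℂ) * (∑' β : rootsLine M A p ρ, (β : ℂ) * GE M A p β *
          (n : ℂ) ^ ((β : ℂ) - 1)) ^ 2 * (n : ℂ))
      =o[atTop] (fun n : ℕ => (n : ℝ) ^ (2 * ρ - 1)) := by
  have hMR : (1:ℝ) ≤ M := by exact_mod_cast hM
  have hM0 : (M:ℝ) ≠ 0 := by positivity
  have hA0 : 0 < A := by omega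
  have hsumg : ∀ F : Fin A → ℝ, ∑ x : Fin M × Fin A, F x.2 = M * ∑ j, F j := by
    intro F; rw [Fintype.sum_prod_type]; simp
  have hsumgC : ∀ F : Fin A → ℂ, ∑ x : Fin M × Fin A, F x.2 = M * ∑ j, F j := by
    intro F; rw [Fintype.sum_prod_type]; simp
  have hρ2 : ρ < 2 := by
    by_contra hcon
    push Not at hcon
    have : ∑ j, p j ^ ρ ≤ ∑ j, p j ^ 2 := Finset.sum_le_sum fun j _ => by
      rw [← Real.rpow_two]
      exact Real.rpow_le_rpow_of_exponent_ge (hp0 j) (hp1 j).le hcon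
    linarith
  have h : GT.Good (GT.gg M p) ρ := by
    refine ⟨fun x => hp0 x.2, fun x => hp1 x.2, ?_, hρ1, hρ2⟩
    have e : ∑ x, GT.gg M p x ^ ρ = M * ∑ j, p j ^ ρ := hsumg fun j => p j ^ ρ
    rw [e, hρ]
    field_simp
  have hmu : GT.mu (GT.gg M p) ρ ≠ 0 := h.mu_pos.ne'
  have hset : rootsLine M A p ρ = GT.rts (GT.gg M p) ρ := by
    ext s
    have e : ∑ a, (GT.gg M p a : ℂ) ^ s = M * ∑ j, (p j : ℂ) ^ s := hsumgC fun j => (p j : ℂ) ^ s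
    simp only [rootsLine, GT.rts, Set.mem_ofPred_eq, Pfun, e, sub_eq_zero]
    rw [eq_comm (a := (1:ℂ))]
  rw [hset]
  obtain ⟨hcs, hdet⟩ := GT.det_main hp0 hp1 hpsum h
  set c' := (1 - 1 / (M:ℝ)) * (1 - ∑ x, GT.gg M p x ^ (2 * ρ - 1))⁻¹ - 1 with hc'
  have hcc : c = c' := by
    have e : ∑ x, GT.gg M p x ^ (2 * ρ - 1) = M * ∑ j, p j ^ (2 * ρ - 1) :=
      hsumg fun j => p j ^ (2 * ρ - 1)
    rw [hc, hc', e, ← div_div, sub_div, div_self hM0, div_eq_mul_inv _ (1 - _)]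
  set ph : ℕ → ℝ := fun n => GT.ph (GT.gg M p) ρ (Real.log n) with hph
  set T : ℕ → ℂ := fun n => ∑' β : GT.rts (GT.gg M p) ρ, Complex.Gamma (2 - β) / GT.mu (GT.gg M p) ρ *
    Complex.exp (Real.log n * ((β:ℂ) - ρ)) with hT
  have hD : Tendsto (fun n : ℕ => (ph n : ℂ) - T n) atTop (𝓝 0) :=
    h.roots_tendsto.comp (Real.tendsto_log_atTop.comp tendsto_natCast_atTop_atTop)
  have hS : ∀ n : ℕ, 0 < n → ∑' β : GT.rts (GT.gg M p) ρ, (β : ℂ) * GE M A p β * (n : ℂ) ^ ((β : ℂ) - 1) =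
      (((n:ℝ) ^ (ρ - 1) : ℝ) : ℂ) * T n := by
    intro n hn
    rw [hT, ← tsum_mul_left]
    refine tsum_congr fun β => ?_
    have hβ := β.2
    have hre : (β:ℂ).re = ρ := hβ.2
    have hb0 : (β:ℂ) ≠ 0 := fun h0 => by rw [h0] at hre; simp at hre; linarith
    have hb1 : (1 - (β:ℂ)) ≠ 0 := fun h0 => by
      have : (β:ℂ) = 1 := (sub_eq_zero.1 h0).symm
      rw [this] at hre; simp at hre; linarith
    have e1 : (M:ℂ) * ∑ j, (p j : ℂ) ^ (β:ℂ) * (Real.log (p j) : ℂ) = -(GT.mu (GT.gg M p) ρ : ℂ) := by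
      rw [← h.root_log hβ, ← hsumgC]; rfl
    have e2 : Complex.Gamma (2 - β) = (1 - β) * (-β * Complex.Gamma (-β)) := by
      rw [show (2 - β : ℂ) = (1 - β) + 1 by ring, Complex.Gamma_add_one _ hb1,
        show (1 - β : ℂ) = -β + 1 by ring, Complex.Gamma_add_one _ (neg_ne_zero.2 hb0)]
    have e3 : (n : ℂ) ^ ((β : ℂ) - 1) = (((n:ℝ) ^ (ρ - 1) : ℝ) : ℂ) * Complex.exp (Real.log n * ((β:ℂ) - ρ)) := by
      have hn0 : (n:ℂ) ≠ 0 := by exact_mod_cast hn.ne'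
      rw [Complex.ofReal_cpow (Nat.cast_nonneg n), Complex.ofReal_natCast, Complex.cpow_def_of_ne_zero hn0,
        Complex.cpow_def_of_ne_zero hn0, ← Complex.exp_add, Complex.natCast_log]
      congr 1
      push_cast; ring
    have hmuC : (GT.mu (GT.gg M p) ρ : ℂ) ≠ 0 := by exact_mod_cast hmu
    rw [GE, e1, e2, e3]
    field_simp
  obtain ⟨C, hC, hb⟩ := h.ph_bdd
  have hphD : Tendsto (fun n : ℕ => (ph n : ℂ) * ((ph n : ℂ) - T n)) atTop (𝓝 0) := by
    have := hD.norm.const_mul C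
    rw [norm_zero, mul_zero] at this
    refine squeeze_zero_norm (fun n => ?_) this
    rw [norm_mul]
    refine mul_le_mul_of_nonneg_right ?_ (norm_nonneg _)
    rw [Complex.norm_real, Real.norm_eq_abs, abs_of_nonneg (GT.ph_nonneg _ _ _)]
    exact hb _
  have hfin : Tendsto (fun n : ℕ => (((V n / (n:ℝ) ^ (2 * ρ - 1) - c' * ph n ^ 2 : ℝ)) : ℂ) +
      c' * (2 * ((ph n : ℂ) * ((ph n : ℂ) - T n)) - ((ph n : ℂ) - T n) ^ 2)) atTop (𝓝 0) := by
    have h1 : Tendsto (fun n : ℕ => (V n / (n:ℝ) ^ (2 * ρ - 1) - c' * ph n ^ 2 : ℝ)) atTop (𝓝 0) := by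
      refine hdet.congr' ?_
      filter_upwards [eventually_ge_atTop 4] with n hn
      rw [hV, hμ, GT.variance_eq hp0 hp1 hpsum h hμL (by omega) (hcs n hn)]
    have h2 := (Complex.continuous_ofReal.tendsto 0).comp h1
    have h3 := h2.add (((hphD.const_mul 2).sub (hD.pow 2)).const_mul (c' : ℂ))
    simpa using h3
  rw [← Asymptotics.isLittleO_norm_left]
  have hn0 : ∀ᶠ n : ℕ in atTop, 0 < n := eventually_gt_atTop 0
  refine (Asymptotics.isLittleO_iff_tendsto' ?_).2 ?_
  · filter_upwards [hn0] with n hn h0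
    have : 0 < (n:ℝ) ^ (2 * ρ - 1) := Real.rpow_pos_of_pos (by exact_mod_cast hn) _
    linarith
  · have := hfin.norm
    rw [norm_zero] at this
    refine this.congr' ?_
    filter_upwards [hn0] with n hn
    have hn' : (0:ℝ) < n := by exact_mod_cast hn
    have hq : 0 < (n:ℝ) ^ (2 * ρ - 1) := Real.rpow_pos_of_pos hn' _
    rw [eq_div_iff hq.ne']
    have hnq : ‖(((n:ℝ) ^ (2 * ρ - 1) : ℝ) : ℂ)‖ = (n:ℝ) ^ (2 * ρ - 1) := by
      rw [Complex.norm_real, Real.norm_eq_abs, abs_of_pos hq]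
    refine Eq.trans (congrArg (_ * ·) hnq.symm) ?_
    rw [← norm_mul]
    congr 1
    have hqe : (((n:ℝ) ^ (2 * ρ - 1) : ℝ) : ℂ) = (((n:ℝ) ^ (ρ - 1) : ℝ) : ℂ) ^ 2 * n := by
      rw [← Complex.ofReal_pow, ← Complex.ofReal_natCast n, ← Complex.ofReal_mul]
      congr 1
      rw [← Real.rpow_natCast, ← Real.rpow_mul hn'.le]
      nth_rewrite 3 [← Real.rpow_one (n:ℝ)]
      rw [← Real.rpow_add hn']
      congr 1
      push_cast; ring
    have hqC : (((n:ℝ) ^ (2 * ρ - 1) : ℝ) : ℂ) ≠ 0 := by exact_mod_cast hq.ne'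
    have hVq : ((V n / (n:ℝ) ^ (2 * ρ - 1) : ℝ) : ℂ) * (((n:ℝ) ^ (2 * ρ - 1) : ℝ) : ℂ) = V n := by
      rw [← Complex.ofReal_mul, div_mul_cancel₀ _ hq.ne']
    rw [hS n hn, hcc, Complex.ofReal_sub, add_mul, sub_mul, hVq, hqe]
    push_cast
    ring
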